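/- arXiv:1206.4541 — 2 statements merged into one kernel-verified Lean document; each statement's English description precedes it below -/
import Mathlib

section
/- Let c > 0 be a real number, let δ be a real number with 0 < δ < (5π/4)·c, and let n be a positive integer with n > 2c/π + (2/π²)·δ·log(4·e·π·c/δ). Let ψ be the n-th PSWF with band limit c, with ODE eigenvalue χ_n. Then δ·(1 − δ/(2·π·c)) < √χ_n · ( F(√((χ_n − c²)/χ_n)) − E(√((χ_n − c²)/χ_n)) ). -/
open Real

/-- `IsPSWF c n ψ χ lam` : `ψ` is the `n`-th prolate spheroidal wave function with
band limit `c`, ODE eigenvalue `χ` and integral eigenvalue `lam`. -/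
def IsPSWF (c : ℝ) (n : ℕ) (ψ : ℝ → ℝ) (χ : ℝ) (lam : ℂ) : Prop :=
  ContinuousOn ψ (Set.Icc (-1) 1) ∧
  (∀ x ∈ Set.Ioo (-1 : ℝ) 1, DifferentiableAt ℝ ψ x ∧ DifferentiableAt ℝ (deriv ψ) x) ∧
  (∀ x ∈ Set.Ioo (-1 : ℝ) 1,
    (1 - x ^ 2) * deriv (deriv ψ) x - 2 * x * deriv ψ x + (χ - c ^ 2 * x ^ 2) * ψ x = 0) ∧
  {x | x ∈ Set.Ioo (-1 : ℝ) 1 ∧ ψ x = 0}.Finite ∧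
  {x | x ∈ Set.Ioo (-1 : ℝ) 1 ∧ ψ x = 0}.ncard = n ∧
  (∫ t in (-1 : ℝ)..1, (ψ t) ^ 2) = 1 ∧
  ∀ x ∈ Set.Icc (-1 : ℝ) 1,
    lam * (ψ x : ℂ) =
      ∫ t in (-1 : ℝ)..1, (ψ t : ℂ) * Complex.exp (Complex.I * (c : ℂ) * (x : ℂ) * (t : ℂ))

/-- The complete elliptic integral of the first kind. -/
noncomputable def EllipticF (k : ℝ) : ℝ :=
  ∫ θ in (0 : ℝ)..(π / 2), 1 / Real.sqrt (1 - k ^ 2 * Real.sin θ ^ 2)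

/-- The complete elliptic integral of the second kind. -/
noncomputable def EllipticE (k : ℝ) : ℝ :=
  ∫ θ in (0 : ℝ)..(π / 2), Real.sqrt (1 - k ^ 2 * Real.sin θ ^ 2)

noncomputable def EI (m : ℝ) : ℝ := ∫ θ in (0 : ℝ)..(π / 2), Real.sqrt (1 - m * Real.sin θ ^ 2)

noncomputable def EJ (m : ℝ) : ℝ := ∫ θ in (0 : ℝ)..(π / 2), 1 / Real.sqrt (1 - m * Real.sin θ ^ 2)

lemma EJ_arg_pos {m : ℝ} (hm : m < 1) (θ : ℝ) : 0 < 1 - m * Real.sin θ ^ 2 := by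
  have h1 := Real.sin_sq_le_one θ
  have h2 := sq_nonneg (Real.sin θ)
  by_cases h : 0 ≤ m <;> nlinarith

lemma EI_continuous : Continuous EI := by
  unfold EI
  apply intervalIntegral.continuous_parametric_intervalIntegral_of_continuous'
  fun_prop

lemma EJ_integrand_continuous {m : ℝ} (hm : m < 1) :
    Continuous (fun θ : ℝ => 1 / Real.sqrt (1 - m * Real.sin θ ^ 2)) := by
  apply Continuous.div continuous_const (by fun_prop)
  intro θ
  exact (Real.sqrt_pos.mpr (EJ_arg_pos hm θ)).ne'

lemma EI_integrand_continuous (m : ℝ) :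
    Continuous (fun θ : ℝ => Real.sqrt (1 - m * Real.sin θ ^ 2)) := by fun_prop

lemma EI_hasDerivAt {m : ℝ} (hm0 : 0 < m) (hm : m < 1) :
    HasDerivAt EI ((EI m - EJ m) / (2 * m)) m := by
  have key := intervalIntegral.hasDerivAt_integral_of_dominated_loc_of_deriv_le
    (μ := MeasureTheory.volume) (a := 0) (b := π / 2)
    (F := fun m θ => Real.sqrt (1 - m * Real.sin θ ^ 2))
    (F' := fun m θ => -(Real.sin θ ^ 2) / (2 * Real.sqrt (1 - m * Real.sin θ ^ 2)))
    (x₀ := m) (s := Set.Iio ((m + 1) / 2)) (bound := fun _ => 1 / (2 * Real.sqrt ((1 - m) / 2)))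
    (Iio_mem_nhds (by linarith))
    (Filter.Eventually.of_forall fun x => (EI_integrand_continuous x).aestronglyMeasurable)
    ((EI_integrand_continuous m).intervalIntegrable _ _)
    (by
      apply Continuous.aestronglyMeasurable
      apply Continuous.div (by fun_prop) (by fun_prop)
      intro θ
      have := (Real.sqrt_pos.mpr (EJ_arg_pos hm θ))
      positivity)
    (by
      refine Filter.Eventually.of_forall fun θ _ x hx => ?_
      simp only [Set.mem_Iio] at hx
      have h1 := Real.sin_sq_le_one θ
      have h2 := sq_nonneg (Real.sin θ)
      have h3 : (1 - m) / 2 ≤ 1 - x * Real.sin θ ^ 2 := by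
        by_cases h : 0 ≤ x <;> nlinarith
      have h4 : Real.sqrt ((1 - m) / 2) ≤ Real.sqrt (1 - x * Real.sin θ ^ 2) := Real.sqrt_le_sqrt h3
      have h5 : 0 < Real.sqrt ((1 - m) / 2) := Real.sqrt_pos.mpr (by linarith)
      rw [norm_div, norm_neg, Real.norm_of_nonneg h2, Real.norm_of_nonneg (by positivity)]
      exact div_le_div₀ (by norm_num) h1 (by positivity) (by linarith))
    (by simp)
    (by
      refine Filter.Eventually.of_forall fun θ _ x hx => ?_
      simp only [Set.mem_Iio] at hx
      have h3 : 0 < 1 - x * Real.sin θ ^ 2 := EJ_arg_pos (by linarith) θ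
      have h6 : HasDerivAt (fun x : ℝ => 1 - x * Real.sin θ ^ 2) (-(Real.sin θ ^ 2)) x := by
        simpa using ((hasDerivAt_id x).mul_const (Real.sin θ ^ 2)).const_sub 1
      exact h6.sqrt h3.ne')
  have h := key.2
  have e : (∫ θ in (0 : ℝ)..(π / 2), -(Real.sin θ ^ 2) / (2 * Real.sqrt (1 - m * Real.sin θ ^ 2)))
      = (EI m - EJ m) / (2 * m) := by
    unfold EI EJ
    rw [← intervalIntegral.integral_sub ((EI_integrand_continuous m).intervalIntegrable _ _)
      ((EJ_integrand_continuous hm).intervalIntegrable _ _), ← intervalIntegral.integral_div]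
    refine intervalIntegral.integral_congr fun θ _ => ?_
    have h3 := EJ_arg_pos hm θ
    have h5 := Real.sqrt_pos.mpr h3
    have h6 := Real.sq_sqrt h3.le
    beta_reduce
    generalize Real.sqrt (1 - m * Real.sin θ ^ 2) = w at *
    field_simp
    rw [h6]; ring
  rw [e] at h
  exact h

lemma EJ3_eq {m : ℝ} (hm : m < 1) :
    (∫ θ in (0 : ℝ)..(π / 2), 1 / (Real.sqrt (1 - m * Real.sin θ ^ 2)) ^ 3) = EI m / (1 - m) := by
  have hc3 : Continuous (fun θ : ℝ => 1 / (Real.sqrt (1 - m * Real.sin θ ^ 2)) ^ 3) := by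
    apply Continuous.div continuous_const (by fun_prop)
    intro θ
    have := (Real.sqrt_pos.mpr (EJ_arg_pos hm θ))
    positivity
  have hd : ∀ θ ∈ Set.uIcc (0:ℝ) (π / 2), HasDerivAt
      (fun θ => m * (Real.sin θ * Real.cos θ / Real.sqrt (1 - m * Real.sin θ ^ 2)))
      (Real.sqrt (1 - m * Real.sin θ ^ 2) - (1 - m) * (1 / (Real.sqrt (1 - m * Real.sin θ ^ 2)) ^ 3)) θ := by
    intro θ _
    have h3 := EJ_arg_pos hm θ
    have h5 := Real.sqrt_pos.mpr h3
    have h6 := Real.sq_sqrt h3.le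
    have a1 := Real.hasDerivAt_sin θ
    have a2 := Real.hasDerivAt_cos θ
    have a3 := (((a1.pow 2).const_mul m).const_sub 1).sqrt h3.ne'
    have a4 := ((a1.mul a2).div a3 h5.ne').const_mul m
    refine HasDerivAt.congr_deriv a4 ?_
    have hcs : Real.cos θ ^ 2 = 1 - Real.sin θ ^ 2 := by
      have := Real.sin_sq_add_cos_sq θ; linarith
    (try simp only [Pi.mul_apply, Pi.pow_apply])
    set w := Real.sqrt (1 - m * Real.sin θ ^ 2) with hw
    field_simp
    norm_num
    have e1 : w ^ 4 = (1 - m * Real.sin θ ^ 2) ^ 2 := by rw [← h6]; ring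
    rw [e1, hcs, h6]
    ring_nf
    try simp only [hcs]
    try ring
  have hcint : Continuous (fun θ => Real.sqrt (1 - m * Real.sin θ ^ 2) - (1 - m) * (1 / (Real.sqrt (1 - m * Real.sin θ ^ 2)) ^ 3)) :=
    (EI_integrand_continuous m).sub (continuous_const.mul hc3)
  have := intervalIntegral.integral_eq_sub_of_hasDerivAt hd (hcint.intervalIntegrable _ _)
  rw [intervalIntegral.integral_sub ((EI_integrand_continuous m).intervalIntegrable _ _)
    ((hc3.intervalIntegrable _ _).const_mul (1 - m)), intervalIntegral.integral_const_mul] at this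
  simp at this
  have h1m : (1 - m) ≠ 0 := by linarith
  unfold EI
  rw [eq_div_iff h1m]
  simp
  linarith

lemma EJ_hasDerivAt {m : ℝ} (hm0 : 0 < m) (hm : m < 1) :
    HasDerivAt EJ ((EI m / (1 - m) - EJ m) / (2 * m)) m := by
  have hc3 : Continuous (fun θ : ℝ => 1 / (Real.sqrt (1 - m * Real.sin θ ^ 2)) ^ 3) := by
    apply Continuous.div continuous_const (by fun_prop)
    intro θ
    have := (Real.sqrt_pos.mpr (EJ_arg_pos hm θ))
    positivity
  have key := intervalIntegral.hasDerivAt_integral_of_dominated_loc_of_deriv_le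
    (μ := MeasureTheory.volume) (a := 0) (b := π / 2)
    (F := fun m θ => 1 / Real.sqrt (1 - m * Real.sin θ ^ 2))
    (F' := fun m θ => (Real.sin θ ^ 2) / (2 * Real.sqrt (1 - m * Real.sin θ ^ 2) ^ 3))
    (x₀ := m) (s := Set.Iio ((m + 1) / 2)) (bound := fun _ => 1 / (2 * Real.sqrt ((1 - m) / 2) ^ 3))
    (Iio_mem_nhds (by linarith))
    (by
      filter_upwards [Iio_mem_nhds hm] with x hx
      exact (EJ_integrand_continuous hx).aestronglyMeasurable)
    ((EJ_integrand_continuous hm).intervalIntegrable _ _)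
    (by
      apply Continuous.aestronglyMeasurable
      apply Continuous.div (by fun_prop) (by fun_prop)
      intro θ
      have := (Real.sqrt_pos.mpr (EJ_arg_pos hm θ))
      positivity)
    (by
      refine Filter.Eventually.of_forall fun θ _ x hx => ?_
      simp only [Set.mem_Iio] at hx
      have h1 := Real.sin_sq_le_one θ
      have h2 := sq_nonneg (Real.sin θ)
      have h3 : (1 - m) / 2 ≤ 1 - x * Real.sin θ ^ 2 := by
        by_cases h : 0 ≤ x <;> nlinarith
      have h4 : Real.sqrt ((1 - m) / 2) ≤ Real.sqrt (1 - x * Real.sin θ ^ 2) := Real.sqrt_le_sqrt h3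
      have h5 : 0 < Real.sqrt ((1 - m) / 2) := Real.sqrt_pos.mpr (by linarith)
      rw [norm_div, Real.norm_of_nonneg h2, Real.norm_of_nonneg (by positivity)]
      exact div_le_div₀ (by norm_num) h1 (by positivity) (by gcongr))
    (by simp)
    (by
      refine Filter.Eventually.of_forall fun θ _ x hx => ?_
      simp only [Set.mem_Iio] at hx
      have h3 : 0 < 1 - x * Real.sin θ ^ 2 := EJ_arg_pos (by linarith) θ
      have h5 := Real.sqrt_pos.mpr h3
      have h6 : HasDerivAt (fun x : ℝ => 1 - x * Real.sin θ ^ 2) (-(Real.sin θ ^ 2)) x := by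
        simpa using ((hasDerivAt_id x).mul_const (Real.sin θ ^ 2)).const_sub 1
      have h7 := (h6.sqrt h3.ne').inv h5.ne'
      simp only [one_div]
      refine HasDerivAt.congr_deriv h7 ?_
      field_simp)
  have h := key.2
  have e : (∫ θ in (0 : ℝ)..(π / 2), (Real.sin θ ^ 2) / (2 * Real.sqrt (1 - m * Real.sin θ ^ 2) ^ 3))
      = (EI m / (1 - m) - EJ m) / (2 * m) := by
    rw [← EJ3_eq hm]
    unfold EJ
    rw [← intervalIntegral.integral_sub (hc3.intervalIntegrable _ _)
      ((EJ_integrand_continuous hm).intervalIntegrable _ _), ← intervalIntegral.integral_div]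
    refine intervalIntegral.integral_congr fun θ _ => ?_
    have h3 := EJ_arg_pos hm θ
    have h5 := Real.sqrt_pos.mpr h3
    have h6 := Real.sq_sqrt h3.le
    beta_reduce
    generalize Real.sqrt (1 - m * Real.sin θ ^ 2) = w at *
    field_simp
    rw [h6]; ring
  rw [e] at h
  exact h

lemma EI_one : EI 1 = 1 := by
  unfold EI
  have : ∀ θ ∈ Set.uIcc (0:ℝ) (π/2), Real.sqrt (1 - 1 * Real.sin θ ^ 2) = Real.cos θ := by
    intro θ hθ
    rw [Set.uIcc_of_le (by positivity)] at hθ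
    rw [one_mul, ← Real.cos_sq', Real.sqrt_sq]
    exact Real.cos_nonneg_of_mem_Icc ⟨by linarith [hθ.1, Real.pi_pos], hθ.2⟩
  rw [intervalIntegral.integral_congr this]
  simp

lemma EI_anti {a b : ℝ} (h : a ≤ b) : EI b ≤ EI a := by
  unfold EI
  apply intervalIntegral.integral_mono_on (by positivity)
    ((EI_integrand_continuous b).intervalIntegrable _ _)
    ((EI_integrand_continuous a).intervalIntegrable _ _)
  intro θ _
  apply Real.sqrt_le_sqrt
  nlinarith [sq_nonneg (Real.sin θ)]

lemma EJ_mono {a b : ℝ} (h : a ≤ b) (hb : b < 1) : EJ a ≤ EJ b := by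
  unfold EJ
  apply intervalIntegral.integral_mono_on (by positivity)
    ((EJ_integrand_continuous (by linarith)).intervalIntegrable _ _)
    ((EJ_integrand_continuous hb).intervalIntegrable _ _)
  intro θ _
  apply one_div_le_one_div_of_le (Real.sqrt_pos.mpr (EJ_arg_pos hb θ))
  apply Real.sqrt_le_sqrt
  nlinarith [sq_nonneg (Real.sin θ)]

lemma EJ_zero : EJ 0 = π / 2 := by simp [EJ]
lemma EI_zero : EI 0 = π / 2 := by simp [EI]

lemma EJ_ge {m : ℝ} (hm0 : 0 ≤ m) (hm : m < 1) : π / 2 ≤ EJ m := by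
  rw [← EJ_zero]; exact EJ_mono hm0 hm

lemma EJ_le {m : ℝ} (hm0 : 0 ≤ m) (hm : m < 1) : EJ m ≤ (π / 2) / Real.sqrt (1 - m) := by
  have : (π / 2) / Real.sqrt (1 - m) = ∫ θ in (0 : ℝ)..(π / 2), 1 / Real.sqrt (1 - m) := by
    simp [div_eq_mul_inv]
  rw [this]
  unfold EJ
  apply intervalIntegral.integral_mono_on (by positivity)
    ((EJ_integrand_continuous hm).intervalIntegrable _ _) (by simp)
  intro θ _
  apply one_div_le_one_div_of_le (Real.sqrt_pos.mpr (by linarith))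
  apply Real.sqrt_le_sqrt
  nlinarith [Real.sin_sq_le_one θ]

/-- Legendre function. -/
noncomputable def ELeg (m : ℝ) : ℝ := EI m * EJ (1 - m) + EI (1 - m) * EJ m - EJ m * EJ (1 - m)

lemma EI_hasDerivAt' {m : ℝ} (hm0 : 0 < m) (hm : m < 1) :
    HasDerivAt (fun m => EI (1 - m)) (-((EI (1 - m) - EJ (1 - m)) / (2 * (1 - m)))) m := by
  have h1 : HasDerivAt (fun m : ℝ => 1 - m) (-1) m := by simpa using (hasDerivAt_id m).const_sub 1
  have := (EI_hasDerivAt (m := 1 - m) (by linarith) (by linarith)).comp m h1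
  refine HasDerivAt.congr_deriv this ?_; ring

lemma EJ_hasDerivAt' {m : ℝ} (hm0 : 0 < m) (hm : m < 1) :
    HasDerivAt (fun m => EJ (1 - m)) (-((EI (1 - m) / m - EJ (1 - m)) / (2 * (1 - m)))) m := by
  have h1 : HasDerivAt (fun m : ℝ => 1 - m) (-1) m := by simpa using (hasDerivAt_id m).const_sub 1
  have := (EJ_hasDerivAt (m := 1 - m) (by linarith) (by linarith)).comp m h1
  refine HasDerivAt.congr_deriv this ?_; (try ring_nf)

lemma ELeg_hasDerivAt {m : ℝ} (hm0 : 0 < m) (hm : m < 1) : HasDerivAt ELeg 0 m := by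
  have h1 := EI_hasDerivAt hm0 hm
  have h2 := EJ_hasDerivAt hm0 hm
  have h3 := EI_hasDerivAt' hm0 hm
  have h4 := EJ_hasDerivAt' hm0 hm
  have := ((h1.mul h4).add (h3.mul h2)).sub (h2.mul h4)
  refine HasDerivAt.congr_deriv this ?_
  have : 1 - m ≠ 0 := by linarith
  field_simp
  ring

lemma ELeg_const {a b : ℝ} (ha : 0 < a) (hab : a ≤ b) (hb : b < 1) : ELeg b = ELeg a := by
  apply constant_of_has_deriv_right_zero (f := ELeg) (a := a) (b := b)
  · intro x hx
    exact (ELeg_hasDerivAt (by linarith [hx.1]) (by linarith [hx.2])).continuousAt.continuousWithinAt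
  · intro x hx
    exact (ELeg_hasDerivAt (by linarith [hx.1]) (by linarith [hx.2])).hasDerivWithinAt
  · exact ⟨hab, le_rfl⟩

lemma EJ_sub_EI {m : ℝ} (hm : m < 1) :
    EJ m - EI m = ∫ θ in (0 : ℝ)..(π / 2), m * (Real.sin θ ^ 2 / Real.sqrt (1 - m * Real.sin θ ^ 2)) := by
  unfold EI EJ
  rw [← intervalIntegral.integral_sub ((EJ_integrand_continuous hm).intervalIntegrable _ _)
    ((EI_integrand_continuous m).intervalIntegrable _ _)]
  refine intervalIntegral.integral_congr fun θ _ => ?_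
  have h3 := EJ_arg_pos hm θ
  have h5 := Real.sqrt_pos.mpr h3
  have h6 := Real.sq_sqrt h3.le
  field_simp
  rw [h6]; ring

lemma EJ_sub_EI_le {m : ℝ} (hm0 : 0 ≤ m) (hm : m < 1) : EJ m - EI m ≤ m * EJ m := by
  rw [EJ_sub_EI hm]
  unfold EJ
  rw [← intervalIntegral.integral_const_mul]
  have hc : Continuous (fun θ : ℝ => m * (Real.sin θ ^ 2 / Real.sqrt (1 - m * Real.sin θ ^ 2))) := by
    apply continuous_const.mul
    apply Continuous.div (by fun_prop) (by fun_prop)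
    intro θ
    exact (Real.sqrt_pos.mpr (EJ_arg_pos hm θ)).ne'
  apply intervalIntegral.integral_mono_on (by positivity) (hc.intervalIntegrable _ _)
    ((continuous_const.mul (EJ_integrand_continuous hm)).intervalIntegrable _ _)
  intro θ _
  have h5 := Real.sqrt_pos.mpr (EJ_arg_pos hm θ)
  have := Real.sin_sq_le_one θ
  exact mul_le_mul_of_nonneg_left (div_le_div_of_nonneg_right this h5.le) hm0

lemma ELeg_ge {m : ℝ} (hm0 : 0 < m) (hm : m < 1) : π / 2 ≤ ELeg m := by
  have hbound : ∀ a : ℝ, 0 < a → a ≤ m → π / 2 - (EJ m * (π / 2)) * Real.sqrt a ≤ ELeg m := by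
    intro a ha ham
    rw [ELeg_const ha ham hm]
    have ha1 : a < 1 := by linarith
    have h1 : EJ a - EI a ≤ a * EJ m :=
      (EJ_sub_EI_le ha.le ha1).trans (by have := EJ_mono ham hm; gcongr)
    have h2 : EJ (1 - a) ≤ (π / 2) / Real.sqrt a := by
      have := EJ_le (m := 1 - a) (by linarith) (by linarith)
      simpa using this
    have h3 : 1 ≤ EI (1 - a) := by
      have := EI_anti (show 1 - a ≤ 1 by linarith)
      rwa [EI_one] at this
    have h4 := EJ_ge ha.le ha1
    have h4' := EJ_ge hm0.le hm
    have hpi := Real.pi_pos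
    have h6 : 0 ≤ EJ (1 - a) := by
      have := EJ_ge (m := 1 - a) (by linarith) (by linarith); linarith
    have hJm : 0 < EJ m := by linarith
    have hs := Real.sqrt_pos.mpr ha
    have hs2 := Real.sq_sqrt ha.le
    have h7 : (EJ a - EI a) * EJ (1 - a) ≤ (EJ m * (π / 2)) * Real.sqrt a := by
      calc (EJ a - EI a) * EJ (1 - a) ≤ (a * EJ m) * EJ (1 - a) := by gcongr
        _ ≤ (a * EJ m) * ((π / 2) / Real.sqrt a) := by gcongr
        _ = _ := by field_simp; rw [hs2]
    have h8 : π / 2 ≤ EI (1 - a) * EJ a := by nlinarith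
    unfold ELeg
    nlinarith
  have ht : Filter.Tendsto (fun a : ℝ => π / 2 - (EJ m * (π / 2)) * Real.sqrt a) (nhdsWithin 0 (Set.Ioi 0))
      (nhds (π / 2)) := by
    have : Continuous (fun a : ℝ => π / 2 - (EJ m * (π / 2)) * Real.sqrt a) := by fun_prop
    have := this.tendsto 0
    simp only [Real.sqrt_zero, mul_zero, sub_zero] at this
    exact this.mono_left nhdsWithin_le_nhds
  refine le_of_tendsto ht ?_
  filter_upwards [Ioo_mem_nhdsGT hm0] with a ha
  exact hbound a ha.1 ha.2.le

lemma EJ_log {e : ℝ} (he : 0 < e) (he1 : e < 1) :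
    2 * EJ (1 - e ^ 4) ≤ Real.log (16 / e ^ 4) + e ^ 2 := by
  have he4 : 0 < e ^ 4 := by positivity
  have hlt : 1 - e ^ 4 < 1 := by linarith
  have hpi := Real.pi_pos
  set θ0 := Real.arctan (1 / e) with hθ0
  have h0 : 0 < θ0 := by rw [hθ0]; exact Real.arctan_pos.mpr (by positivity)
  have h1 : θ0 < π / 2 := Real.arctan_lt_pi_div_two _
  have harg : ∀ θ, 1 - (1 - e ^ 4) * Real.sin θ ^ 2 = Real.cos θ ^ 2 + e ^ 4 * Real.sin θ ^ 2 := by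
    intro θ; have := Real.sin_sq_add_cos_sq θ; linarith
  have hc := EJ_integrand_continuous hlt
  have htan : Real.tan θ0 = 1 / e := Real.tan_arctan _
  have hp1 : (∫ θ in (0:ℝ)..θ0, 1 / Real.sqrt (1 - (1 - e ^ 4) * Real.sin θ ^ 2))
      ≤ Real.arsinh (1 / e) := by
    have hcos : ∀ θ ∈ Set.Icc 0 θ0, 0 < Real.cos θ := fun θ hθ =>
      Real.cos_pos_of_mem_Ioo ⟨by linarith [hθ.1], by linarith [hθ.2]⟩
    have hd : ∀ θ ∈ Set.Icc 0 θ0, HasDerivAt (fun θ => Real.arsinh (Real.tan θ)) (1 / Real.cos θ) θ := by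
      intro θ hθ
      have hcp := hcos θ hθ
      have := (Real.hasDerivAt_tan hcp.ne').arsinh
      refine HasDerivAt.congr_deriv this ?_
      have e1 : 1 + Real.tan θ ^ 2 = (1 / Real.cos θ) ^ 2 := by
        rw [Real.tan_eq_sin_div_cos]
        have := Real.sin_sq_add_cos_sq θ
        field_simp; linarith
      rw [e1, Real.sqrt_sq (by positivity)]
      simp; field_simp
    have := intervalIntegral.integral_le_sub_of_hasDeriv_right_of_le (a := 0) (b := θ0)
      (g := fun θ => Real.arsinh (Real.tan θ)) (g' := fun θ => 1 / Real.cos θ)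
      (φ := fun θ => 1 / Real.sqrt (1 - (1 - e ^ 4) * Real.sin θ ^ 2)) h0.le
      (fun θ hθ => (hd θ hθ).continuousAt.continuousWithinAt)
      (fun θ hθ => (hd θ ⟨hθ.1.le, hθ.2.le⟩).hasDerivWithinAt)
      (hc.continuousOn.integrableOn_Icc)
      (by
        intro θ hθ
        have hcp := hcos θ ⟨hθ.1.le, hθ.2.le⟩
        apply one_div_le_one_div_of_le hcp
        apply Real.le_sqrt_of_sq_le
        rw [harg]
        nlinarith [sq_nonneg (Real.sin θ)])
    simpa [htan] using this
  have hp2 : (∫ θ in θ0..(π/2), 1 / Real.sqrt (1 - (1 - e ^ 4) * Real.sin θ ^ 2))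
      ≤ Real.arsinh (1 / e) := by
    have hsin : ∀ θ ∈ Set.Icc θ0 (π/2), 0 < Real.sin θ := fun θ hθ =>
      Real.sin_pos_of_pos_of_lt_pi (by linarith [hθ.1]) (by linarith [hθ.2])
    have hd : ∀ θ ∈ Set.Icc θ0 (π/2), HasDerivAt (fun θ => -Real.arsinh (Real.cos θ / Real.sin θ / e ^ 2))
        (1 / (Real.sin θ * Real.sqrt (1 - (1 - e ^ 4) * Real.sin θ ^ 2))) θ := by
      intro θ hθ
      have hsp := hsin θ hθ
      have := (((Real.hasDerivAt_cos θ).div (Real.hasDerivAt_sin θ) hsp.ne').div_const (e^2)).arsinh.neg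
      refine HasDerivAt.congr_deriv this ?_
      have hap := EJ_arg_pos hlt θ
      (try simp only [Pi.div_apply])
      have e1 : 1 + (Real.cos θ / Real.sin θ / e ^ 2) ^ 2 =
          (Real.sqrt (1 - (1 - e ^ 4) * Real.sin θ ^ 2) / (Real.sin θ * e ^ 2)) ^ 2 := by
        rw [div_pow (Real.sqrt _), Real.sq_sqrt hap.le, harg]
        field_simp; ring
      have hs := Real.sqrt_pos.mpr hap
      rw [e1, Real.sqrt_sq (by positivity)]
      simp only [smul_eq_mul]
      have := Real.sin_sq_add_cos_sq θ
      field_simp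
      linarith
    have := intervalIntegral.integral_le_sub_of_hasDeriv_right_of_le (a := θ0) (b := π / 2)
      (g := fun θ => -Real.arsinh (Real.cos θ / Real.sin θ / e ^ 2))
      (g' := fun θ => (1 / (Real.sin θ * Real.sqrt (1 - (1 - e ^ 4) * Real.sin θ ^ 2))))
      (φ := fun θ => 1 / Real.sqrt (1 - (1 - e ^ 4) * Real.sin θ ^ 2)) h1.le
      (fun θ hθ => (hd θ hθ).continuousAt.continuousWithinAt)
      (fun θ hθ => (hd θ ⟨hθ.1.le, hθ.2.le⟩).hasDerivWithinAt)
      (hc.continuousOn.integrableOn_Icc)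
      (by
        intro θ hθ
        have hsp := hsin θ ⟨hθ.1.le, hθ.2.le⟩
        have hs := Real.sqrt_pos.mpr (EJ_arg_pos hlt θ)
        apply one_div_le_one_div_of_le (by positivity)
        have := Real.sin_le_one θ
        nlinarith)
    have e2 : Real.cos θ0 / Real.sin θ0 / e ^ 2 = 1 / e := by
      have h3 : Real.cos θ0 / Real.sin θ0 = e := by
        rw [← inv_div, ← Real.tan_eq_sin_div_cos, htan]; simp
      rw [h3]; field_simp
    simp only [e2] at this
    simpa using this
  have hsum : EJ (1 - e ^ 4) ≤ 2 * Real.arsinh (1 / e) := by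
    unfold EJ
    rw [← intervalIntegral.integral_add_adjacent_intervals (b := θ0) (hc.intervalIntegrable _ _)
      (hc.intervalIntegrable _ _)]
    linarith
  have har : Real.arsinh (1 / e) ≤ Real.log (2 / e) + e ^ 2 / 4 := by
    have hb : Real.sqrt (1 + (1 / e) ^ 2) ≤ 1 / e + e / 2 := by
      rw [Real.sqrt_le_left (by positivity)]
      have : (1 / e + e / 2) ^ 2 = (1 / e) ^ 2 + 1 + e ^ 2 / 4 := by field_simp; ring
      rw [this]; nlinarith
    have hs := Real.sqrt_pos.mpr (show 0 < 1 + (1 / e) ^ 2 by positivity)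
    unfold Real.arsinh
    calc Real.log (1 / e + Real.sqrt (1 + (1 / e) ^ 2)) ≤ Real.log ((2 / e) * (1 + e ^ 2 / 4)) := by
          apply Real.log_le_log (by positivity)
          have : (2 / e) * (1 + e ^ 2 / 4) = 1 / e + (1 / e + e / 2) := by field_simp; ring
          rw [this]; linarith
      _ = Real.log (2 / e) + Real.log (1 + e ^ 2 / 4) := by
          rw [Real.log_mul (by positivity) (by positivity)]
      _ ≤ _ := by
          have := Real.log_le_sub_one_of_pos (show 0 < 1 + e ^ 2 / 4 by positivity)
          linarith
  have hl : Real.log (16 / e ^ 4) = 4 * Real.log (2 / e) := by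
    rw [show (16:ℝ) / e ^ 4 = (2 / e) ^ 4 by field_simp; norm_num, Real.log_pow]; norm_num
  rw [hl]; linarith

/-- nome bound -/
lemma EJ_nome {m : ℝ} (hm0 : 0 < m) (hm : m < 1) :
    π * EJ (1 - m) ≤ EJ m * Real.log (16 / m) := by
  have hpi := Real.pi_pos
  set ph : ℝ → ℝ := fun m => π * EJ (1 - m) / EJ m + Real.log m with hph
  have hJpos : ∀ x, 0 < x → x < 1 → 0 < EJ x := fun x h0 h1 => by
    have := EJ_ge h0.le h1; linarith
  have hder : ∀ x, 0 < x → x < 1 → HasDerivAt ph (-(π * ELeg x) / (2 * x * (1 - x) * EJ x ^ 2) + 1 / x) x := by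
    intro x h0 h1
    have hJ := hJpos x h0 h1
    have := (((EJ_hasDerivAt' h0 h1).const_mul π).div (EJ_hasDerivAt h0 h1) hJ.ne').add
      (Real.hasDerivAt_log h0.ne')
    refine HasDerivAt.congr_deriv this ?_
    have : 1 - x ≠ 0 := by linarith
    unfold ELeg
    field_simp
    ring
  have hanti : AntitoneOn ph (Set.Ioo 0 1) := by
    apply antitoneOn_of_deriv_nonpos (convex_Ioo 0 1)
    · intro x hx; exact (hder x hx.1 hx.2).continuousAt.continuousWithinAt
    · intro x hx; rw [interior_Ioo] at hx
      exact (hder x hx.1 hx.2).differentiableAt.differentiableWithinAt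
    · intro x hx; rw [interior_Ioo] at hx
      obtain ⟨h0, h1⟩ := hx
      rw [(hder x h0 h1).deriv]
      have hJ := hJpos x h0 h1
      have hL := ELeg_ge h0 h1
      have hs : 0 < 1 - x := by linarith
      have hJ2 : EJ x ^ 2 * (1 - x) ≤ (π / 2) ^ 2 := by
        have := EJ_le h0.le h1
        have hsq := Real.sqrt_pos.mpr hs
        rw [le_div_iff₀ hsq] at this
        have h2 := pow_le_pow_left₀ (by positivity) this 2
        rwa [mul_pow, Real.sq_sqrt hs.le] at h2
      have : 1 / x ≤ (π * ELeg x) / (2 * x * (1 - x) * EJ x ^ 2) := by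
        rw [div_le_div_iff₀ h0 (by positivity)]
        have : 2 * ((1 - x) * EJ x ^ 2) ≤ π * ELeg x := by nlinarith
        nlinarith
      rw [neg_div]; linarith
  have hb : ∀ e : ℝ, 0 < e → e ^ 4 ≤ m → ph m ≤ Real.log 16 + e ^ 2 := by
    intro e he hem
    have he4 : 0 < e ^ 4 := by positivity
    have he1 : e < 1 := by
      by_contra h; push Not at h
      have := one_le_pow₀ (n := 4) h; linarith
    have h1 := hanti (a := e ^ 4) (b := m) ⟨he4, by linarith⟩ ⟨hm0, hm⟩ hem
    refine h1.trans ?_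
    have h2 := EJ_log he he1
    have hJ := EJ_ge he4.le (by linarith : e ^ 4 < 1)
    have hJ1 := EJ_ge (m := 1 - e ^ 4) (by linarith) (by linarith)
    have h3 : π * EJ (1 - e ^ 4) / EJ (e ^ 4) ≤ 2 * EJ (1 - e ^ 4) := by
      rw [div_le_iff₀ (by linarith)]; nlinarith
    rw [Real.log_div (by norm_num) he4.ne'] at h2
    simp only [hph]
    linarith
  have hle : ph m ≤ Real.log 16 := by
    have ht : Filter.Tendsto (fun e : ℝ => Real.log 16 + e ^ 2) (nhdsWithin 0 (Set.Ioi 0)) (nhds (Real.log 16)) := by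
      have : Continuous (fun e : ℝ => Real.log 16 + e ^ 2) := by fun_prop
      have := this.tendsto 0
      simp only [ne_eq, OfNat.ofNat_ne_zero, not_false_eq_true, zero_pow, add_zero] at this
      exact this.mono_left nhdsWithin_le_nhds
    refine ge_of_tendsto ht ?_
    have hc : Filter.Tendsto (fun e : ℝ => e ^ 4) (nhdsWithin 0 (Set.Ioi 0)) (nhds 0) := by
      have : Continuous (fun e : ℝ => e ^ 4) := by fun_prop
      have := this.tendsto 0
      simp only [ne_eq, OfNat.ofNat_ne_zero, not_false_eq_true, zero_pow] at this
      exact this.mono_left nhdsWithin_le_nhds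
    filter_upwards [hc.eventually (Iio_mem_nhds hm0), self_mem_nhdsWithin] with e he1 he2
    exact hb e he2 (le_of_lt he1)
  have hJ := hJpos m hm0 hm
  simp only [hph] at hle
  have : π * EJ (1 - m) / EJ m ≤ Real.log (16 / m) := by
    rw [Real.log_div (by norm_num) hm0.ne']; linarith
  rw [div_le_iff₀ hJ] at this
  linarith

lemma EJ_sub_EI_le' {m : ℝ} (hm0 : 0 < m) (hm : m ≤ 9 / 20) :
    EJ m - EI m ≤ m * ((π / 4) * (1 + 117 / 200 * m)) := by
  have hm1 : m < 1 := by linarith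
  rw [EJ_sub_EI hm1, intervalIntegral.integral_const_mul]
  apply mul_le_mul_of_nonneg_left _ hm0.le
  have hc : Continuous (fun θ : ℝ => Real.sin θ ^ 2 / Real.sqrt (1 - m * Real.sin θ ^ 2)) := by
    apply Continuous.div (by fun_prop) (by fun_prop)
    intro θ
    exact (Real.sqrt_pos.mpr (EJ_arg_pos hm1 θ)).ne'
  have hs2 : (∫ θ in (0:ℝ)..(π/2), Real.sin θ ^ 2) = π / 4 := by
    rw [integral_sin_sq]; simp; ring
  have hs4 : (∫ θ in (0:ℝ)..(π/2), Real.sin θ ^ 4) = 3 * π / 16 := by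
    rw [show (4:ℕ) = 2 + 2 by norm_num, integral_sin_pow, hs2]; simp; ring
  have e : (π / 4) * (1 + 117 / 200 * m) =
      ∫ θ in (0:ℝ)..(π/2), (Real.sin θ ^ 2 + (39 / 50 * m) * Real.sin θ ^ 4) := by
    rw [intervalIntegral.integral_add, intervalIntegral.integral_const_mul, hs2, hs4]
    · ring
    · exact (by fun_prop : Continuous fun θ : ℝ => Real.sin θ ^ 2).intervalIntegrable _ _
    · exact (by fun_prop : Continuous fun θ : ℝ => (39 / 50 * m) * Real.sin θ ^ 4).intervalIntegrable _ _
  rw [e]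
  apply intervalIntegral.integral_mono_on (by positivity) (hc.intervalIntegrable _ _)
  · exact (by fun_prop : Continuous fun θ : ℝ => Real.sin θ ^ 2 + (39 / 50 * m) * Real.sin θ ^ 4).intervalIntegrable _ _
  intro θ _
  have hp := EJ_arg_pos hm1 θ
  have hsq := Real.sqrt_pos.mpr hp
  have h1 := Real.sin_sq_le_one θ
  have h2 := sq_nonneg (Real.sin θ)
  rw [div_le_iff₀ hsq]
  set y := m * Real.sin θ ^ 2 with hy
  have hy0 : 0 ≤ y := by positivity
  have hy1 : y ≤ 9 / 20 := by nlinarith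
  have hk : 1 ≤ (1 + 39 / 50 * y) * Real.sqrt (1 - y) := by
    have : 1 ≤ ((1 + 39 / 50 * y) * Real.sqrt (1 - y)) ^ 2 := by
      rw [mul_pow, Real.sq_sqrt hp.le]
      nlinarith [mul_nonneg hy0 (sub_nonneg.mpr hy1), mul_nonneg (mul_nonneg hy0 hy0) (sub_nonneg.mpr hy1)]
    by_contra hlt
    push Not at hlt
    have : ((1 + 39 / 50 * y) * Real.sqrt (1 - y)) ^ 2 < 1 := by
      apply pow_lt_one₀ (by positivity) hlt (by norm_num)
    linarith
  have : (Real.sin θ ^ 2 + 39 / 50 * m * Real.sin θ ^ 4) * Real.sqrt (1 - y) =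
      Real.sin θ ^ 2 * ((1 + 39 / 50 * y) * Real.sqrt (1 - y)) := by rw [hy]; ring
  rw [this]
  nlinarith

lemma poly1 {m : ℝ} (h0 : 0 ≤ m) (h1 : m ≤ 9 / 20) :
    (1 + 5/4 * m + 9/5 * m ^ 2) ^ 2 * (1 - 2579/1000 * m + 2 * m ^ 2) ≤ 1 := by
  have ha := mul_nonneg h0 (sub_nonneg.mpr h1)
  have hb := mul_nonneg h0 ha
  have hc := mul_nonneg h0 hb
  have hd := mul_nonneg h0 hc
  have he := mul_nonneg h0 hd
  nlinarith [mul_nonneg h0 (sq_nonneg (m - 1/5)), mul_nonneg h0 (sq_nonneg (m^2 - 1/5*m))]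

lemma poly2 {m : ℝ} (h0 : 0 ≤ m) (h1 : m ≤ 9 / 20) :
    (1 + 117/200 * m) ^ 2 ≤ ((1 + 5/4 * m + 9/5 * m ^ 2) * (1 - m * (1 + 5/4 * m + 9/5 * m ^ 2) / 8)) ^ 2 * (1 - m) := by
  have ha := mul_nonneg h0 (sub_nonneg.mpr h1)
  have hb := mul_nonneg h0 ha
  have hc := mul_nonneg h0 hb
  have hd := mul_nonneg h0 hc
  have he := mul_nonneg h0 hd
  nlinarith [mul_nonneg h0 (sq_nonneg (m - 1/5)), mul_nonneg h0 (sq_nonneg (m^2 - 1/5*m))]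

lemma xi_bound {m ξ γ : ℝ} (h0 : 0 < m) (h1 : m ≤ 9 / 20) (hξ : 0 < ξ) (hmx : m * ξ < 4)
    (hγ : ξ * (1 - m * ξ / 8) = γ) (hγ2 : γ ^ 2 * (1 - m) ≤ (1 + 117/200 * m) ^ 2) :
    ξ ^ 2 * (1 - 2579/1000 * m + 2 * m ^ 2) ≤ 1 := by
  set R := 1 + 5/4 * m + 9/5 * m ^ 2 with hR
  have hR0 : 0 < R := by positivity
  have hR2 : R ≤ 2 := by rw [hR]; nlinarith
  have hle : ξ ≤ R := by
    by_contra hlt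
    push Not at hlt
    have h3 : R * (1 - m * R / 8) < γ := by
      rw [← hγ]
      have : 0 < (ξ - R) * (1 - m * (ξ + R) / 8) := by
        apply mul_pos (by linarith)
        nlinarith
      nlinarith
    have h4 := poly2 h0.le h1
    rw [← hR] at h4
    have h5 : 0 < R * (1 - m * R / 8) := by
      apply mul_pos hR0; nlinarith
    have h6 : (R * (1 - m * R / 8)) ^ 2 < γ ^ 2 := pow_lt_pow_left₀ h3 h5.le (by norm_num)
    nlinarith
  have h7 := poly1 h0.le h1
  rw [← hR] at h7
  have h8 : ξ ^ 2 ≤ R ^ 2 := pow_le_pow_left₀ hξ.le hle 2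
  have hP : 0 ≤ 1 - 2579/1000 * m + 2 * m ^ 2 := by nlinarith [sq_nonneg (m - 2579/4000)]
  exact (mul_le_mul_of_nonneg_right h8 hP).trans h7

lemma log_le_half {ξ : ℝ} (h : 1 ≤ ξ) : Real.log ξ ≤ (ξ ^ 2 - 1) / (2 * ξ) := by
  have hp : 0 < ξ := by linarith
  have hmono : MonotoneOn (fun ξ : ℝ => (ξ ^ 2 - 1) / (2 * ξ) - Real.log ξ) (Set.Ici 1) := by
    have hder : ∀ x : ℝ, 0 < x → HasDerivAt (fun ξ : ℝ => (ξ ^ 2 - 1) / (2 * ξ) - Real.log ξ)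
        ((x - 1) ^ 2 / (2 * x ^ 2)) x := by
      intro x hx
      have h1 := (((hasDerivAt_id x).pow 2).sub_const 1).div ((hasDerivAt_id x).const_mul 2)
        (by simp; exact hx.ne')
      refine (h1.sub (Real.hasDerivAt_log hx.ne')).congr_deriv ?_
      simp
      field_simp
      ring
    apply monotoneOn_of_deriv_nonneg (convex_Ici 1)
    · intro x hx
      exact (hder x (by simp at hx; linarith)).continuousAt.continuousWithinAt
    · intro x hx
      rw [interior_Ici] at hx
      exact (hder x (by simp at hx; linarith)).differentiableAt.differentiableWithinAt
    · intro x hx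
      rw [interior_Ici] at hx
      rw [(hder x (by simp at hx; linarith)).deriv]
      positivity
  have := hmono (a := 1) (by simp) (by simpa using h) h
  simp at this
  linarith

lemma key_log {m x : ℝ} (h0 : 0 < m) (h1 : m < 1) (hx0 : 0 < x) (hx1 : x < 1 / 4)
    (hx : x - 2 * x ^ 2 = (EJ m - EI m) / Real.sqrt (1 - m) / (4 * π)) :
    Real.log (16 / m) * (1 - 4 * x) ≤ Real.log (1 / x) := by
  have hpi := Real.pi_pos
  set ξ := 16 * x / m with hξ
  have hξ0 : 0 < ξ := by positivity
  have hxm : x = m * ξ / 16 := by rw [hξ]; field_simp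
  have hlx : Real.log (1 / x) = Real.log (16 / m) - Real.log ξ := by
    rw [← Real.log_div (by positivity) hξ0.ne', hξ]
    congr 1; field_simp
  have h16 : 0 < Real.log (16 / m) := Real.log_pos (by rw [lt_div_iff₀ h0]; linarith)
  have hl2 := Real.log_two_gt_d9
  have hl16 : Real.log 16 = 4 * Real.log 2 := by
    rw [show (16:ℝ) = 2 ^ 4 by norm_num, Real.log_pow]; norm_num
  suffices hs : Real.log ξ ≤ (m / 4 * Real.log (16 / m)) * ξ by
    rw [hlx, hxm]; nlinarith
  rcases le_total m (9 / 20) with hm | hm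
  · by_cases hξ1 : ξ ≤ 1
    · have := Real.log_nonpos hξ0.le hξ1
      have : 0 ≤ (m / 4 * Real.log (16 / m)) * ξ := by positivity
      linarith
    push Not at hξ1
    have hsq := Real.sqrt_pos.mpr (show 0 < 1 - m by linarith)
    have hsq2 := Real.sq_sqrt (show 0 ≤ 1 - m by linarith)
    have hγ : ξ * (1 - m * ξ / 8) = 4 / (π * m) * (EJ m - EI m) / Real.sqrt (1 - m) := by
      have : ξ * (1 - m * ξ / 8) = 16 / m * (x - 2 * x ^ 2) := by
        rw [hxm]; field_simp; ring
      rw [this, hx]; field_simp; ring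
    have hnn : 0 ≤ EJ m - EI m := by
      have a1 := EJ_ge h0.le h1
      have a2 := EI_anti h0.le
      rw [EI_zero] at a2; linarith
    have hb := xi_bound h0 hm hξ0 (by rw [hξ]; field_simp; linarith) hγ (by
      rw [div_pow, hsq2, div_mul_cancel₀ _ (by linarith)]
      apply pow_le_pow_left₀ (by positivity)
      have := EJ_sub_EI_le' h0 hm
      calc 4 / (π * m) * (EJ m - EI m) ≤ 4 / (π * m) * (m * ((π / 4) * (1 + 117 / 200 * m))) := by gcongr
        _ = _ := by field_simp)
    have hlog : Real.log (16 / m) ≥ 5.158 - 4 * m := by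
      have a1 : Real.log (16 / m) = Real.log 64 - Real.log (4 * m) := by
        rw [← Real.log_div (by norm_num) (by positivity)]; congr 1; field_simp; norm_num
      have a2 := Real.log_le_sub_one_of_pos (show 0 < 4 * m by positivity)
      have a3 : Real.log 64 = 6 * Real.log 2 := by
        rw [show (64:ℝ) = 2 ^ 6 by norm_num, Real.log_pow]; norm_num
      rw [a1, a3]; norm_num at *; linarith
    have h5 := log_le_half hξ1.le
    refine h5.trans ?_
    rw [div_le_iff₀ (by positivity)]
    have h6 : (5.158 - 4 * m) * (m / 4) ≤ m / 4 * Real.log (16 / m) := by nlinarith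
    have h7 : (5.158 - 4 * m) * (m / 4) * (2 * ξ ^ 2) ≤ m / 4 * Real.log (16 / m) * (2 * ξ ^ 2) := by gcongr
    norm_num at h7 ⊢
    nlinarith
  · have a1 : Real.log ξ ≤ ξ / Real.exp 1 := by
      have := Real.log_le_sub_one_of_pos (show 0 < ξ / Real.exp 1 by positivity)
      rw [Real.log_div hξ0.ne' (Real.exp_pos 1).ne', Real.log_exp] at this
      linarith
    have a2 : 1 / Real.exp 1 ≤ m / 4 * Real.log (16 / m) := by
      have b1 : 1 / Real.exp 1 ≤ 0.368 := by
        rw [div_le_iff₀ (Real.exp_pos 1)]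
        have := Real.exp_one_gt_d9
        norm_num at *; linarith
      have b2 : Real.log (16 / m) ≥ 2.7725 + 1 - m := by
        rw [Real.log_div (by norm_num) h0.ne', hl16]
        have := Real.log_le_sub_one_of_pos h0
        norm_num at *; linarith
      have b3 : m / 4 * (2.7725 + 1 - m) ≤ m / 4 * Real.log (16 / m) := by gcongr
      norm_num at *
      nlinarith [mul_nonneg (sub_nonneg.mpr hm) (sub_nonneg.mpr h1.le)]
    calc Real.log ξ ≤ ξ / Real.exp 1 := a1
      _ = 1 / Real.exp 1 * ξ := by ring
      _ ≤ _ := by gcongr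

lemma G_hasDerivAt {m : ℝ} (h0 : 0 < m) (h1 : m < 1) :
    HasDerivAt (fun m => (EJ m - EI m) / Real.sqrt (1 - m))
      (EJ m * (1 / (2 * (1 - m) * Real.sqrt (1 - m)))) m := by
  have hp : 0 < 1 - m := by linarith
  have hs := Real.sqrt_pos.mpr hp
  have hd := (((hasDerivAt_id m).const_sub 1).sqrt hp.ne')
  refine (((EJ_hasDerivAt h0 h1).sub (EI_hasDerivAt h0 h1)).div hd hs.ne').congr_deriv ?_
  have h2 := Real.sq_sqrt hp.le
  simp only [id, Pi.sub_apply] at *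
  have : m = 1 - √(1 - m) ^ 2 := by linarith
  generalize √(1 - m) = w at *
  generalize EJ m = J at *
  generalize EI m = I at *
  subst this
  have e : 1 - (1 - w^2) = w^2 := by ring
  rw [e] at *
  field_simp
  ring

lemma A_hasDerivAt {m : ℝ} (h0 : 0 < m) (h1 : m < 1) :
    HasDerivAt (fun m => EI (1 - m) / Real.sqrt (1 - m))
      (EJ (1 - m) * (1 / (2 * (1 - m) * Real.sqrt (1 - m)))) m := by
  have hp : 0 < 1 - m := by linarith
  have hs := Real.sqrt_pos.mpr hp
  have hd := (((hasDerivAt_id m).const_sub 1).sqrt hp.ne')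
  refine ((EI_hasDerivAt' h0 h1).div hd hs.ne').congr_deriv ?_
  have h2 := Real.sq_sqrt hp.le
  simp only [id, Pi.sub_apply] at *
  have : 1 - m = √(1 - m) ^ 2 := by linarith
  generalize EJ (1 - m) = J at *
  generalize EI (1 - m) = I at *
  generalize √(1 - m) = w at *
  rw [this]
  field_simp
  ring

lemma EJ_sub_EI_nonneg {m : ℝ} (h0 : 0 ≤ m) (h1 : m < 1) : 0 ≤ EJ m - EI m := by
  have a1 := EJ_ge h0 h1
  have a2 := EI_anti h0
  rw [EI_zero] at a2; linarith

lemma G_continuousOn {b : ℝ} (h1 : b < 1) :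
    ContinuousOn (fun m => (EJ m - EI m) / Real.sqrt (1 - m)) (Set.Icc 0 b) := by
  intro m hm
  rcases hm.1.eq_or_lt with h | h
  · subst h
    have hc : ContinuousWithinAt EJ (Set.Icc 0 b) 0 := by
      unfold ContinuousWithinAt
      have hu : Filter.Tendsto (fun m : ℝ => (π / 2) / Real.sqrt (1 - m)) (nhdsWithin 0 (Set.Icc 0 b))
          (nhds (EJ 0)) := by
        have : ContinuousAt (fun m : ℝ => (π / 2) / Real.sqrt (1 - m)) 0 := by
          apply ContinuousAt.div (by fun_prop) (by fun_prop)
          simp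
        have h3 := this.tendsto.mono_left (nhdsWithin_le_nhds (s := Set.Icc 0 b))
        simpa [EJ_zero] using h3
      refine tendsto_of_tendsto_of_tendsto_of_le_of_le' (tendsto_const_nhds) hu ?_ ?_
      · filter_upwards [self_mem_nhdsWithin] with y hy
        rw [EJ_zero]
        exact EJ_ge hy.1 (lt_of_le_of_lt hy.2 h1)
      · filter_upwards [self_mem_nhdsWithin] with y hy
        exact EJ_le hy.1 (lt_of_le_of_lt hy.2 h1)
    apply ContinuousWithinAt.div (hc.sub EI_continuous.continuousWithinAt) (by fun_prop)
    simp
  · exact (G_hasDerivAt h (lt_of_le_of_lt hm.2 h1)).continuousAt.continuousWithinAt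

lemma B_mono {x y : ℝ} (hx : 0 ≤ x) (hxy : x ≤ y) (hy : y ≤ 1) :
    1 + 4 * x + 4 * Real.negMulLog x ≤ 1 + 4 * y + 4 * Real.negMulLog y := by
  rcases hx.eq_or_lt with h | h
  · subst h
    have h1 := Real.negMulLog_nonneg hxy hy
    simp; linarith
  · have hy0 : 0 < y := by linarith
    have h1 := Real.log_le_sub_one_of_pos (show 0 < y / x by positivity)
    rw [Real.log_div hy0.ne' h.ne'] at h1
    have h2 := Real.log_nonpos hy0.le hy
    have h3 : x * (Real.log y - Real.log x) ≤ y - x := by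
      calc _ ≤ x * (y / x - 1) := by gcongr
        _ = _ := by field_simp
    simp only [Real.negMulLog]
    nlinarith

lemma elliptic_main {m d : ℝ} (h0 : 0 < m) (h1 : m < 1) (hd0 : 0 < d) (hd : d < 5 * π / 4)
    (h : (EJ m - EI m) / Real.sqrt (1 - m) ≤ d * (1 - d / (2 * π))) :
    EI (1 - m) / Real.sqrt (1 - m) ≤ 1 + d / π * Real.log (4 * Real.exp 1 * π / d) := by
  have hpi := Real.pi_pos
  set G : ℝ → ℝ := fun m => (EJ m - EI m) / Real.sqrt (1 - m) with hG
  have hGc : ContinuousOn G (Set.Icc 0 m) := G_continuousOn h1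
  have hGm : StrictMonoOn G (Set.Icc 0 m) := by
    apply strictMonoOn_of_deriv_pos (convex_Icc _ _) hGc
    intro x hx
    rw [interior_Icc] at hx
    rw [(G_hasDerivAt hx.1 (hx.2.trans h1)).deriv]
    have a1 := EJ_ge hx.1.le (hx.2.trans h1)
    have a2 : 0 < 1 - x := by linarith [hx.2]
    have a3 := Real.sqrt_pos.mpr a2
    have a4 : 0 < EJ x := by linarith
    positivity
  have hG0 : G 0 = 0 := by simp [hG, EJ_zero, EI_zero]
  have hdb : d * (1 - d / (2 * π)) ≤ π / 2 := by
    have : π / 2 - d * (1 - d / (2 * π)) = (π - d) ^ 2 / (2 * π) := by field_simp; ring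
    have : 0 ≤ (π - d) ^ 2 / (2 * π) := by positivity
    linarith
  set X : ℝ → ℝ := fun m => (1 - Real.sqrt (1 - 2 * G m / π)) / 4 with hX
  set B : ℝ → ℝ := fun m => 1 + 4 * X m + 4 * Real.negMulLog (X m) with hB
  have hXc : ContinuousOn X (Set.Icc 0 m) := by
    apply ContinuousOn.div_const
    apply ContinuousOn.sub continuousOn_const
    apply ContinuousOn.sqrt
    apply ContinuousOn.sub continuousOn_const
    exact (hGc.const_mul 2).div_const _ |>.congr (fun x _ => by ring)
  have hBc : ContinuousOn B (Set.Icc 0 m) := by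
    apply ContinuousOn.add
    · exact continuousOn_const.add (hXc.const_mul 4)
    · exact (Real.continuous_negMulLog.comp_continuousOn hXc).const_mul 4
  set A : ℝ → ℝ := fun m => EI (1 - m) / Real.sqrt (1 - m) with hA
  have hAc : ContinuousOn A (Set.Icc 0 m) := by
    apply ContinuousOn.div
    · exact (EI_continuous.comp (by fun_prop : Continuous fun m : ℝ => 1 - m)).continuousOn
    · fun_prop
    · intro x hx
      exact (Real.sqrt_pos.mpr (by linarith [hx.2])).ne'
  have hder : ∀ x ∈ Set.Ioo 0 m, ∃ e ≤ 0, HasDerivAt (fun x => A x - B x) e x := by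
    intro x hx
    have hx1 := hx.2.trans h1
    have hGpos : 0 < G x := by
      rw [← hG0]; exact hGm ⟨le_rfl, h0.le⟩ ⟨hx.1.le, hx.2.le⟩ hx.1
    have hGlt : G x < π / 2 := (hGm ⟨hx.1.le, hx.2.le⟩ ⟨h0.le, le_rfl⟩ hx.2).trans_le (h.trans hdb)
    have hq : 0 < 1 - 2 * G x / π := by
      rw [sub_pos, div_lt_one hpi]; linarith
    have hq1 : 1 - 2 * G x / π < 1 := by
      have : 0 < 2 * G x / π := by positivity
      linarith
    have hs := Real.sqrt_pos.mpr hq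
    have hs1 : Real.sqrt (1 - 2 * G x / π) < 1 := by
      rw [Real.sqrt_lt' one_pos]; simpa using hq1
    have hs2 := Real.sq_sqrt hq.le
    have hX0 : 0 < X x := by simp only [hX]; linarith
    have hX1 : X x < 1 / 4 := by simp only [hX]; linarith
    have hXs : Real.sqrt (1 - 2 * G x / π) = 1 - 4 * X x := by simp only [hX]; ring
    have hXX : X x - 2 * X x ^ 2 = G x / (4 * π) := by
      have : G x / (4 * π) = (1 - (1 - 2 * G x / π)) / 8 := by field_simp; ring
      rw [this, ← hs2, hXs]; ring
    have hkey := key_log hx.1 hx1 hX0 hX1 hXX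
    have hnome := EJ_nome hx.1 hx1
    set u := 1 / (2 * (1 - x) * Real.sqrt (1 - x)) with hu
    have hu0 : 0 < u := by
      have a2 : 0 < 1 - x := by linarith
      have a3 := Real.sqrt_pos.mpr a2
      positivity
    have hGd : HasDerivAt G (EJ x * u) x := G_hasDerivAt hx.1 hx1
    have hAd : HasDerivAt A (EJ (1 - x) * u) x := A_hasDerivAt hx.1 hx1
    have hXd : HasDerivAt X (EJ x * u / (4 * π * (1 - 4 * X x))) x := by
      have := (((((hGd.const_mul 2).div_const π).const_sub 1).sqrt hq.ne').const_sub 1).div_const 4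
      refine this.congr_deriv ?_
      rw [hXs]
      have : (1 - 4 * X x) ≠ 0 := by linarith
      generalize X x = w at *
      field_simp
    have hBd : HasDerivAt B (Real.log (1 / X x) * (EJ x * u / (π * (1 - 4 * X x)))) x := by
      have := ((hXd.const_mul 4).const_add 1).add (((Real.hasDerivAt_negMulLog hX0.ne').comp x hXd).const_mul 4)
      refine this.congr_deriv ?_
      have : (1 - 4 * X x) ≠ 0 := by linarith
      rw [one_div, Real.log_inv]
      generalize Real.log (X x) = l at *
      generalize X x = w at *
      field_simp
      ring
    refine ⟨_, ?_, hAd.sub hBd⟩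
    have hw : 0 < 1 - 4 * X x := by linarith
    have hJ : 0 < EJ x := by linarith [EJ_ge hx.1.le hx1]
    rw [sub_nonpos]
    have : Real.log (1 / X x) * (EJ x * u / (π * (1 - 4 * X x))) = (Real.log (1 / X x) * EJ x / (π * (1 - 4 * X x))) * u := by ring
    rw [this]
    apply mul_le_mul_of_nonneg_right _ hu0.le
    rw [le_div_iff₀ (by positivity)]
    calc EJ (1 - x) * (π * (1 - 4 * X x)) = (π * EJ (1 - x)) * (1 - 4 * X x) := by ring
      _ ≤ (EJ x * Real.log (16 / x)) * (1 - 4 * X x) := by gcongr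
      _ = EJ x * (Real.log (16 / x) * (1 - 4 * X x)) := by ring
      _ ≤ EJ x * Real.log (1 / X x) := by gcongr
      _ = _ := by ring
  have hanti : AntitoneOn (fun x => A x - B x) (Set.Icc 0 m) := by
    apply antitoneOn_of_deriv_nonpos (convex_Icc _ _) (hAc.sub hBc)
    · intro x hx
      rw [interior_Icc] at hx
      obtain ⟨e, _, he⟩ := hder x hx
      exact he.differentiableAt.differentiableWithinAt
    · intro x hx
      rw [interior_Icc] at hx
      obtain ⟨e, he0, he⟩ := hder x hx
      exact he.deriv.le.trans he0
  have hfin := hanti ⟨le_rfl, h0.le⟩ ⟨h0.le, le_rfl⟩ h0.le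
  have hA0 : A 0 = 1 := by simp [hA, EI_one]
  have hB0 : B 0 = 1 := by simp [hB, hX, hG0]
  simp only [hA0, hB0] at hfin
  have hGm0 : 0 ≤ G m := by
    rw [← hG0]; exact hGm.monotoneOn ⟨le_rfl, h0.le⟩ ⟨h0.le, le_rfl⟩ h0.le
  have hXm0 : 0 ≤ X m := by
    have : Real.sqrt (1 - 2 * G m / π) ≤ 1 := by
      apply Real.sqrt_le_one.mpr
      have : 0 ≤ 2 * G m / π := by positivity
      linarith
    simp only [hX]; linarith
  have hXmd : X m ≤ d / (4 * π) := by
    have : 1 - d / π ≤ Real.sqrt (1 - 2 * G m / π) := by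
      apply Real.le_sqrt_of_sq_le
      have : 2 * G m / π ≤ 2 * (d * (1 - d / (2 * π))) / π := by gcongr
      have e : (1 - d / π) ^ 2 = 1 - 2 * (d * (1 - d / (2 * π))) / π := by field_simp; ring
      linarith
    have e : d / (4 * π) = (1 - (1 - d / π)) / 4 := by field_simp; ring
    rw [e]; simp only [hX]; linarith
  have hBB := B_mono hXm0 hXmd (by rw [div_le_one (by positivity)]; linarith)
  have hlast : 1 + 4 * (d / (4 * π)) + 4 * Real.negMulLog (d / (4 * π)) =
      1 + d / π * Real.log (4 * Real.exp 1 * π / d) := by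
    have : 4 * Real.exp 1 * π / d = Real.exp 1 / (d / (4 * π)) := by field_simp
    rw [this, Real.log_div (Real.exp_pos 1).ne' (by positivity), Real.log_exp, Real.negMulLog]
    field_simp
    ring
  rw [hlast] at hBB
  have : B m = 1 + 4 * X m + 4 * Real.negMulLog (X m) := rfl
  linarith

structure ZS (c χ : ℝ) (ψ ψ1 : ℝ → ℝ) : Prop where
  cont : ContinuousOn ψ (Set.Icc (-1) 1)
  d1 : ∀ x ∈ Set.Ioo (-1 : ℝ) 1, HasDerivAt ψ (ψ1 x) x
  d2 : ∀ x ∈ Set.Ioo (-1 : ℝ) 1,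
    HasDerivAt (fun t => (1 - t ^ 2) * ψ1 t) (-((χ - c ^ 2 * x ^ 2) * ψ x)) x
  fin : {x | x ∈ Set.Ioo (-1 : ℝ) 1 ∧ ψ x = 0}.Finite

lemma IsPSWF.zs {c : ℝ} {n : ℕ} {ψ : ℝ → ℝ} {χ : ℝ} {lam : ℂ} (h : IsPSWF c n ψ χ lam) :
    ZS c χ ψ (deriv ψ) := by
  obtain ⟨h1, h2, h3, h4, -⟩ := h
  refine ⟨h1, fun x hx => (h2 x hx).1.hasDerivAt, fun x hx => ?_, h4⟩
  have hp : HasDerivAt (fun t : ℝ => 1 - t ^ 2) (-(2 * x)) x := by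
    refine ((hasDerivAt_pow 2 x).const_sub 1).congr_deriv ?_
    simp
  refine (hp.mul (h2 x hx).2.hasDerivAt).congr_deriv ?_
  have := h3 x hx
  linarith

lemma ZS.reflect {c χ : ℝ} {ψ ψ1 : ℝ → ℝ} (h : ZS c χ ψ ψ1) :
    ZS c χ (fun x => ψ (-x)) (fun x => -ψ1 (-x)) := by
  refine ⟨?_, ?_, ?_, ?_⟩
  · apply h.cont.comp continuousOn_neg
    intro x hx
    simp only [Set.mem_Icc] at *
    constructor <;> linarith
  · intro x hx
    have hx' : -x ∈ Set.Ioo (-1 : ℝ) 1 := by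
      simp only [Set.mem_Ioo] at *
      constructor <;> linarith
    exact ((h.d1 (-x) hx').comp x (hasDerivAt_neg x)).congr_deriv (by simp)
  · intro x hx
    have hx' : -x ∈ Set.Ioo (-1 : ℝ) 1 := by
      simp only [Set.mem_Ioo] at *
      constructor <;> linarith
    have := ((h.d2 (-x) hx').comp x (hasDerivAt_neg x)).neg
    refine (this.congr_of_eventuallyEq ?_).congr_deriv (by simp)
    filter_upwards with t
    simp
  · have := h.fin.image (fun x => -x)
    apply this.subset
    rintro x ⟨hx, hx0⟩
    refine ⟨-x, ⟨?_, hx0⟩, by simp⟩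
    simp only [Set.mem_Ioo] at *
    constructor <;> linarith

lemma ZS.neg {c χ : ℝ} {ψ ψ1 : ℝ → ℝ} (h : ZS c χ ψ ψ1) :
    ZS c χ (fun x => -ψ x) (fun x => -ψ1 x) := by
  refine ⟨h.cont.neg, fun x hx => (h.d1 x hx).neg, fun x hx => ?_, ?_⟩
  · refine ((h.d2 x hx).neg.congr_of_eventuallyEq ?_).congr_deriv (by ring)
    filter_upwards with t
    simp
  · simpa using h.fin

lemma ZS.d1' {c χ : ℝ} {ψ ψ1 : ℝ → ℝ} (h : ZS c χ ψ ψ1) {x : ℝ} (hx : x ∈ Set.Ioo (-1 : ℝ) 1) :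
    HasDerivAt ψ1 ((2 * x * ψ1 x - (χ - c ^ 2 * x ^ 2) * ψ x) / (1 - x ^ 2)) x := by
  have hpx : ∀ y ∈ Set.Ioo (-1 : ℝ) 1, 0 < 1 - y ^ 2 := by
    rintro y ⟨h1, h2⟩; nlinarith
  have hp : HasDerivAt (fun t : ℝ => 1 - t ^ 2) (-(2 * x)) x := by
    refine ((hasDerivAt_pow 2 x).const_sub 1).congr_deriv ?_
    simp
  have h0 := (hpx x hx).ne'
  refine (((h.d2 x hx).div hp h0).congr_of_eventuallyEq ?_).congr_deriv ?_
  · filter_upwards [Ioo_mem_nhds hx.1 hx.2] with y hy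
    have := (hpx y hy).ne'
    simp only [Pi.div_apply]
    field_simp
  · field_simp
    ring

/-- one-sided bound for the flux near `1` -/
lemma ZS.flux_le {c χ : ℝ} {ψ ψ1 : ℝ → ℝ} (h : ZS c χ ψ ψ1) {x0 K : ℝ} (hx0 : -1 < x0) (hK0 : 0 ≤ K)
    (hK : ∀ t ∈ Set.Ioo x0 1, (χ - c ^ 2 * t ^ 2) * ψ t ≤ K) {t0 : ℝ} (ht : t0 ∈ Set.Ioo x0 1) :
    (1 - t0 ^ 2) * ψ1 t0 ≤ K * (1 - t0) := by
  by_contra hlt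
  push Not at hlt
  set η := (1 - t0 ^ 2) * ψ1 t0 - K * (1 - t0) with hη
  have hη0 : 0 < η := by linarith
  have hsub : ∀ t ∈ Set.Ico t0 1, t ∈ Set.Ioo (-1 : ℝ) 1 := fun t ht' =>
    ⟨by linarith [ht.1, ht'.1], ht'.2⟩
  have hm1 : MonotoneOn (fun t => (1 - t ^ 2) * ψ1 t + K * t) (Set.Ico t0 1) := by
    have hd : ∀ t ∈ Set.Ico t0 1, HasDerivAt (fun t => (1 - t ^ 2) * ψ1 t + K * t)
        (-((χ - c ^ 2 * t ^ 2) * ψ t) + K * 1) t := fun t ht' =>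
      (h.d2 t (hsub t ht')).add ((hasDerivAt_id t).const_mul K)
    apply monotoneOn_of_deriv_nonneg (convex_Ico _ _)
    · exact fun t ht' => (hd t ht').continuousAt.continuousWithinAt
    · intro t ht'
      exact (hd t (interior_subset ht')).differentiableAt.differentiableWithinAt
    · intro t ht'
      rw [interior_Ico] at ht'
      rw [(hd t ⟨ht'.1.le, ht'.2⟩).deriv]
      have := hK t ⟨by linarith [ht.1, ht'.1], ht'.2⟩
      linarith
  have hF : ∀ t ∈ Set.Ico t0 1, η ≤ (1 - t ^ 2) * ψ1 t := by
    intro t ht'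
    have hmm := hm1 ⟨le_rfl, ht.2⟩ ht' ht'.1
    simp only at hmm
    nlinarith [ht'.2]
  have hm2 : MonotoneOn (fun t => ψ t + (η / 2) * Real.log (1 - t)) (Set.Ico t0 1) := by
    have hd : ∀ t ∈ Set.Ico t0 1, HasDerivAt (fun t => ψ t + (η / 2) * Real.log (1 - t))
        (ψ1 t + (η / 2) * (-1 / (1 - t))) t := fun t ht' =>
      (h.d1 t (hsub t ht')).add ((((hasDerivAt_id t).const_sub 1).log (by
        simp only [id]; linarith [ht'.2])).const_mul _)
    apply monotoneOn_of_deriv_nonneg (convex_Ico _ _)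
    · exact fun t ht' => (hd t ht').continuousAt.continuousWithinAt
    · intro t ht'
      exact (hd t (interior_subset ht')).differentiableAt.differentiableWithinAt
    · intro t ht'
      have ht'' := interior_subset ht'
      rw [(hd t ht'').deriv]
      have h1 := hF t ht''
      have h2 : 0 < 1 - t := by linarith [ht''.2]
      have h3 : 0 < 1 + t := by linarith [(hsub t ht'').1]
      have h4 : ψ1 t + (η / 2) * (-1 / (1 - t)) = (2 * (1 - t) * ψ1 t - η) / (2 * (1 - t)) := by
        field_simp; ring
      rw [h4]
      apply div_nonneg _ (by positivity)
      have h5 : 0 < ψ1 t := by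
        by_contra h6
        push Not at h6
        nlinarith [mul_pos h2 h3]
      nlinarith [mul_pos h2 h5, ht''.2]
  obtain ⟨M, hM⟩ := isCompact_Icc.exists_bound_of_continuousOn h.cont
  have hlim : Filter.Tendsto (fun t : ℝ => Real.log (1 - t)) (nhdsWithin 1 (Set.Iio 1)) Filter.atBot := by
    apply Real.tendsto_log_nhdsGT_zero.comp
    apply tendsto_nhdsWithin_of_tendsto_nhds_of_eventually_within
    · have : Filter.Tendsto (fun t : ℝ => 1 - t) (nhds 1) (nhds (1 - 1)) := by
        apply Continuous.tendsto; fun_prop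
      rw [sub_self] at this
      exact this.mono_left nhdsWithin_le_nhds
    · filter_upwards [self_mem_nhdsWithin] with t ht
      simpa using ht
  have hev := hlim.eventually (Filter.eventually_lt_atBot ((ψ t0 + (η / 2) * Real.log (1 - t0) - M) / (η / 2)))
  have hev2 : ∀ᶠ t in nhdsWithin (1:ℝ) (Set.Iio 1), t ∈ Set.Ioo t0 1 := Ioo_mem_nhdsLT ht.2
  obtain ⟨t, h1, h2⟩ := (hev.and hev2).exists
  rw [lt_div_iff₀ (by positivity)] at h1
  have h3 := hm2 ⟨le_rfl, ht.2⟩ ⟨h2.1.le, h2.2⟩ h2.1.le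
  have h4 := hM t ⟨by linarith [ht.1, h2.1], h2.2.le⟩
  rw [Real.norm_eq_abs] at h4
  have := (abs_le.mp h4).2
  simp only at h3
  linarith

lemma ZS.flux_abs {c χ : ℝ} {ψ ψ1 : ℝ → ℝ} (h : ZS c χ ψ ψ1) {x0 K : ℝ} (hx0 : -1 < x0)
    (hK : ∀ t ∈ Set.Ioo x0 1, |(χ - c ^ 2 * t ^ 2) * ψ t| ≤ K) {t0 : ℝ} (ht : t0 ∈ Set.Ioo x0 1) :
    |(1 - t0 ^ 2) * ψ1 t0| ≤ K * (1 - t0) := by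
  have hK0 : 0 ≤ K := (abs_nonneg _).trans (hK t0 ht)
  rw [abs_le]
  constructor
  · have := h.neg.flux_le hx0 (K := K) hK0 (fun t ht => by
      have := (abs_le.mp (hK t ht)).1
      linarith) ht
    linarith
  · exact h.flux_le hx0 hK0 (fun t ht => (abs_le.mp (hK t ht)).2) ht

lemma ZS.r_bound {c χ t : ℝ} (ht : t ∈ Set.Icc (-1 : ℝ) 1) :
    |χ - c ^ 2 * t ^ 2| ≤ |χ| + c ^ 2 := by
  have : t ^ 2 ≤ 1 := by nlinarith [ht.1, ht.2]
  calc _ ≤ |χ| + |c ^ 2 * t ^ 2| := abs_sub _ _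
    _ ≤ _ := by
      rw [abs_of_nonneg (show 0 ≤ c ^ 2 * t ^ 2 by positivity)]
      nlinarith [sq_nonneg c]

lemma ZS.deriv_bound {c χ : ℝ} {ψ ψ1 : ℝ → ℝ} (h : ZS c χ ψ ψ1) {x0 M : ℝ} (hx0 : 0 ≤ x0)
    (hM : ∀ t ∈ Set.Icc x0 1, |ψ t| ≤ M) {t : ℝ} (ht : t ∈ Set.Ioo x0 1) :
    |ψ1 t| ≤ (|χ| + c ^ 2) * M := by
  have h1 := h.flux_abs (x0 := x0) (K := (|χ| + c ^ 2) * M) (by linarith) (fun t ht => by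
    rw [abs_mul]
    exact mul_le_mul (ZS.r_bound ⟨by linarith [ht.1], ht.2.le⟩) (hM t ⟨ht.1.le, ht.2.le⟩) (abs_nonneg _)
      (by positivity)) ht
  have h2 : 0 < 1 - t := by linarith [ht.2]
  have h3 : 0 < t := by linarith [ht.1]
  rw [abs_mul, show 1 - t ^ 2 = (1 - t) * (1 + t) by ring, abs_of_pos (by positivity)] at h1
  have h4 := abs_nonneg (ψ1 t)
  nlinarith [mul_nonneg (mul_pos h2 h3).le h4]

/-- no zero interval -/
lemma ZS.not_zero_on {c χ : ℝ} {ψ ψ1 : ℝ → ℝ} (h : ZS c χ ψ ψ1) {x0 x1 : ℝ} (h0 : -1 < x0)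
    (h01 : x0 < x1) (h1 : x1 ≤ 1)
    (H : ∀ M, (∀ t ∈ Set.Icc x0 x1, |ψ t| ≤ M) → ∀ t ∈ Set.Icc x0 x1, |ψ t| ≤ M / 2) : False := by
  have hc : ContinuousOn (fun t => |ψ t|) (Set.Icc x0 x1) :=
    (h.cont.mono (Set.Icc_subset_Icc h0.le h1)).abs
  obtain ⟨y, hy, hmax⟩ := isCompact_Icc.exists_isMaxOn (Set.nonempty_Icc.mpr h01.le) hc
  have h2 := H _ (fun t ht => hmax ht) y hy
  have h3 : |ψ y| ≤ 0 := by linarith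
  have hz : ∀ t ∈ Set.Ioo x0 x1, t ∈ {x | x ∈ Set.Ioo (-1 : ℝ) 1 ∧ ψ x = 0} := by
    intro t ht
    refine ⟨⟨by linarith [ht.1], by linarith [ht.2]⟩, ?_⟩
    have : |ψ t| ≤ |ψ y| := hmax ⟨ht.1.le, ht.2.le⟩
    exact abs_eq_zero.mp (le_antisymm (this.trans h3) (abs_nonneg _))
  exact (Set.Ioo_infinite h01) (h.fin.subset hz)

lemma ZS.one_ne {c χ : ℝ} {ψ ψ1 : ℝ → ℝ} (h : ZS c χ ψ ψ1) : ψ 1 ≠ 0 := by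
  intro h1
  set R := |χ| + c ^ 2 with hR
  have hR0 : 0 ≤ R := by positivity
  set ε := 1 / (2 * (R + 1)) with hε
  have hε0 : 0 < ε := by positivity
  have hε1 : ε ≤ 1 / 2 := by
    rw [hε]; apply one_div_le_one_div_of_le <;> linarith
  have hεR : R * ε ≤ 1 / 2 := by
    rw [hε, mul_one_div, div_le_iff₀ (by positivity)]; linarith
  apply h.not_zero_on (x0 := 1 - ε) (x1 := 1) (by linarith) (by linarith) le_rfl
  intro M hM t ht
  have hM0 : 0 ≤ M := (abs_nonneg _).trans (hM t ht)
  rcases ht.2.eq_or_lt with hh | hh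
  · rw [hh, h1, abs_zero]; linarith
  obtain ⟨y, hy, hy2⟩ := exists_hasDerivAt_eq_slope ψ ψ1 hh (h.cont.mono (Set.Icc_subset_Icc (by linarith [ht.1]) le_rfl))
    (fun x hx => h.d1 x ⟨by linarith [ht.1, hx.1], hx.2⟩)
  have h3 := h.deriv_bound (x0 := 1 - ε) (by linarith) hM (t := y) ⟨by linarith [ht.1, hy.1], hy.2⟩
  have h4 : ψ t = - (ψ1 y * (1 - t)) := by
    rw [hy2, h1]; field_simp [show (1 - t) ≠ 0 by linarith]; ring
  have h5 : 0 < 1 - t := by linarith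
  rw [h4, abs_neg, abs_mul, abs_of_pos h5]
  calc |ψ1 y| * (1 - t) ≤ (R * M) * ε := by
        apply mul_le_mul h3 (by linarith [ht.1]) h5.le (by positivity)
    _ = (R * ε) * M := by ring
    _ ≤ 1 / 2 * M := by gcongr
    _ = _ := by ring

lemma ZS.simple {c χ : ℝ} {ψ ψ1 : ℝ → ℝ} (h : ZS c χ ψ ψ1) {z : ℝ} (hz : z ∈ Set.Ioo (-1 : ℝ) 1)
    (h1 : ψ z = 0) : ψ1 z ≠ 0 := by
  intro h2
  set R := |χ| + c ^ 2 with hR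
  have hR0 : 0 ≤ R := by positivity
  set κ := (1 - z) * ((1 + z) / 2) with hκ
  have hz1 := hz.1
  have hz2 := hz.2
  have hκ0 : 0 < κ := mul_pos (by linarith) (by linarith)
  set ε := min ((1 + z) / 2) (min 1 (κ / (2 * (R + 1)))) with hε
  have hε0 : 0 < ε := lt_min (by linarith) (lt_min one_pos (by positivity))
  have hεa : ε ≤ (1 + z) / 2 := min_le_left _ _
  have hεb : ε ≤ 1 := (min_le_right _ _).trans (min_le_left _ _)
  have hεc : ε ≤ κ / (2 * (R + 1)) := (min_le_right _ _).trans (min_le_right _ _)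
  have hεR : R / κ * ε ≤ 1 / 2 := by
    calc R / κ * ε ≤ R / κ * (κ / (2 * (R + 1))) := by gcongr
      _ = R / (2 * (R + 1)) := by field_simp
      _ ≤ _ := by rw [div_le_iff₀ (by positivity)]; linarith
  apply h.not_zero_on (x0 := z - ε) (x1 := z) (by linarith) (by linarith) hz2.le
  intro M hM t ht
  have hM0 : 0 ≤ M := (abs_nonneg _).trans (hM t ht)
  have hin : ∀ x ∈ Set.Icc (z - ε) z, x ∈ Set.Ioo (-1 : ℝ) 1 := fun x hx =>
    ⟨by linarith [hx.1], by linarith [hx.2]⟩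
  have hFb : ∀ x ∈ Set.Icc (z - ε) z, |(1 - x ^ 2) * ψ1 x| ≤ R * M := by
    intro x hx
    have := Convex.norm_image_sub_le_of_norm_hasDerivWithin_le (C := R * M)
      (f := fun t => (1 - t ^ 2) * ψ1 t) (f' := fun x => -((χ - c ^ 2 * x ^ 2) * ψ x))
      (s := Set.Icc (z - ε) z) (x := z) (y := x)
      (fun y hy => (h.d2 y (hin y hy)).hasDerivWithinAt) (fun y hy => by
        rw [Real.norm_eq_abs, abs_neg, abs_mul]
        exact mul_le_mul (ZS.r_bound (Set.Ioo_subset_Icc_self (hin y hy))) (hM y hy) (abs_nonneg _) hR0)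
      (convex_Icc _ _) ⟨by linarith, le_rfl⟩ hx
    rw [h2, mul_zero, sub_zero, Real.norm_eq_abs, Real.norm_eq_abs] at this
    refine this.trans ?_
    have : |x - z| ≤ 1 := by rw [abs_le]; constructor <;> linarith [hx.1, hx.2]
    calc R * M * |x - z| ≤ R * M * 1 := by gcongr
      _ = _ := by ring
  have hdb : ∀ x ∈ Set.Icc (z - ε) z, |ψ1 x| ≤ R * M / κ := by
    intro x hx
    have h3 := hFb x hx
    rw [le_div_iff₀ hκ0]
    have h4 : κ ≤ 1 - x ^ 2 := by
      rw [show 1 - x ^ 2 = (1 - x) * (1 + x) by ring]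
      apply mul_le_mul <;> linarith [hx.1, hx.2]
    rw [abs_mul, abs_of_pos (by linarith)] at h3
    nlinarith [abs_nonneg (ψ1 x)]
  have := Convex.norm_image_sub_le_of_norm_hasDerivWithin_le (C := R * M / κ)
      (f := ψ) (f' := ψ1)
      (s := Set.Icc (z - ε) z) (x := z) (y := t)
      (fun y hy => (h.d1 y (hin y hy)).hasDerivWithinAt) (fun y hy => hdb y hy)
      (convex_Icc _ _) ⟨by linarith, le_rfl⟩ ht
  rw [h1, sub_zero, Real.norm_eq_abs, Real.norm_eq_abs] at this
  refine this.trans ?_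
  have h6 : |t - z| ≤ ε := by rw [abs_le]; constructor <;> linarith [ht.1, ht.2]
  calc R * M / κ * |t - z| ≤ R * M / κ * ε := by gcongr
    _ = (R / κ * ε) * M := by ring
    _ ≤ 1 / 2 * M := by gcongr
    _ = _ := by ring

/-- Riccati data attached to a solution. -/
structure Ric (ψ ψ1 q s a f g ρ : ℝ → ℝ) : Prop where
  qpos : ∀ t ∈ Set.Ioo (-1 : ℝ) 1, 0 < q t
  qc : ∀ t ∈ Set.Ioo (-1 : ℝ) 1, ContinuousAt q t
  sd : ∀ t ∈ Set.Ioo (-1 : ℝ) 1, HasDerivAt s (f t) t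
  ad : ∀ t ∈ Set.Ioo (-1 : ℝ) 1, HasDerivAt a (g t) t
  fnn : ∀ t ∈ Set.Ioo (-1 : ℝ) 1, 0 ≤ f t
  gnn : ∀ t ∈ Set.Ioo (-1 : ℝ) 1, 0 ≤ g t
  zd : ∀ t ∈ Set.Ioo (-1 : ℝ) 1, ψ t ≠ 0 → HasDerivAt (fun t => q t * ψ1 t / ψ t)
    (f t * (2 * a t * (q t * ψ1 t / ψ t) - ρ t - (q t * ψ1 t / ψ t) ^ 2)) t

noncomputable def RicH (z s a : ℝ → ℝ) (t : ℝ) : ℝ :=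
  -Real.arctan (z t) - s t - a t * (z t ^ 2 / (1 + z t ^ 2))

lemma RicH_hasDerivAt {z s a : ℝ → ℝ} {t f g ρ : ℝ} (hs : HasDerivAt s f t) (ha : HasDerivAt a g t)
    (hz : HasDerivAt z (f * (2 * a t * z t - ρ - z t ^ 2)) t) :
    HasDerivAt (RicH z s a) (-(f * (4 * a t ^ 2 * z t ^ 2 / (1 + z t ^ 2) ^ 2)
      + g * (z t ^ 2 / (1 + z t ^ 2))
      + f * ((1 - ρ) * (1 + z t ^ 2 + 2 * a t * z t) / (1 + z t ^ 2) ^ 2))) t := by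
  have hp : 0 < 1 + z t ^ 2 := by positivity
  have h1 := (hz.arctan.neg.sub hs).sub (ha.mul ((hz.pow 2).div ((hz.pow 2).const_add 1) hp.ne'))
  refine h1.congr_deriv ?_
  simp only [Pi.pow_apply, Pi.div_apply]
  push_cast
  generalize z t = w at *
  generalize a t = b at *
  field_simp
  ring

lemma tendsto_sq_ratio {l : Filter ℝ} {z : ℝ → ℝ} (hz : Filter.Tendsto (fun t => z t ^ 2) l Filter.atTop) :
    Filter.Tendsto (fun t => z t ^ 2 / (1 + z t ^ 2)) l (nhds 1) := by
  have h1 : Filter.Tendsto (fun t => 1 - (1 + z t ^ 2)⁻¹) l (nhds (1 - 0)) := by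
    apply Filter.Tendsto.sub tendsto_const_nhds
    apply Filter.Tendsto.inv_tendsto_atTop
    exact Filter.tendsto_atTop_add_const_left _ _ hz
  rw [sub_zero] at h1
  refine h1.congr (fun t => ?_)
  have : 0 < 1 + z t ^ 2 := by positivity
  field_simp
  ring

lemma RicH_tendsto_top {l : Filter ℝ} {z s a : ℝ → ℝ} {s0 a0 : ℝ} (hz : Filter.Tendsto z l Filter.atTop)
    (hs : Filter.Tendsto s l (nhds s0)) (ha : Filter.Tendsto a l (nhds a0)) :
    Filter.Tendsto (RicH z s a) l (nhds (-(π / 2) - s0 - a0)) := by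
  have h1 := ((Real.tendsto_arctan_atTop.mono_right nhdsWithin_le_nhds).comp hz).neg
  have h2 := tendsto_sq_ratio ((Filter.tendsto_pow_atTop (two_ne_zero)).comp hz)
  have := (h1.sub hs).sub (ha.mul h2)
  rw [mul_one] at this
  exact this

lemma RicH_tendsto_bot {l : Filter ℝ} {z s a : ℝ → ℝ} {s0 a0 : ℝ} (hz : Filter.Tendsto z l Filter.atBot)
    (hs : Filter.Tendsto s l (nhds s0)) (ha : Filter.Tendsto a l (nhds a0)) :
    Filter.Tendsto (RicH z s a) l (nhds (π / 2 - s0 - a0)) := by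
  have h1 := ((Real.tendsto_arctan_atBot.mono_right nhdsWithin_le_nhds).comp hz).neg
  have h2 := tendsto_sq_ratio (z := z) (l := l) (by
    have := (Filter.tendsto_pow_atTop (two_ne_zero)).comp (Filter.tendsto_neg_atBot_atTop.comp hz)
    refine this.congr (fun t => ?_)
    simp)
  have := (h1.sub hs).sub (ha.mul h2)
  rw [mul_one, neg_neg] at this
  exact this

section
variable {c χ : ℝ} {ψ ψ1 q s a f g ρ : ℝ → ℝ}

lemma Ric.z_lim (h : ZS c χ ψ ψ1) (R : Ric ψ ψ1 q s a f g ρ) {t0 : ℝ}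
    (ht : t0 ∈ Set.Ioo (-1 : ℝ) 1) (h0 : ψ t0 = 0) :
    Filter.Tendsto (fun t => (q t * ψ1 t) / slope ψ t0 t) (nhdsWithin t0 {t0}ᶜ) (nhds (q t0)) := by
  have h1 : Filter.Tendsto (slope ψ t0) (nhdsWithin t0 {t0}ᶜ) (nhds (ψ1 t0)) :=
    hasDerivAt_iff_tendsto_slope.mp (h.d1 t0 ht)
  have h2 : Filter.Tendsto (fun t => q t * ψ1 t) (nhdsWithin t0 {t0}ᶜ) (nhds (q t0 * ψ1 t0)) :=
    ((R.qc t0 ht).mul (h.d1' ht).continuousAt).tendsto.mono_left nhdsWithin_le_nhds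
  have h3 := h2.div h1 (h.simple ht h0)
  rwa [mul_div_cancel_right₀ _ (h.simple ht h0)] at h3

lemma Ric.z_top (h : ZS c χ ψ ψ1) (R : Ric ψ ψ1 q s a f g ρ) {t0 : ℝ}
    (ht : t0 ∈ Set.Ioo (-1 : ℝ) 1) (h0 : ψ t0 = 0) :
    Filter.Tendsto (fun t => q t * ψ1 t / ψ t) (nhdsWithin t0 (Set.Ioi t0)) Filter.atTop := by
  have h1 := (R.z_lim h ht h0).mono_left (nhdsWithin_mono t0 (fun x (hx : t0 < x) => hx.ne'))
  have h2 : Filter.Tendsto (fun t => (t - t0)⁻¹) (nhdsWithin t0 (Set.Ioi t0)) Filter.atTop := by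
    apply Filter.Tendsto.inv_tendsto_nhdsGT_zero
    apply tendsto_nhdsWithin_of_tendsto_nhds_of_eventually_within
    · have : Filter.Tendsto (fun t : ℝ => t - t0) (nhds t0) (nhds (t0 - t0)) := by
        apply Continuous.tendsto; fun_prop
      rw [sub_self] at this
      exact this.mono_left nhdsWithin_le_nhds
    · filter_upwards [self_mem_nhdsWithin] with t ht
      simpa using ht
  refine (h1.pos_mul_atTop (R.qpos t0 ht) h2).congr' ?_
  filter_upwards [self_mem_nhdsWithin] with t ht
  have h3 : t - t0 ≠ 0 := sub_ne_zero.mpr (ne_of_gt ht)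
  rw [slope_def_field, h0, sub_zero]
  by_cases h4 : ψ t = 0
  · simp [h4]
  · field_simp

lemma Ric.z_bot (h : ZS c χ ψ ψ1) (R : Ric ψ ψ1 q s a f g ρ) {t0 : ℝ}
    (ht : t0 ∈ Set.Ioo (-1 : ℝ) 1) (h0 : ψ t0 = 0) :
    Filter.Tendsto (fun t => q t * ψ1 t / ψ t) (nhdsWithin t0 (Set.Iio t0)) Filter.atBot := by
  have h1 := (R.z_lim h ht h0).mono_left (nhdsWithin_mono t0 (fun x (hx : x < t0) => hx.ne))
  have h2 : Filter.Tendsto (fun t => (t - t0)⁻¹) (nhdsWithin t0 (Set.Iio t0)) Filter.atBot := by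
    apply Filter.Tendsto.inv_tendsto_nhdsLT_zero
    apply tendsto_nhdsWithin_of_tendsto_nhds_of_eventually_within
    · have : Filter.Tendsto (fun t : ℝ => t - t0) (nhds t0) (nhds (t0 - t0)) := by
        apply Continuous.tendsto; fun_prop
      rw [sub_self] at this
      exact this.mono_left nhdsWithin_le_nhds
    · filter_upwards [self_mem_nhdsWithin] with t ht
      simpa using ht
  refine (h1.pos_mul_atBot (R.qpos t0 ht) h2).congr' ?_
  filter_upwards [self_mem_nhdsWithin] with t ht
  have h3 : t - t0 ≠ 0 := sub_ne_zero.mpr (ne_of_lt ht)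
  rw [slope_def_field, h0, sub_zero]
  by_cases h4 : ψ t = 0
  · simp [h4]
  · field_simp

lemma Ric.half (h : ZS c χ ψ ψ1) (R : Ric ψ ψ1 q s a f g ρ) {t0 β L : ℝ}
    (ht : t0 ∈ Set.Ioo (-1 : ℝ) 1) (h0 : ψ t0 = 0) (hβ : t0 < β) (hβ1 : β ≤ 1)
    (hnz : ∀ t ∈ Set.Ioo t0 β, ψ t ≠ 0)
    (hcond : ∀ t ∈ Set.Ioo t0 β, 0 ≤ (1 - ρ t) *
      (1 + (q t * ψ1 t / ψ t) ^ 2 + 2 * a t * (q t * ψ1 t / ψ t)))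
    (hL : Filter.Tendsto (RicH (fun t => q t * ψ1 t / ψ t) s a) (nhdsWithin β (Set.Iio β)) (nhds L)) :
    L ≤ -(π / 2) - s t0 - a t0 := by
  have hin : ∀ t ∈ Set.Ioo t0 β, t ∈ Set.Ioo (-1 : ℝ) 1 := fun t ht' =>
    ⟨by linarith [ht.1, ht'.1], by linarith [ht'.2]⟩
  set H := RicH (fun t => q t * ψ1 t / ψ t) s a with hH
  have hd := fun t (ht' : t ∈ Set.Ioo t0 β) => RicH_hasDerivAt (R.sd t (hin t ht')) (R.ad t (hin t ht'))
    (R.zd t (hin t ht') (hnz t ht'))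
  have hanti : AntitoneOn H (Set.Ioo t0 β) := by
    apply antitoneOn_of_deriv_nonpos (convex_Ioo _ _)
    · exact fun t ht' => (hd t ht').continuousAt.continuousWithinAt
    · intro t ht'
      exact (hd t (interior_subset ht')).differentiableAt.differentiableWithinAt
    · intro t ht'
      have ht'' := interior_subset ht'
      rw [(hd t ht'').deriv, neg_nonpos]
      have a1 := R.fnn t (hin t ht'')
      have a2 := R.gnn t (hin t ht'')
      have a3 := hcond t ht''
      have a4 : 0 ≤ (1 - ρ t) *
        (1 + (q t * ψ1 t / ψ t) ^ 2 + 2 * a t * (q t * ψ1 t / ψ t)) / (1 + (q t * ψ1 t / ψ t) ^ 2) ^ 2 :=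
        div_nonneg a3 (by positivity)
      have a5 := mul_nonneg a1 a4
      refine add_nonneg (by positivity) a5
  have hl1 : Filter.Tendsto H (nhdsWithin t0 (Set.Ioi t0)) (nhds (-(π / 2) - s t0 - a t0)) :=
    RicH_tendsto_top (R.z_top h ht h0)
      ((R.sd t0 ht).continuousAt.tendsto.mono_left nhdsWithin_le_nhds)
      ((R.ad t0 ht).continuousAt.tendsto.mono_left nhdsWithin_le_nhds)
  have hle : ∀ x ∈ Set.Ioo t0 β, H x ≤ -(π / 2) - s t0 - a t0 := by
    intro x hx
    apply ge_of_tendsto hl1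
    filter_upwards [Ioo_mem_nhdsGT hx.1] with y hy
    exact hanti ⟨hy.1, hy.2.trans hx.2⟩ hx hy.2.le
  apply le_of_tendsto hL
  filter_upwards [Ioo_mem_nhdsLT hβ] with x hx
  exact hle x hx

lemma Ric.consec (h : ZS c χ ψ ψ1) (R : Ric ψ ψ1 q s a f g ρ) {t0 β : ℝ}
    (ht : t0 ∈ Set.Ioo (-1 : ℝ) 1) (h0 : ψ t0 = 0) (hβ : t0 < β) (hβ1 : β ∈ Set.Ioo (-1 : ℝ) 1)
    (hβ0 : ψ β = 0) (hnz : ∀ t ∈ Set.Ioo t0 β, ψ t ≠ 0)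
    (hcond : ∀ t ∈ Set.Ioo t0 β, 0 ≤ (1 - ρ t) *
      (1 + (q t * ψ1 t / ψ t) ^ 2 + 2 * a t * (q t * ψ1 t / ψ t))) :
    (s t0 + a t0) + π ≤ s β + a β := by
  have := R.half h ht h0 hβ hβ1.2.le hnz hcond (RicH_tendsto_bot (R.z_bot h hβ1 hβ0)
      ((R.sd β hβ1).continuousAt.tendsto.mono_left nhdsWithin_le_nhds)
      ((R.ad β hβ1).continuousAt.tendsto.mono_left nhdsWithin_le_nhds))
  linarith

end

lemma count_aux (b : ℝ → ℝ) (Z : Finset ℝ) :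
    (∀ t ∈ Z, ∀ t' ∈ Z, t < t' → (∀ u ∈ Z, ¬ (t < u ∧ u < t')) → b t + π ≤ b t') → Z.Nonempty →
    ∃ u ∈ Z, ∃ v ∈ Z, (∀ w ∈ Z, u ≤ w ∧ w ≤ v) ∧ b u + ((Z.card : ℝ) - 1) * π ≤ b v := by
  induction Z using Finset.induction_on_max with
  | empty => intro _ h; exact absurd h (by simp)
  | insert x Z hx ih =>
    intro H _
    rcases Z.eq_empty_or_nonempty with hZ | hZ
    · subst hZ
      exact ⟨x, by simp, x, by simp, by simp, by simp⟩
    · obtain ⟨u, hu, v, hv, hw, hb⟩ := ih (fun t ht t' ht' htt hno =>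
        H t (by simp [ht]) t' (by simp [ht']) htt (fun w hw => by
          rw [Finset.mem_insert] at hw
          rcases hw with rfl | hw
          · exact fun h => absurd (hx t' ht') (by linarith [h.2])
          · exact hno w hw)) hZ
      refine ⟨u, by simp [hu], x, by simp, ?_, ?_⟩
      · intro w hw'
        rw [Finset.mem_insert] at hw'
        rcases hw' with rfl | hw'
        · exact ⟨(hx u hu).le, le_rfl⟩
        · exact ⟨(hw w hw').1, (hx w hw').le⟩
      · have h1 := H v (by simp [hv]) x (by simp) (hx v hv) (fun w hw' => by
          rw [Finset.mem_insert] at hw'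
          rcases hw' with rfl | hw'
          · exact fun h => lt_irrefl _ h.2
          · exact fun h => absurd h.1 (not_lt.mpr (hw w hw').2))
        rw [Finset.card_insert_of_notMem (fun h => lt_irrefl _ (hx x h))]
        push_cast
        linarith

lemma count_zeros {ψ : ℝ → ℝ} {n : ℕ} {b : ℝ → ℝ} {S : ℝ}
    (hfin : {x | x ∈ Set.Ioo (-1 : ℝ) 1 ∧ ψ x = 0}.Finite)
    (hcard : {x | x ∈ Set.Ioo (-1 : ℝ) 1 ∧ ψ x = 0}.ncard = n) (hn : 0 < n)
    (Hc : ∀ t ∈ Set.Ioo (-1 : ℝ) 1, ψ t = 0 → ∀ t' ∈ Set.Ioo (-1 : ℝ) 1, ψ t' = 0 → t < t' →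
      (∀ u ∈ Set.Ioo t t', ψ u ≠ 0) → b t + π ≤ b t')
    (Hl : ∀ t ∈ Set.Ioo (-1 : ℝ) 1, ψ t = 0 → (∀ u ∈ Set.Ioo t 1, ψ u ≠ 0) → b t ≤ S - π / 2)
    (Hf : ∀ t ∈ Set.Ioo (-1 : ℝ) 1, ψ t = 0 → (∀ u ∈ Set.Ioo (-1) t, ψ u ≠ 0) → π / 2 - S ≤ b t) :
    n * π ≤ 2 * S := by
  have hmem : ∀ x, x ∈ hfin.toFinset ↔ x ∈ Set.Ioo (-1 : ℝ) 1 ∧ ψ x = 0 := fun x => by simp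
  rw [Set.ncard_eq_toFinset_card _ hfin] at hcard
  obtain ⟨u, hu, v, hv, hw, hb⟩ := count_aux b hfin.toFinset (fun t ht t' ht' htt hno => by
    rw [hmem] at ht ht'
    refine Hc t ht.1 ht.2 t' ht'.1 ht'.2 htt (fun u hu hu0 => ?_)
    exact hno u ((hmem u).mpr ⟨⟨ht.1.1.trans hu.1, hu.2.trans ht'.1.2⟩, hu0⟩) hu)
    (Finset.card_pos.mp (by omega))
  rw [hmem] at hu hv
  have h1 := Hl v hv.1 hv.2 (fun w hw' hw0 => by
    have := (hw w ((hmem w).mpr ⟨⟨hv.1.1.trans hw'.1, hw'.2⟩, hw0⟩)).2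
    exact absurd hw'.1 (not_lt.mpr this))
  have h2 := Hf u hu.1 hu.2 (fun w hw' hw0 => by
    have := (hw w ((hmem w).mpr ⟨⟨hw'.1, hw'.2.trans hu.1.2⟩, hw0⟩)).1
    exact absurd hw'.2 (not_lt.mpr this))
  rw [hcard] at hb
  linarith

section
variable {c χ : ℝ} {ψ ψ1 : ℝ → ℝ}

noncomputable def qA (c χ t : ℝ) : ℝ := Real.sqrt ((1 - t ^ 2) / (χ - c ^ 2 * t ^ 2))
noncomputable def aA (c χ t : ℝ) : ℝ :=
  qA c χ t * (t * (1 / (1 - t ^ 2) + c ^ 2 / (χ - c ^ 2 * t ^ 2))) / 2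
noncomputable def sA (c χ t : ℝ) : ℝ :=
  ∫ θ in (0 : ℝ)..(Real.arcsin t), Real.sqrt (χ - c ^ 2 * Real.sin θ ^ 2)

lemma p_pos {t : ℝ} (ht : t ∈ Set.Ioo (-1 : ℝ) 1) : 0 < 1 - t ^ 2 := by
  nlinarith [ht.1, ht.2]

lemma r_pos (hχ : c ^ 2 < χ) {t : ℝ} (ht : t ∈ Set.Icc (-1 : ℝ) 1) : 0 < χ - c ^ 2 * t ^ 2 := by
  have : t ^ 2 ≤ 1 := by nlinarith [ht.1, ht.2]
  nlinarith [sq_nonneg c]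

lemma qA_hasDerivAt (hχ : c ^ 2 < χ) {t : ℝ} (ht : t ∈ Set.Ioo (-1 : ℝ) 1) :
    HasDerivAt (qA c χ) (qA c χ t * t * (c ^ 2 / (χ - c ^ 2 * t ^ 2) - 1 / (1 - t ^ 2))) t := by
  have hp := p_pos ht
  have hr := r_pos hχ (Set.Ioo_subset_Icc_self ht)
  have h1 : HasDerivAt (fun t : ℝ => 1 - t ^ 2) (-(2 * t)) t :=
    ((hasDerivAt_pow 2 t).const_sub 1).congr_deriv (by simp)
  have h2 : HasDerivAt (fun t : ℝ => χ - c ^ 2 * t ^ 2) (-(c ^ 2 * (2 * t))) t :=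
    (((hasDerivAt_pow 2 t).const_mul (c ^ 2)).const_sub χ).congr_deriv (by simp)
  have hq0 : 0 < (1 - t ^ 2) / (χ - c ^ 2 * t ^ 2) := by positivity
  refine ((h1.div h2 hr.ne').sqrt hq0.ne').congr_deriv ?_
  have hs := Real.sqrt_pos.mpr hq0
  have hs2 := Real.sq_sqrt hq0.le
  simp only [qA, Pi.div_apply]
  generalize √((1 - t ^ 2) / (χ - c ^ 2 * t ^ 2)) = w at *
  rw [div_eq_iff (by positivity)]
  have : w * t * (c ^ 2 / (χ - c ^ 2 * t ^ 2) - 1 / (1 - t ^ 2)) * (2 * w) =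
    2 * t * (c ^ 2 / (χ - c ^ 2 * t ^ 2) - 1 / (1 - t ^ 2)) * w ^ 2 := by ring
  rw [this, hs2]
  generalize χ - c ^ 2 * t ^ 2 = r at *
  field_simp
  ring

lemma fA_cont : Continuous (fun θ : ℝ => Real.sqrt (χ - c ^ 2 * Real.sin θ ^ 2)) := by fun_prop

lemma sA_hasDerivAt (hχ : c ^ 2 < χ) {t : ℝ} (ht : t ∈ Set.Ioo (-1 : ℝ) 1) :
    HasDerivAt (sA c χ) (1 / qA c χ t) t := by
  have hp := p_pos ht
  have hr := r_pos hχ (Set.Ioo_subset_Icc_self ht)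
  have h1 := (fA_cont (c := c) (χ := χ)).integral_hasStrictDerivAt 0 (Real.arcsin t)
  have h2 := h1.hasDerivAt.comp t (Real.hasDerivAt_arcsin ht.1.ne' ht.2.ne)
  refine h2.congr_deriv ?_
  rw [Real.sin_arcsin ht.1.le ht.2.le, qA, Real.sqrt_div hp.le]
  field_simp

lemma sA_cont : Continuous (sA c χ) := by
  have h1 : Continuous (fun u : ℝ => ∫ θ in (0 : ℝ)..u, Real.sqrt (χ - c ^ 2 * Real.sin θ ^ 2)) :=
    intervalIntegral.continuous_primitive (fun a b => fA_cont.intervalIntegrable a b) 0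
  exact h1.comp Real.continuous_arcsin

lemma sA_neg (t : ℝ) : sA c χ (-t) = - sA c χ t := by
  unfold sA
  rw [Real.arcsin_neg]
  have := intervalIntegral.integral_comp_neg (a := 0) (b := Real.arcsin t)
    (fun θ : ℝ => Real.sqrt (χ - c ^ 2 * Real.sin θ ^ 2))
  simp only [Real.sin_neg, neg_sq, neg_zero] at this
  rw [this, intervalIntegral.integral_symm]

lemma aA_neg (t : ℝ) : aA c χ (-t) = - aA c χ t := by
  unfold aA qA
  simp only [neg_sq]
  ring

lemma sA_one (hχ : 0 < χ) : sA c χ 1 = Real.sqrt χ * EI (c ^ 2 / χ) := by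
  unfold sA EI
  rw [Real.arcsin_one, ← intervalIntegral.integral_const_mul]
  congr 1
  ext θ
  rw [← Real.sqrt_mul hχ.le]
  congr 1
  field_simp

lemma aA_hasDerivAt (hχ : c ^ 2 < χ) {t : ℝ} (ht : t ∈ Set.Ioo (-1 : ℝ) 1) :
    HasDerivAt (aA c χ) (qA c χ t / 2 * (t ^ 2 * ((1 / (1 - t ^ 2)) ^ 2 + 3 * (c ^ 2 / (χ - c ^ 2 * t ^ 2)) ^ 2)
      + 1 / (1 - t ^ 2) + c ^ 2 / (χ - c ^ 2 * t ^ 2))) t := by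
  have hp := p_pos ht
  have hr := r_pos hχ (Set.Ioo_subset_Icc_self ht)
  have h1 : HasDerivAt (fun t : ℝ => 1 - t ^ 2) (-(2 * t)) t :=
    ((hasDerivAt_pow 2 t).const_sub 1).congr_deriv (by simp)
  have h2 : HasDerivAt (fun t : ℝ => χ - c ^ 2 * t ^ 2) (-(c ^ 2 * (2 * t))) t :=
    (((hasDerivAt_pow 2 t).const_mul (c ^ 2)).const_sub χ).congr_deriv (by simp)
  have h3 := ((hasDerivAt_const t (1:ℝ)).div h1 hp.ne').add ((hasDerivAt_const t (c ^ 2)).div h2 hr.ne')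
  have h4 := ((qA_hasDerivAt hχ ht).mul ((hasDerivAt_id t).mul h3)).div_const 2
  refine h4.congr_deriv ?_
  simp only [Pi.add_apply, Pi.mul_apply, Pi.div_apply, id]
  generalize qA c χ t = w at *
  generalize χ - c ^ 2 * t ^ 2 = r at *
  field_simp
  ring

lemma ricA (h : ZS c χ ψ ψ1) (hχ : c ^ 2 < χ) :
    Ric ψ ψ1 (qA c χ) (sA c χ) (aA c χ) (fun t => 1 / qA c χ t)
      (fun t => qA c χ t / 2 * (t ^ 2 * ((1 / (1 - t ^ 2)) ^ 2 + 3 * (c ^ 2 / (χ - c ^ 2 * t ^ 2)) ^ 2)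
      + 1 / (1 - t ^ 2) + c ^ 2 / (χ - c ^ 2 * t ^ 2))) (fun _ => 1) := by
  have hqp : ∀ t ∈ Set.Ioo (-1 : ℝ) 1, 0 < qA c χ t := fun t ht =>
    Real.sqrt_pos.mpr (div_pos (p_pos ht) (r_pos hχ (Set.Ioo_subset_Icc_self ht)))
  refine ⟨hqp, fun t ht => (qA_hasDerivAt hχ ht).continuousAt, fun t ht => sA_hasDerivAt hχ ht,
    fun t ht => aA_hasDerivAt hχ ht, ?_, ?_, ?_⟩
  · intro t ht
    have := hqp t ht
    positivity
  · intro t ht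
    have := hqp t ht
    have hp := p_pos ht
    have hr := r_pos hχ (Set.Ioo_subset_Icc_self ht)
    positivity
  · intro t ht h0
    have hq := hqp t ht
    have hp := p_pos ht
    have hr := r_pos hχ (Set.Ioo_subset_Icc_self ht)
    have h1 := ((qA_hasDerivAt hχ ht).mul (h.d1' ht)).div (h.d1 t ht) h0
    refine h1.congr_deriv ?_
    have hq2 : qA c χ t ^ 2 = (1 - t ^ 2) / (χ - c ^ 2 * t ^ 2) :=
      Real.sq_sqrt (div_pos hp hr).le
    have hr' : χ - c ^ 2 * t ^ 2 = (1 - t ^ 2) / qA c χ t ^ 2 := by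
      rw [hq2]; field_simp
    simp only [aA, Pi.mul_apply]
    rw [hr']
    generalize qA c χ t = w at *
    generalize ψ t = y at *
    generalize ψ1 t = y1 at *
    have hp' := hp.ne'
    generalize hpe : 1 - t ^ 2 = p at *
    field_simp
    ring

lemma caseA_last (h : ZS c χ ψ ψ1) (hχ : c ^ 2 < χ) {t0 : ℝ} (ht : t0 ∈ Set.Ioo (-1 : ℝ) 1)
    (h0 : ψ t0 = 0) (hnz : ∀ u ∈ Set.Ioo t0 1, ψ u ≠ 0) :
    sA c χ t0 + aA c χ t0 ≤ sA c χ 1 - π / 2 := by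
  have R := ricA h hχ
  have hr1 := r_pos hχ (t := 1) (by norm_num)
  have hψ1 := h.one_ne
  obtain ⟨M, hM⟩ := isCompact_Icc.exists_bound_of_continuousOn h.cont
  have hdb : ∀ t ∈ Set.Ioo (0:ℝ) 1, |ψ1 t| ≤ (|χ| + c ^ 2) * M := fun t ht' =>
    h.deriv_bound (x0 := 0) le_rfl (fun t ht => hM t ⟨by linarith [ht.1], ht.2⟩) ht'
  have hψt : Filter.Tendsto ψ (nhdsWithin 1 (Set.Iio 1)) (nhds (ψ 1)) := by
    have hmem : Set.Icc (-1 : ℝ) 1 ∈ nhdsWithin (1:ℝ) (Set.Iio 1) := by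
      filter_upwards [Ioo_mem_nhdsLT (show (-1:ℝ) < 1 by norm_num)] with x hx
      exact ⟨hx.1.le, hx.2.le⟩
    have h1 : ContinuousWithinAt ψ (Set.Icc (-1) 1) 1 := h.cont 1 (by norm_num)
    exact (h1.mono_of_mem_nhdsWithin hmem).tendsto
  have hqt : Filter.Tendsto (qA c χ) (nhdsWithin 1 (Set.Iio 1)) (nhds 0) := by
    have : ContinuousAt (qA c χ) 1 := by
      unfold qA
      apply ContinuousAt.sqrt
      exact ContinuousAt.div (by fun_prop) (by fun_prop) hr1.ne'
    have h2 := this.tendsto.mono_left (nhdsWithin_le_nhds (s := Set.Iio 1))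
    simpa [qA] using h2
  have hev : ∀ᶠ t in nhdsWithin (1:ℝ) (Set.Iio 1), t ∈ Set.Ioo (0:ℝ) 1 := Ioo_mem_nhdsLT one_pos
  have hb1 : Filter.IsBoundedUnder (· ≤ ·) (nhdsWithin (1:ℝ) (Set.Iio 1)) (norm ∘ ψ1) := by
    refine ⟨(|χ| + c ^ 2) * M, ?_⟩
    rw [Filter.eventually_map]
    filter_upwards [hev] with t ht
    exact hdb t ht
  have hb2 : Filter.IsBoundedUnder (· ≤ ·) (nhdsWithin (1:ℝ) (Set.Iio 1)) (norm ∘ (fun t => ψ1 t ^ 2)) := by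
    refine ⟨((|χ| + c ^ 2) * M) ^ 2, ?_⟩
    rw [Filter.eventually_map]
    filter_upwards [hev] with t ht
    simp only [Function.comp, norm_pow]
    exact pow_le_pow_left₀ (norm_nonneg _) (hdb t ht) 2
  have hz : Filter.Tendsto (fun t => qA c χ t * ψ1 t / ψ t) (nhdsWithin 1 (Set.Iio 1)) (nhds 0) := by
    have := (hqt.zero_mul_isBoundedUnder_le hb1).div hψt hψ1
    rwa [zero_div] at this
  have hqq := hqt.zero_mul_isBoundedUnder_le hb2
  have haz : Filter.Tendsto (fun t => aA c χ t * (qA c χ t * ψ1 t / ψ t) ^ 2)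
      (nhdsWithin 1 (Set.Iio 1)) (nhds 0) := by
    have hco : Filter.Tendsto (fun t => (t * (1 + c ^ 2 * (1 - t ^ 2) / (χ - c ^ 2 * t ^ 2)) / 2) /
        (χ - c ^ 2 * t ^ 2)) (nhdsWithin 1 (Set.Iio 1)) (nhds ((1 * (1 + c ^ 2 * (1 - 1 ^ 2) / (χ - c ^ 2 * 1 ^ 2)) / 2) /
        (χ - c ^ 2 * 1 ^ 2))) := by
      apply Filter.Tendsto.mono_left _ (nhdsWithin_le_nhds)
      apply ContinuousAt.tendsto (f := fun t : ℝ => (t * (1 + c ^ 2 * (1 - t ^ 2) / (χ - c ^ 2 * t ^ 2)) / 2) /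
        (χ - c ^ 2 * t ^ 2))
      have : ContinuousAt (fun t : ℝ => c ^ 2 * (1 - t ^ 2) / (χ - c ^ 2 * t ^ 2)) 1 :=
        ContinuousAt.div (by fun_prop) (by fun_prop) hr1.ne'
      refine ContinuousAt.div ?_ (by fun_prop) ?_
      · fun_prop
      · exact hr1.ne'
    have h3 := (hco.mul hqq).div (hψt.pow 2) (pow_ne_zero 2 hψ1)
    rw [mul_zero, zero_div] at h3
    refine h3.congr' ?_
    filter_upwards [hev] with t ht
    have htt : t ∈ Set.Ioo (-1 : ℝ) 1 := ⟨by linarith [ht.1], ht.2⟩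
    have hp := p_pos htt
    have hr := r_pos hχ (Set.Ioo_subset_Icc_self htt)
    have hq2 : qA c χ t ^ 2 = (1 - t ^ 2) / (χ - c ^ 2 * t ^ 2) :=
      Real.sq_sqrt (div_pos hp hr).le
    have e : aA c χ t * (qA c χ t * ψ1 t / ψ t) ^ 2 = qA c χ t ^ 2 *
      ((t * (1 / (1 - t ^ 2) + c ^ 2 / (χ - c ^ 2 * t ^ 2))) / 2 * qA c χ t) * (ψ1 t / ψ t) ^ 2 := by
      unfold aA; ring
    simp only [Pi.pow_apply, Pi.mul_apply, Pi.div_apply]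
    rw [e, hq2]
    by_cases hy : ψ t = 0
    · simp [hy]
    generalize qA c χ t = w at *
    generalize χ - c ^ 2 * t ^ 2 = r at *
    generalize 1 - t ^ 2 = p at *
    field_simp
  have hL : Filter.Tendsto (RicH (fun t => qA c χ t * ψ1 t / ψ t) (sA c χ) (aA c χ))
      (nhdsWithin 1 (Set.Iio 1)) (nhds (-sA c χ 1)) := by
    have h1 := ((Real.continuous_arctan.tendsto 0).comp hz).neg
    have h2 := (sA_cont (c := c) (χ := χ)).tendsto 1 |>.mono_left (nhdsWithin_le_nhds (s := Set.Iio 1))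
    have h3 := haz.div ((hz.pow 2).const_add 1) (by norm_num)
    have h4 := (h1.sub h2).sub h3
    simp only [Real.arctan_zero, neg_zero, zero_sub, zero_div, sub_zero] at h4
    refine h4.congr (fun t => ?_)
    simp only [RicH, Function.comp, Pi.div_apply]
    ring
  have := R.half h ht h0 ht.2 le_rfl hnz (fun t _ => by simp) hL
  linarith

lemma caseA {n : ℕ} (h : ZS c χ ψ ψ1) (hχ : c ^ 2 < χ)
    (hcard : {x | x ∈ Set.Ioo (-1 : ℝ) 1 ∧ ψ x = 0}.ncard = n) (hn : 0 < n) :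
    n * π ≤ 2 * (Real.sqrt χ * EI (c ^ 2 / χ)) := by
  rw [← sA_one (lt_of_le_of_lt (sq_nonneg c) hχ)]
  apply count_zeros (b := fun t => sA c χ t + aA c χ t) h.fin hcard hn
  · intro t ht h0 t' ht' h0' htt hno
    exact (ricA h hχ).consec h ht h0 htt ht' h0' hno (fun t _ => by simp)
  · intro t ht h0 hno
    exact caseA_last h hχ ht h0 hno
  · intro t ht h0 hno
    have := caseA_last h.reflect hχ (t0 := -t) ⟨by linarith [ht.2], by linarith [ht.1]⟩ (by simpa using h0)
      (fun u hu => hno (-u) ⟨by linarith [hu.2], by linarith [hu.1]⟩)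
    rw [sA_neg, aA_neg] at this
    linarith

end

section
variable {c χ : ℝ} {ψ ψ1 : ℝ → ℝ}

noncomputable def aB (c t : ℝ) : ℝ := t / (c * (1 - t ^ 2))

lemma aB_neg (t : ℝ) : aB c (-t) = - aB c t := by
  unfold aB
  rw [neg_sq, neg_div]

lemma aB_mono (hc : 0 < c) {t u : ℝ} (ht : t ∈ Set.Ioo (-1 : ℝ) 1) (hu : u ∈ Set.Ioo (-1 : ℝ) 1)
    (htu : t ≤ u) : aB c t ≤ aB c u := by
  have h1 := p_pos ht
  have h2 := p_pos hu
  unfold aB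
  rw [div_le_div_iff₀ (by positivity) (by positivity)]
  have h3 : 0 < 1 + t * u := by nlinarith [ht.1, ht.2, hu.1, hu.2]
  have h4 : 0 ≤ c * ((u - t) * (1 + t * u)) := by
    apply mul_nonneg hc.le (mul_nonneg (by linarith) h3.le)
  nlinarith

lemma ricB (h : ZS c χ ψ ψ1) (hc : 0 < c) :
    Ric ψ ψ1 (fun _ => 1 / c) (fun t => c * t) (aB c) (fun _ => c)
      (fun t => (1 / c) * (1 / (1 - t ^ 2) + 2 * t ^ 2 / (1 - t ^ 2) ^ 2))
      (fun t => (χ - c ^ 2 * t ^ 2) / (c ^ 2 * (1 - t ^ 2))) := by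
  refine ⟨fun t _ => by positivity, fun t _ => continuousAt_const,
    fun t _ => ((hasDerivAt_id t).const_mul c).congr_deriv (by simp), ?_, fun _ _ => hc.le, ?_, ?_⟩
  · intro t ht
    have hp := p_pos ht
    have h1 : HasDerivAt (fun t : ℝ => c * (1 - t ^ 2)) (c * (-(2 * t))) t :=
      (((hasDerivAt_pow 2 t).const_sub 1).const_mul c).congr_deriv (by simp)
    refine ((hasDerivAt_id t).div h1 (by positivity)).congr_deriv ?_
    simp only [id]
    generalize 1 - t ^ 2 = p at *
    field_simp
    ring
  · intro t ht
    have hp := p_pos ht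
    positivity
  · intro t ht h0
    have hp := p_pos ht
    have h1 := ((h.d1' ht).const_mul (1 / c)).div (h.d1 t ht) h0
    refine h1.congr_deriv ?_
    simp only [aB]
    generalize χ - c ^ 2 * t ^ 2 = r at *
    generalize ψ t = y at *
    generalize ψ1 t = y1 at *
    generalize 1 - t ^ 2 = p at *
    field_simp

lemma caseB_bound_pos (h : ZS c χ ψ ψ1) (hχ : χ ≤ c ^ 2) {t0 : ℝ} (ht0 : 0 ≤ t0)
    (hpos : ∀ t ∈ Set.Ioo t0 1, 0 < ψ t) :
    ∃ C, 0 ≤ C ∧ ∀ t ∈ Set.Ioo t0 1, ψ1 t ≤ C * (1 - t) := by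
  obtain ⟨M, hM⟩ := isCompact_Icc.exists_bound_of_continuousOn h.cont
  have hM0 : 0 ≤ M := (norm_nonneg _).trans (hM 0 (by norm_num))
  refine ⟨c ^ 2 * M, by positivity, ?_⟩
  have hin : ∀ t ∈ Set.Ioo t0 1, t ∈ Set.Ioo (-1 : ℝ) 1 := fun t ht => ⟨by linarith [ht.1], ht.2⟩
  have hd : ∀ t ∈ Set.Ioo t0 1, HasDerivAt (fun t => (1 - t ^ 2) * ψ1 t - c ^ 2 * M * (1 - t) ^ 2)
      (-((χ - c ^ 2 * t ^ 2) * ψ t) - c ^ 2 * M * (2 * (1 - t) * (-1))) t := by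
    intro t ht
    refine (h.d2 t (hin t ht)).sub ((((hasDerivAt_id t).const_sub 1).pow 2).const_mul _ |>.congr_deriv ?_)
    simp
  have hm : MonotoneOn (fun t => (1 - t ^ 2) * ψ1 t - c ^ 2 * M * (1 - t) ^ 2) (Set.Ioo t0 1) := by
    apply monotoneOn_of_deriv_nonneg (convex_Ioo _ _)
    · exact fun t ht' => (hd t ht').continuousAt.continuousWithinAt
    · intro t ht'
      exact (hd t (interior_subset ht')).differentiableAt.differentiableWithinAt
    · intro t ht'
      have ht := interior_subset ht'
      rw [(hd t ht).deriv]
      have h1 := hpos t ht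
      have h2 := (abs_le.mp (hM t (Set.Ioo_subset_Icc_self (hin t ht)))).2
      have h3 : 0 < 1 - t := by linarith [ht.2]
      have hp := p_pos (hin t ht)
      have h4 : (χ - c ^ 2 * t ^ 2) * ψ t ≤ (c ^ 2 * (1 - t ^ 2)) * ψ t := by
        apply mul_le_mul_of_nonneg_right _ h1.le; linarith
      have h5 : (c ^ 2 * (1 - t ^ 2)) * ψ t ≤ (c ^ 2 * (1 - t ^ 2)) * M := by gcongr
      have h6 : (c ^ 2 * (1 - t ^ 2)) * M ≤ (c ^ 2 * (2 * (1 - t))) * M := by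
        gcongr
        nlinarith [ht.2]
      linarith
  have hFlim : Filter.Tendsto (fun t => (1 - t ^ 2) * ψ1 t - c ^ 2 * M * (1 - t) ^ 2)
      (nhdsWithin 1 (Set.Iio 1)) (nhds 0) := by
    have hb : Filter.Tendsto (fun t : ℝ => (1 - t ^ 2)) (nhdsWithin 1 (Set.Iio 1)) (nhds 0) := by
      have : Filter.Tendsto (fun t : ℝ => (1 - t ^ 2)) (nhds 1) (nhds (1 - 1 ^ 2)) := by
        apply Continuous.tendsto; fun_prop
      rw [one_pow, sub_self] at this
      exact this.mono_left nhdsWithin_le_nhds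
    have hb2 : Filter.Tendsto (fun t : ℝ => c ^ 2 * M * (1 - t) ^ 2) (nhdsWithin 1 (Set.Iio 1)) (nhds 0) := by
      have : Filter.Tendsto (fun t : ℝ => c ^ 2 * M * (1 - t) ^ 2) (nhds 1) (nhds (c ^ 2 * M * (1 - 1) ^ 2)) := by
        apply Continuous.tendsto; fun_prop
      rw [sub_self, zero_pow two_ne_zero, mul_zero] at this
      exact this.mono_left nhdsWithin_le_nhds
    have hb1 : Filter.IsBoundedUnder (· ≤ ·) (nhdsWithin (1:ℝ) (Set.Iio 1)) (norm ∘ ψ1) := by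
      refine ⟨(|χ| + c ^ 2) * M, ?_⟩
      rw [Filter.eventually_map]
      filter_upwards [Ioo_mem_nhdsLT (show (0:ℝ) < 1 from one_pos)] with t ht
      exact h.deriv_bound (x0 := 0) le_rfl (fun t ht => hM t ⟨by linarith [ht.1], ht.2⟩) ht
    have := (hb.zero_mul_isBoundedUnder_le hb1).sub hb2
    rwa [sub_zero] at this
  intro t ht
  have hle : (1 - t ^ 2) * ψ1 t - c ^ 2 * M * (1 - t) ^ 2 ≤ 0 := by
    apply ge_of_tendsto hFlim
    filter_upwards [Ioo_mem_nhdsLT ht.2] with u hu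
    exact hm ht ⟨ht.1.trans hu.1, hu.2⟩ hu.1.le
  have h3 : 0 < 1 - t := by linarith [ht.2]
  have h4 : 0 ≤ t := by linarith [ht.1]
  by_contra hlt
  push Not at hlt
  have h5 : 0 < ψ1 t := lt_of_le_of_lt (by positivity) hlt
  nlinarith [mul_nonneg (mul_nonneg h4 h5.le) h3.le, mul_lt_mul_of_pos_right hlt h3]

lemma caseB_bound (h : ZS c χ ψ ψ1) (hχ : χ ≤ c ^ 2) {t0 : ℝ} (ht0 : 0 ≤ t0) (ht1 : t0 < 1)
    (hnz : ∀ t ∈ Set.Ioo t0 1, ψ t ≠ 0) (hz : ∀ t ∈ Set.Ioo t0 1, 0 < ψ1 t / ψ t) :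
    ∃ C, 0 ≤ C ∧ ∀ t ∈ Set.Ioo t0 1, |ψ1 t| ≤ C * (1 - t) := by
  have hc : ContinuousOn ψ (Set.Ioo t0 1) := h.cont.mono (fun t ht => ⟨by linarith [ht.1], ht.2.le⟩)
  have hsign : (∀ t ∈ Set.Ioo t0 1, 0 < ψ t) ∨ (∀ t ∈ Set.Ioo t0 1, ψ t < 0) := by
    by_contra hcon
    push Not at hcon
    obtain ⟨⟨x, hx, hx0⟩, ⟨y, hy, hy0⟩⟩ := hcon
    obtain ⟨w, hw, hw0⟩ := isPreconnected_Ioo.intermediate_value hx hy hc ⟨hx0, hy0⟩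
    exact hnz w hw hw0
  rcases hsign with hs | hs
  · obtain ⟨C, hC, hb⟩ := caseB_bound_pos h hχ ht0 hs
    refine ⟨C, hC, fun t ht => ?_⟩
    have := (div_pos_iff_of_pos_right (hs t ht)).mp (hz t ht)
    rw [abs_of_pos this]
    exact hb t ht
  · obtain ⟨C, hC, hb⟩ := caseB_bound_pos h.neg hχ ht0 (fun t ht => by linarith [hs t ht])
    refine ⟨C, hC, fun t ht => ?_⟩
    have : ψ1 t < 0 := by
      rcases div_pos_iff.mp (hz t ht) with h1 | h1
      · linarith [hs t ht, h1.2]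
      · exact h1.1
    rw [abs_of_neg this]
    exact hb t ht

lemma rhoB_le (hc : 0 < c) (hχ : χ ≤ c ^ 2) {t : ℝ} (ht : t ∈ Set.Ioo (-1 : ℝ) 1) :
    0 ≤ 1 - (χ - c ^ 2 * t ^ 2) / (c ^ 2 * (1 - t ^ 2)) := by
  have hp := p_pos ht
  rw [sub_nonneg, div_le_one (by positivity)]
  linarith

lemma caseB_last (h : ZS c χ ψ ψ1) (hc : 0 < c) (hχ : χ ≤ c ^ 2) {t0 : ℝ}
    (ht : t0 ∈ Set.Ioo (-1 : ℝ) 1)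
    (h0 : ψ t0 = 0) (hnz : ∀ u ∈ Set.Ioo t0 1, ψ u ≠ 0) (ha : -1 ≤ aB c t0) :
    c * t0 + aB c t0 ≤ c - π / 2 := by
  have R := ricB h hc
  have hin : ∀ t ∈ Set.Ioo t0 1, t ∈ Set.Ioo (-1 : ℝ) 1 := fun t ht' => ⟨by linarith [ht.1, ht'.1], ht'.2⟩
  have hat : ∀ t ∈ Set.Ioo t0 1, -1 ≤ aB c t := fun t ht' =>
    ha.trans (aB_mono hc ht (hin t ht') ht'.1.le)
  have hcond : ∀ t ∈ Set.Ioo t0 1, 0 < 1 / c * ψ1 t / ψ t →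
      0 ≤ (1 - (χ - c ^ 2 * t ^ 2) / (c ^ 2 * (1 - t ^ 2))) *
      (1 + (1 / c * ψ1 t / ψ t) ^ 2 + 2 * aB c t * (1 / c * ψ1 t / ψ t)) := by
    intro t ht' hz
    apply mul_nonneg (rhoB_le hc hχ (hin t ht'))
    have := hat t ht'
    generalize 1 / c * ψ1 t / ψ t = z at *
    nlinarith [sq_nonneg (1 - z)]
  have hzc : ∀ t ∈ Set.Ioo t0 1, ContinuousAt (fun t => 1 / c * ψ1 t / ψ t) t := fun t ht' =>
    (R.zd t (hin t ht') (hnz t ht')).continuousAt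
  by_cases H : ∀ t ∈ Set.Ioo t0 1, 0 < 1 / c * ψ1 t / ψ t
  · set t1 := max t0 0 with ht1
    have hsub : ∀ t ∈ Set.Ioo t1 1, t ∈ Set.Ioo t0 1 := fun t ht' =>
      ⟨lt_of_le_of_lt (le_max_left _ _) ht'.1, ht'.2⟩
    have ht11 : t1 < 1 := max_lt ht.2 one_pos
    obtain ⟨C, hC, hb⟩ := caseB_bound h hχ (le_max_right t0 0) ht11
      (fun t ht' => hnz t (hsub t ht')) (fun t ht' => by
        have := H t (hsub t ht')
        rw [mul_div_assoc] at this
        exact pos_of_mul_pos_right this (by positivity))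
    have hψt : Filter.Tendsto ψ (nhdsWithin 1 (Set.Iio 1)) (nhds (ψ 1)) := by
      have hmem : Set.Icc (-1 : ℝ) 1 ∈ nhdsWithin (1:ℝ) (Set.Iio 1) := by
        filter_upwards [Ioo_mem_nhdsLT (show (-1:ℝ) < 1 by norm_num)] with x hx
        exact ⟨hx.1.le, hx.2.le⟩
      have h1 : ContinuousWithinAt ψ (Set.Icc (-1) 1) 1 := h.cont 1 (by norm_num)
      exact (h1.mono_of_mem_nhdsWithin hmem).tendsto
    have hlin : ∀ D : ℝ, Filter.Tendsto (fun t : ℝ => D * (1 - t)) (nhdsWithin 1 (Set.Iio 1)) (nhds 0) := by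
      intro D
      have : Filter.Tendsto (fun t : ℝ => D * (1 - t)) (nhds 1) (nhds (D * (1 - 1))) := by
        apply Continuous.tendsto; fun_prop
      rw [sub_self, mul_zero] at this
      exact this.mono_left nhdsWithin_le_nhds
    have hev : ∀ᶠ t in nhdsWithin (1:ℝ) (Set.Iio 1), t ∈ Set.Ioo t1 1 := Ioo_mem_nhdsLT ht11
    have hdlim : Filter.Tendsto ψ1 (nhdsWithin 1 (Set.Iio 1)) (nhds 0) := by
      apply squeeze_zero_norm' _ (hlin C)
      filter_upwards [hev] with t ht'
      exact hb t ht'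
    have hsq : Filter.Tendsto (fun t => aB c t * ψ1 t ^ 2) (nhdsWithin 1 (Set.Iio 1)) (nhds 0) := by
      apply squeeze_zero_norm' _ (hlin (1 / c * C ^ 2))
      filter_upwards [hev] with t ht'
      have ht0' : 0 ≤ t := (le_max_right t0 0).trans ht'.1.le
      have hp := p_pos (hin t (hsub t ht'))
      have h3 : 0 < 1 - t := by linarith [ht'.2]
      have h4 : 0 ≤ aB c t := by unfold aB; positivity
      rw [Real.norm_eq_abs, abs_mul, abs_of_nonneg h4, abs_pow]
      have h5 : |ψ1 t| ^ 2 ≤ (C * (1 - t)) ^ 2 := pow_le_pow_left₀ (abs_nonneg _) (hb t ht') 2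
      calc aB c t * |ψ1 t| ^ 2 ≤ aB c t * (C * (1 - t)) ^ 2 := by gcongr
        _ = (t / (1 + t)) * (1 / c * C ^ 2 * (1 - t)) := by
          unfold aB
          rw [show 1 - t ^ 2 = (1 - t) * (1 + t) by ring]
          field_simp
        _ ≤ 1 * (1 / c * C ^ 2 * (1 - t)) := by
          gcongr
          rw [div_le_one (by linarith)]; linarith
        _ = _ := one_mul _
    have hz : Filter.Tendsto (fun t => 1 / c * ψ1 t / ψ t) (nhdsWithin 1 (Set.Iio 1)) (nhds 0) := by
      have := (hdlim.const_mul (1 / c)).div hψt h.one_ne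
      rwa [mul_zero, zero_div] at this
    have haz : Filter.Tendsto (fun t => aB c t * (1 / c * ψ1 t / ψ t) ^ 2) (nhdsWithin 1 (Set.Iio 1)) (nhds 0) := by
      have := (hsq.const_mul ((1 / c) ^ 2)).div (hψt.pow 2) (pow_ne_zero 2 h.one_ne)
      rw [mul_zero, zero_div] at this
      refine this.congr (fun t => ?_)
      simp only [Pi.div_apply, Pi.pow_apply]
      rw [div_pow]
      ring
    have hL : Filter.Tendsto (RicH (fun t => 1 / c * ψ1 t / ψ t) (fun t => c * t) (aB c))
        (nhdsWithin 1 (Set.Iio 1)) (nhds (-c)) := by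
      have h1 := ((Real.continuous_arctan.tendsto 0).comp hz).neg
      have h2 : Filter.Tendsto (fun t : ℝ => c * t) (nhdsWithin 1 (Set.Iio 1)) (nhds (c * 1)) :=
        ((by fun_prop : Continuous fun t : ℝ => c * t).tendsto 1).mono_left nhdsWithin_le_nhds
      have h3 := haz.div ((hz.pow 2).const_add 1) (by norm_num)
      have h4 := (h1.sub h2).sub h3
      simp only [Real.arctan_zero, neg_zero, zero_sub, zero_div, sub_zero, mul_one] at h4
      refine h4.congr (fun t => ?_)
      simp only [RicH, Function.comp, Pi.div_apply]
      ring
    have := R.half h ht h0 ht.2 le_rfl hnz (fun t ht' => hcond t ht' (H t ht')) hL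
    linarith
  · push Not at H
    obtain ⟨t1, ht1, hz1⟩ := H
    have hev := (R.z_top h ht h0).eventually (Filter.eventually_gt_atTop 0)
    obtain ⟨u, hu, hsub⟩ := mem_nhdsGT_iff_exists_Ioo_subset.mp hev
    have hu' : t0 < u := hu
    have hut : u ≤ t1 := by
      by_contra hlt
      push Not at hlt
      have : 0 < 1 / c * ψ1 t1 / ψ t1 := hsub ⟨ht1.1, hlt⟩
      linarith
    have hin2 : ∀ t ∈ Set.Icc u t1, t ∈ Set.Ioo t0 1 := fun t ht' =>
      ⟨lt_of_lt_of_le hu' ht'.1, lt_of_le_of_lt ht'.2 ht1.2⟩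
    have hcl : IsClosed (Set.Icc u t1 ∩ (fun t => 1 / c * ψ1 t / ψ t) ⁻¹' Set.Iic 0) := by
      apply ContinuousOn.preimage_isClosed_of_isClosed _ isClosed_Icc isClosed_Iic
      exact fun t ht' => (hzc t (hin2 t ht')).continuousWithinAt
    have hcomp := isCompact_Icc.of_isClosed_subset hcl Set.inter_subset_left
    obtain ⟨τ, hτ, hmin⟩ := hcomp.exists_isLeast ⟨t1, ⟨hut, le_rfl⟩, hz1⟩
    have hτin := hin2 τ hτ.1
    have hpos : ∀ t ∈ Set.Ioo t0 τ, 0 < 1 / c * ψ1 t / ψ t := by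
      intro t ht'
      by_cases htu : t < u
      · exact hsub ⟨ht'.1, htu⟩
      · push Not at htu
        by_contra hlt
        push Not at hlt
        have := hmin ⟨⟨htu, ht'.2.le.trans hτ.1.2⟩, hlt⟩
        linarith [ht'.2]
    have hzτ : 1 / c * ψ1 τ / ψ τ = 0 := by
      apply le_antisymm hτ.2
      apply ge_of_tendsto ((hzc τ hτin).tendsto.mono_left (nhdsWithin_le_nhds (s := Set.Iio τ)))
      filter_upwards [Ioo_mem_nhdsLT hτin.1] with t ht'
      exact (hpos t ht').le
    have hcont := (RicH_hasDerivAt (R.sd τ (hin τ hτin)) (R.ad τ (hin τ hτin))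
      (R.zd τ (hin τ hτin) (hnz τ hτin))).continuousAt
    have hsub2 : ∀ t ∈ Set.Ioo t0 τ, t ∈ Set.Ioo t0 1 := fun t ht' => ⟨ht'.1, ht'.2.trans hτin.2⟩
    have := R.half h ht h0 hτin.1 hτin.2.le (fun t ht' => hnz t (hsub2 t ht'))
      (fun t ht' => hcond t (hsub2 t ht') (hpos t ht'))
      (hcont.tendsto.mono_left nhdsWithin_le_nhds)
    simp only [RicH, hzτ] at this
    simp at this
    nlinarith [hτin.2]

lemma caseB_a (h : ZS c χ ψ ψ1) (hc : 0 < c) (hχ : χ ≤ c ^ 2) {t0 : ℝ}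
    (ht : t0 ∈ Set.Ioo (-1 : ℝ) 1)
    (h0 : ψ t0 = 0) (hnz : ∀ u ∈ Set.Ioo t0 1, ψ u ≠ 0) : aB c t0 ≤ 1 := by
  have hp := p_pos ht
  rcases le_total t0 0 with hle | hle
  · have : aB c t0 ≤ 0 := div_nonpos_of_nonpos_of_nonneg hle (by positivity)
    linarith
  · have ha : 0 ≤ aB c t0 := div_nonneg hle (by positivity)
    have hb := caseB_last h hc hχ ht h0 hnz (by linarith)
    have hpi := Real.pi_gt_three
    have h1 : 1 ≤ c * (1 - t0) := by linarith
    unfold aB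
    rw [div_le_one (by positivity)]
    nlinarith

lemma caseB_le (h : ZS c χ ψ ψ1) (hc : 0 < c) (hχ : χ ≤ c ^ 2) {t0 : ℝ}
    (ht : t0 ∈ Set.Ioo (-1 : ℝ) 1) (h0 : ψ t0 = 0) : aB c t0 ≤ 1 := by
  obtain ⟨v, hv, hmax⟩ := Set.exists_max_image _ (fun x : ℝ => x) h.fin ⟨t0, ht, h0⟩
  have h1 := caseB_a h hc hχ hv.1 hv.2 (fun u hu hu0 => by
    have := hmax u ⟨⟨hv.1.1.trans hu.1, hu.2⟩, hu0⟩
    exact absurd hu.1 (not_lt.mpr this))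
  exact (aB_mono hc ht hv.1 (hmax t0 ⟨ht, h0⟩)).trans h1

lemma caseB_ge (h : ZS c χ ψ ψ1) (hc : 0 < c) (hχ : χ ≤ c ^ 2) {t0 : ℝ}
    (ht : t0 ∈ Set.Ioo (-1 : ℝ) 1) (h0 : ψ t0 = 0) : -1 ≤ aB c t0 := by
  have := caseB_le h.reflect hc hχ (t0 := -t0) ⟨by linarith [ht.2], by linarith [ht.1]⟩ (by simpa using h0)
  rw [aB_neg] at this
  linarith

lemma caseB {n : ℕ} (h : ZS c χ ψ ψ1) (hc : 0 < c) (hχ : χ ≤ c ^ 2)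
    (hcard : {x | x ∈ Set.Ioo (-1 : ℝ) 1 ∧ ψ x = 0}.ncard = n) (hn : 0 < n) :
    n * π ≤ 2 * c := by
  apply count_zeros (b := fun t => c * t + aB c t) h.fin hcard hn
  · intro t ht h0 t' ht' h0' htt hno
    refine (ricB h hc).consec h ht h0 htt ht' h0' hno (fun u hu => ?_)
    have hu' : u ∈ Set.Ioo (-1 : ℝ) 1 := ⟨ht.1.trans hu.1, hu.2.trans ht'.2⟩
    apply mul_nonneg (rhoB_le hc hχ hu')
    have h1 := (caseB_ge h hc hχ ht h0).trans (aB_mono hc ht hu' hu.1.le)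
    have h2 := (aB_mono hc hu' ht' hu.2.le).trans (caseB_le h hc hχ ht' h0')
    generalize 1 / c * ψ1 u / ψ u = z at *
    nlinarith [sq_nonneg (z + aB c u)]
  · intro t ht h0 hno
    exact caseB_last h hc hχ ht h0 hno (caseB_ge h hc hχ ht h0)
  · intro t ht h0 hno
    have := caseB_last h.reflect hc hχ (t0 := -t) ⟨by linarith [ht.2], by linarith [ht.1]⟩ (by simpa using h0)
      (fun u hu => hno (-u) ⟨by linarith [hu.2], by linarith [hu.1]⟩) (by
        rw [aB_neg]; linarith [caseB_le h hc hχ ht h0])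
    rw [aB_neg] at this
    linarith

end

theorem stmt8 (c : ℝ) (hc : 0 < c) (δ : ℝ) (hδ1 : 0 < δ) (hδ2 : δ < 5 * π / 4 * c)
    (n : ℕ) (hn : 0 < n)
    (hnlow : (n : ℝ) > 2 * c / π + 2 / π ^ 2 * δ * Real.log (4 * Real.exp 1 * π * c / δ))
    (ψ : ℝ → ℝ) (χ : ℝ) (lam : ℂ)
    (hpswf : IsPSWF c n ψ χ lam) :
    δ * (1 - δ / (2 * π * c)) <
      Real.sqrt χ *
        (EllipticF (Real.sqrt ((χ - c ^ 2) / χ)) -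
          EllipticE (Real.sqrt ((χ - c ^ 2) / χ))) := by
  have hpi := Real.pi_pos
  have hzs := hpswf.zs
  have hcard := hpswf.2.2.2.2.1
  rcases le_or_gt χ (c ^ 2) with hχ | hχ
  · exfalso
    have h1 := caseB hzs hc hχ hcard hn
    have h2 : 0 < Real.log (4 * Real.exp 1 * π * c / δ) := by
      apply Real.log_pos
      rw [lt_div_iff₀ hδ1]
      have h3 : 1 < Real.exp 1 := by simp
      have h4 : 0 < π * c := by positivity
      nlinarith
    have h5 : 0 < 2 / π ^ 2 * δ * Real.log (4 * Real.exp 1 * π * c / δ) := by positivity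
    have h6 : (n : ℝ) ≤ 2 * c / π := by rwa [le_div_iff₀ hpi]
    linarith
  · have hχ0 : 0 < χ := lt_of_le_of_lt (sq_nonneg c) hχ
    have h1 := caseA hzs hχ hcard hn
    set m := (χ - c ^ 2) / χ with hm
    have hm0 : 0 < m := div_pos (by linarith) hχ0
    have h1m : 1 - m = c ^ 2 / χ := by rw [hm]; field_simp; ring
    have hm1 : m < 1 := by
      have : 0 < c ^ 2 / χ := by positivity
      linarith
    have hsq : Real.sqrt m ^ 2 = m := Real.sq_sqrt hm0.le
    have hF : EllipticF (Real.sqrt m) = EJ m := by unfold EllipticF EJ; rw [hsq]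
    have hE : EllipticE (Real.sqrt m) = EI m := by unfold EllipticE EI; rw [hsq]
    have hs : Real.sqrt (1 - m) = c / Real.sqrt χ := by
      rw [h1m, Real.sqrt_div (sq_nonneg c), Real.sqrt_sq hc.le]
    have hsχ := Real.sqrt_pos.mpr hχ0
    rw [hF, hE]
    by_contra hcon
    push Not at hcon
    have hd := elliptic_main (m := m) (d := δ / c) hm0 hm1 (by positivity)
      (by rw [div_lt_iff₀ hc]; exact hδ2) (by
        rw [hs]
        have e1 : (EJ m - EI m) / (c / Real.sqrt χ) = (Real.sqrt χ * (EJ m - EI m)) / c := by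
          field_simp
        have e2 : δ / c * (1 - δ / c / (2 * π)) = (δ * (1 - δ / (2 * π * c))) / c := by
          field_simp
        rw [e1, e2]
        gcongr)
    have e3 : 4 * Real.exp 1 * π / (δ / c) = 4 * Real.exp 1 * π * c / δ := by field_simp
    rw [hs, h1m, e3] at hd
    have e4 : EI (c ^ 2 / χ) / (c / Real.sqrt χ) = Real.sqrt χ * EI (c ^ 2 / χ) / c := by field_simp
    rw [e4, div_le_iff₀ hc] at hd
    set l := Real.log (4 * Real.exp 1 * π * c / δ)
    have h6 : (n : ℝ) * π ≤ 2 * ((1 + δ / c / π * l) * c) := by linarith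
    have h7 : (n : ℝ) ≤ 2 * ((1 + δ / c / π * l) * c) / π := by rwa [le_div_iff₀ hpi]
    have h8 : 2 * ((1 + δ / c / π * l) * c) / π = 2 * c / π + 2 / π ^ 2 * δ * l := by
      field_simp
    linarith
end

section
/- Let c > 0 be a real number, let n be a positive integer with n > 2c/π, and let ψ be the n-th PSWF with band limit c, with ODE eigenvalue χ_n. Define f(x) = −1 + ∫_0^{π/2} √(x + cos²θ) dθ for x ≥ 0 and G(x) = ∫_0^{π/2} sin²θ / √(1 + x·cos²θ) dθ for x ≥ 0. Then: (i) every real h₁ ≥ 0 with f(h₁) = n·π/(2c) − 1 satisfies h₁ < (χ_n − c²)/c²; (ii) every real h₂ ≥ 0 with f(h₂) = n·π/(2c) − 1 + 3π/(2c) satisfies (χ_n − c²)/c² < h₂; (iii) for every real h₁ ≥ 0 with f(h₁) = n·π/(2c) − 1, one has c·h₁·G(h₁) < √χ_n · ( F(√((χ_n − c²)/χ_n)) − E(√((χ_n − c²)/χ_n)) ). -/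
open Real

/-- The function `f(x) = -1 + ∫_0^{π/2} √(x + cos²θ) dθ`. -/
noncomputable def fFun (x : ℝ) : ℝ :=
  -1 + ∫ θ in (0 : ℝ)..(π / 2), Real.sqrt (x + Real.cos θ ^ 2)

/-- The function `G(x) = ∫_0^{π/2} sin²θ / √(1 + x·cos²θ) dθ`. -/
noncomputable def GFun (x : ℝ) : ℝ :=
  ∫ θ in (0 : ℝ)..(π / 2), Real.sin θ ^ 2 / Real.sqrt (1 + x * Real.cos θ ^ 2)


namespace PSWFaux

noncomputable def qq (c X x : ℝ) : ℝ := X - c ^ 2 * x ^ 2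
noncomputable def SS (c X x : ℝ) : ℝ := Real.sqrt ((1 - x ^ 2) * qq c X x)
noncomputable def NN (c X x : ℝ) : ℝ := qq c X x + c ^ 2 * (1 - x ^ 2)
noncomputable def gam (c X x : ℝ) : ℝ := x * NN c X x / (2 * qq c X x * SS c X x)
noncomputable def BB (c X x : ℝ) : ℝ :=
  NN c X x * (1 - x ^ 2) * qq c X x + x ^ 2 * (qq c X x ^ 2 + 3 * c ^ 4 * (1 - x ^ 2) ^ 2)
/-- Phase function. -/
noncomputable def TT (c X x : ℝ) : ℝ :=
  ∫ θ in (0 : ℝ)..(arcsin x), Real.sqrt (X - c ^ 2 * Real.sin θ ^ 2)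

lemma p_pos {x : ℝ} (hx : x ∈ Set.Ioo (-1 : ℝ) 1) : 0 < 1 - x ^ 2 := by
  nlinarith [hx.1, hx.2]

lemma q_pos {c X x : ℝ} (hX : c ^ 2 < X) (hx : x ∈ Set.Icc (-1 : ℝ) 1) : 0 < qq c X x := by
  have : x ^ 2 ≤ 1 := by nlinarith [hx.1, hx.2]
  unfold qq
  nlinarith [sq_nonneg c]

lemma q_pos' {c X x : ℝ} (hX : c ^ 2 < X) (hx : x ∈ Set.Ioo (-1 : ℝ) 1) : 0 < qq c X x :=
  q_pos hX (Set.Ioo_subset_Icc_self hx)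

lemma S_pos {c X x : ℝ} (hX : c ^ 2 < X) (hx : x ∈ Set.Ioo (-1 : ℝ) 1) : 0 < SS c X x :=
  Real.sqrt_pos.2 (mul_pos (p_pos hx) (q_pos' hX hx))

lemma S_sq {c X x : ℝ} (hX : c ^ 2 < X) (hx : x ∈ Set.Ioo (-1 : ℝ) 1) :
    SS c X x ^ 2 = (1 - x ^ 2) * qq c X x :=
  Real.sq_sqrt (mul_pos (p_pos hx) (q_pos' hX hx)).le

lemma N_pos {c X x : ℝ} (hX : c ^ 2 < X) (hx : x ∈ Set.Ioo (-1 : ℝ) 1) : 0 < NN c X x := by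
  have := q_pos' hX hx
  have := p_pos hx
  unfold NN; positivity

lemma B_pos {c X x : ℝ} (hX : c ^ 2 < X) (hx : x ∈ Set.Ioo (-1 : ℝ) 1) : 0 < BB c X x := by
  have := q_pos' hX hx
  have := p_pos hx
  have := N_pos hX hx
  unfold BB; positivity

lemma hasDerivAt_q (c X x : ℝ) : HasDerivAt (qq c X) (-2 * c ^ 2 * x) x := by
  unfold qq
  have := ((hasDerivAt_pow 2 x).const_mul (c ^ 2)).const_sub X
  exact this.congr_deriv (by push_cast; ring)

lemma hasDerivAt_p (x : ℝ) : HasDerivAt (fun x : ℝ => 1 - x ^ 2) (-2 * x) x := by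
  have := ((hasDerivAt_pow 2 x)).const_sub 1
  exact this.congr_deriv (by push_cast; ring)

lemma hasDerivAt_S {c X x : ℝ} (hX : c ^ 2 < X) (hx : x ∈ Set.Ioo (-1 : ℝ) 1) :
    HasDerivAt (SS c X) (-x * NN c X x / SS c X x) x := by
  have h := ((hasDerivAt_p x).mul (hasDerivAt_q c X x)).sqrt
    (mul_pos (p_pos hx) (q_pos' hX hx)).ne'
  have h2 : HasDerivAt (SS c X) _ x := h
  refine h2.congr_deriv ?_
  have hS := S_pos hX hx
  change _ / (2 * SS c X x) = _
  unfold NN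
  field_simp
  ring

lemma hasDerivAt_N (c X x : ℝ) : HasDerivAt (NN c X) (-4 * c ^ 2 * x) x := by
  have := (hasDerivAt_q c X x).add ((hasDerivAt_p x).const_mul (c ^ 2))
  exact this.congr_deriv (by ring)

lemma hasDerivAt_gam {c X x : ℝ} (hX : c ^ 2 < X) (hx : x ∈ Set.Ioo (-1 : ℝ) 1) :
    HasDerivAt (gam c X) (BB c X x / (2 * qq c X x * SS c X x ^ 3)) x := by
  have hS := S_pos hX hx
  have hq := q_pos' hX hx
  have h := ((hasDerivAt_id x).mul (hasDerivAt_N c X x)).div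
    (((hasDerivAt_q c X x).const_mul 2).mul (hasDerivAt_S hX hx))
    (mul_pos (mul_pos two_pos hq) hS).ne'
  refine HasDerivAt.congr_deriv (f := gam c X) h ?_
  have h2 := S_sq hX hx
  simp only [id, Pi.mul_apply]
  unfold BB
  field_simp
  ring_nf
  ring_nf at h2
  simp only [h2]
  unfold NN
  ring

lemma hasDerivAt_T {c X x : ℝ} (_hX : c ^ 2 < X) (hx : x ∈ Set.Ioo (-1 : ℝ) 1) :
    HasDerivAt (TT c X) (SS c X x / (1 - x ^ 2)) x := by
  have hc : Continuous (fun θ : ℝ => Real.sqrt (X - c ^ 2 * Real.sin θ ^ 2)) := by fun_prop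
  have h1 := intervalIntegral.integral_hasDerivAt_right (hc.intervalIntegrable 0 (arcsin x))
    (hc.stronglyMeasurableAtFilter _ _) hc.continuousAt
  have h2 := h1.comp x (Real.hasDerivAt_arcsin hx.1.ne' hx.2.ne)
  refine HasDerivAt.congr_deriv (f := TT c X) h2 ?_
  rw [Real.sin_arcsin hx.1.le hx.2.le]
  have hp := p_pos hx
  unfold SS qq
  rw [Real.sqrt_mul hp.le]
  have := Real.sq_sqrt hp.le
  have := Real.sqrt_pos.2 hp
  field_simp
  rw [Real.sq_sqrt hp.le]

lemma continuous_T (c X : ℝ) : Continuous (TT c X) := by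
  have hc : Continuous (fun θ : ℝ => Real.sqrt (X - c ^ 2 * Real.sin θ ^ 2)) := by fun_prop
  exact (intervalIntegral.continuous_primitive (fun a b => hc.intervalIntegrable a b) 0).comp
    Real.continuous_arcsin

lemma T_odd (c X x : ℝ) : TT c X (-x) = - TT c X x := by
  unfold TT
  rw [Real.arcsin_neg]
  have := intervalIntegral.integral_comp_neg (a := 0) (b := arcsin x)
    (fun θ : ℝ => Real.sqrt (X - c ^ 2 * Real.sin θ ^ 2))
  simp only [Real.sin_neg, even_two, Even.neg_pow, neg_zero] at this
  rw [this, intervalIntegral.integral_symm]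

lemma T_mono (c X : ℝ) : Monotone (TT c X) := by
  intro x y hxy
  have hc : Continuous (fun θ : ℝ => Real.sqrt (X - c ^ 2 * Real.sin θ ^ 2)) := by fun_prop
  have := intervalIntegral.integral_interval_sub_left
    (hc.intervalIntegrable (μ := MeasureTheory.volume) 0 (arcsin y))
    (hc.intervalIntegrable 0 (arcsin x))
  have h2 : 0 ≤ ∫ θ in (arcsin x)..(arcsin y), Real.sqrt (X - c ^ 2 * Real.sin θ ^ 2) :=
    intervalIntegral.integral_nonneg (Real.monotone_arcsin hxy) (fun _ _ => Real.sqrt_nonneg _)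
  unfold TT
  linarith

lemma gam_odd (c X x : ℝ) : gam c X (-x) = - gam c X x := by
  unfold gam SS NN qq
  simp only [even_two, Even.neg_pow]
  ring

/-- Solutions of the prolate ODE in first order form. -/
structure Sol (c χ : ℝ) (ψ w : ℝ → ℝ) : Prop where
  cont : ContinuousOn ψ (Set.Icc (-1) 1)
  dψ : ∀ x ∈ Set.Ioo (-1 : ℝ) 1, HasDerivAt ψ (w x / (1 - x ^ 2)) x
  dw : ∀ x ∈ Set.Ioo (-1 : ℝ) 1, HasDerivAt w (-(qq c χ x * ψ x)) x

lemma Sol.refl {c χ : ℝ} {ψ w : ℝ → ℝ} (h : Sol c χ ψ w) :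
    Sol c χ (fun x => ψ (-x)) (fun x => - w (-x)) where
  cont := h.cont.comp continuousOn_neg (fun x hx => ⟨by linarith [hx.2], by linarith [hx.1]⟩)
  dψ x hx := by
    have h1 := h.dψ (-x) ⟨by linarith [hx.2], by linarith [hx.1]⟩
    have := HasDerivAt.scomp x h1 (hasDerivAt_neg x)
    refine HasDerivAt.congr_deriv this ?_
    simp; ring
  dw x hx := by
    have h1 := h.dw (-x) ⟨by linarith [hx.2], by linarith [hx.1]⟩
    have := (HasDerivAt.scomp x h1 (hasDerivAt_neg x)).neg
    refine HasDerivAt.congr_deriv this ?_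
    simp [qq]

lemma Sol.neg {c χ : ℝ} {ψ w : ℝ → ℝ} (h : Sol c χ ψ w) :
    Sol c χ (fun x => - ψ x) (fun x => - w x) where
  cont := h.cont.neg
  dψ x hx := by
    exact (h.dψ x hx).neg.congr_deriv (by ring)
  dw x hx := by
    exact (h.dw x hx).neg.congr_deriv (by ring)

/-- Riccati for the upper bound. -/
lemma R2_deriv {c χ : ℝ} {ψ w : ℝ → ℝ} (h : Sol c χ ψ w) (hX : c ^ 2 < χ) {x : ℝ}
    (hx : x ∈ Set.Ioo (-1 : ℝ) 1) (h0 : ψ x ≠ 0) :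
    ∃ d, HasDerivAt (fun x => arctan (w x / (SS c χ x * ψ x) - gam c χ x) + TT c χ x) d x ∧
      d ≤ 0 := by
  have hS := S_pos hX hx
  have hq := q_pos' hX hx
  have hp := p_pos hx
  have hR := ((h.dw x hx).div ((hasDerivAt_S hX hx).mul (h.dψ x hx)) (mul_ne_zero hS.ne' h0)).sub
    (hasDerivAt_gam hX hx)
  have hA := hR.arctan.add (hasDerivAt_T hX hx)
  refine ⟨_, hA, ?_⟩
  simp only [Pi.mul_apply, Pi.sub_apply, Pi.div_apply]
  set R := w x / (SS c χ x * ψ x) - gam c χ x with hRdef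
  have hw : w x = SS c χ x * ψ x * (R + gam c χ x) := by
    rw [hRdef]; field_simp; ring
  have h2 := S_sq hX hx
  have key : ∀ d : ℝ, d ≤ - (SS c χ x / (1 - x ^ 2)) * (1 + R ^ 2) →
      1 / (1 + R ^ 2) * d + SS c χ x / (1 - x ^ 2) ≤ 0 := by
    intro d hd
    have : 0 < 1 + R ^ 2 := by positivity
    have h3 : 1 / (1 + R ^ 2) * d ≤ 1 / (1 + R ^ 2) * (- (SS c χ x / (1 - x ^ 2)) * (1 + R ^ 2)) :=
      mul_le_mul_of_nonneg_left hd (by positivity)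
    have h4 : 1 / (1 + R ^ 2) * (- (SS c χ x / (1 - x ^ 2)) * (1 + R ^ 2)) =
      - (SS c χ x / (1 - x ^ 2)) := by field_simp
    linarith
  apply key
  have hN := N_pos hX hx
  have hg : gam c χ x = x * NN c χ x / (2 * qq c χ x * SS c χ x) := rfl
  -- the value
  have hp2 : 1 - x ^ 2 = SS c χ x ^ 2 / qq c χ x := by rw [h2]; field_simp
  have hval : (-(qq c χ x * ψ x) * (SS c χ x * ψ x) -
      w x * (-x * NN c χ x / SS c χ x * ψ x + SS c χ x * (w x / (1 - x ^ 2)))) /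
      (SS c χ x * ψ x) ^ 2 =
      -(SS c χ x / (1 - x ^ 2)) * (1 + R ^ 2) + x ^ 2 * NN c χ x ^ 2 / (4 * qq c χ x * SS c χ x ^ 3) := by
    rw [hw, hg, hp2]
    generalize SS c χ x = S at *
    generalize qq c χ x = q at *
    generalize NN c χ x = N at *
    field_simp
    ring
  have hlast : x ^ 2 * NN c χ x ^ 2 / (4 * qq c χ x * SS c χ x ^ 3) ≤
      BB c χ x / (2 * qq c χ x * SS c χ x ^ 3) := by
    rw [div_le_div_iff₀ (by positivity) (by positivity)]
    have : x ^ 2 * NN c χ x ^ 2 ≤ 2 * BB c χ x := by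
      unfold BB
      have h5 : 0 ≤ NN c χ x * (1 - x ^ 2) * qq c χ x := by positivity
      have h6 : 0 ≤ x ^ 2 * ((qq c χ x - c ^ 2 * (1 - x ^ 2)) ^ 2 + 4 * (c ^ 2 * (1 - x ^ 2)) ^ 2) := by
        positivity
      have h7 : NN c χ x ^ 2 = (qq c χ x + c ^ 2 * (1 - x ^ 2)) ^ 2 := rfl
      rw [h7]
      nlinarith
    have h8 : 0 ≤ qq c χ x * SS c χ x ^ 3 := by positivity
    nlinarith [mul_le_mul_of_nonneg_right this h8]
  linarith

/-- Riccati for the lower bound. -/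
lemma R1_deriv {c χ X : ℝ} {ψ w : ℝ → ℝ} (h : Sol c χ ψ w) (hX : c ^ 2 < X) (hχ : χ ≤ X) {x : ℝ}
    (hx : x ∈ Set.Ioo (-1 : ℝ) 1) (h0 : w x ≠ 0) :
    ∃ d, HasDerivAt (fun x => arctan (gam c X x - SS c X x * ψ x / w x) + TT c X x) d x ∧
      0 < d := by
  have hS := S_pos hX hx
  have hq := q_pos' hX hx
  have hp := p_pos hx
  have hR := (hasDerivAt_gam hX hx).sub (((hasDerivAt_S hX hx).mul (h.dψ x hx)).div (h.dw x hx) h0)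
  have hA := hR.arctan.add (hasDerivAt_T hX hx)
  refine ⟨_, hA, ?_⟩
  simp only [Pi.mul_apply, Pi.sub_apply, Pi.div_apply]
  set R := gam c X x - SS c X x * ψ x / w x with hRdef
  have hw : ψ x = w x * (gam c X x - R) / SS c X x := by
    rw [hRdef]; field_simp; ring
  have h2 := S_sq hX hx
  have key : ∀ d : ℝ, - (SS c X x / (1 - x ^ 2)) * (1 + R ^ 2) < d →
      0 < 1 / (1 + R ^ 2) * d + SS c X x / (1 - x ^ 2) := by
    intro d hd
    have : 0 < 1 + R ^ 2 := by positivity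
    have h3 : 1 / (1 + R ^ 2) * (- (SS c X x / (1 - x ^ 2)) * (1 + R ^ 2)) < 1 / (1 + R ^ 2) * d :=
      mul_lt_mul_of_pos_left hd (by positivity)
    have h4 : 1 / (1 + R ^ 2) * (- (SS c X x / (1 - x ^ 2)) * (1 + R ^ 2)) =
      - (SS c X x / (1 - x ^ 2)) := by field_simp
    linarith
  apply key
  have hN := N_pos hX hx
  have hB := B_pos hX hx
  have hg : gam c X x = x * NN c X x / (2 * qq c X x * SS c X x) := rfl
  have hp2 : 1 - x ^ 2 = SS c X x ^ 2 / qq c X x := by rw [h2]; field_simp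
  have hqq : qq c χ x = qq c X x - (X - χ) := by unfold qq; ring
  have hval : ((-x * NN c X x / SS c X x * ψ x + SS c X x * (w x / (1 - x ^ 2))) * w x
      - SS c X x * ψ x * -(qq c χ x * ψ x)) / w x ^ 2 =
      (SS c X x / (1 - x ^ 2)) * (1 + R ^ 2) - x ^ 2 * NN c X x ^ 2 / (4 * qq c X x * SS c X x ^ 3)
        - (X - χ) * (gam c X x - R) ^ 2 / SS c X x := by
    rw [hqq, hw, hg, hp2]
    generalize SS c X x = S at *
    generalize qq c X x = q at *
    generalize NN c X x = N at *
    field_simp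
    ring
  have e1 : 0 < BB c X x / (2 * qq c X x * SS c X x ^ 3) := by positivity
  have e2 : 0 ≤ x ^ 2 * NN c X x ^ 2 / (4 * qq c X x * SS c X x ^ 3) := by positivity
  have e3 : 0 ≤ (X - χ) * (gam c X x - R) ^ 2 / SS c X x := by
    have : 0 ≤ X - χ := by linarith
    positivity
  linarith

open Filter Topology

/-- Zeros are at most `π` apart in phase. -/
lemma gap_le {c χ : ℝ} {ψ w : ℝ → ℝ} (h : Sol c χ ψ w) (hX : c ^ 2 < χ) {x y : ℝ}
    (hx : -1 ≤ x) (hxy : x < y) (hy : y ≤ 1) (h0 : ∀ t ∈ Set.Ioo x y, ψ t ≠ 0) :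
    TT c χ y - TT c χ x ≤ π := by
  have inner : ∀ s ∈ Set.Ioo x y, ∀ t ∈ Set.Ioo x y, s ≤ t → TT c χ t - TT c χ s ≤ π := by
    intro s hs t ht hst
    have hmem : ∀ z ∈ Set.Icc s t, z ∈ Set.Ioo (-1 : ℝ) 1 ∧ ψ z ≠ 0 := fun z hz =>
      ⟨⟨by linarith [hs.1, hz.1], by linarith [ht.2, hz.2]⟩,
        h0 z ⟨by linarith [hs.1, hz.1], by linarith [ht.2, hz.2]⟩⟩
    have hd : ∀ z ∈ Set.Icc s t, ∃ d, HasDerivAt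
        (fun x => arctan (w x / (SS c χ x * ψ x) - gam c χ x) + TT c χ x) d z ∧ d ≤ 0 :=
      fun z hz => R2_deriv h hX (hmem z hz).1 (hmem z hz).2
    have hanti : AntitoneOn (fun x => arctan (w x / (SS c χ x * ψ x) - gam c χ x) + TT c χ x)
        (Set.Icc s t) := by
      apply antitoneOn_of_deriv_nonpos (convex_Icc s t)
      · intro z hz
        obtain ⟨d, h1, -⟩ := hd z hz
        exact h1.continuousAt.continuousWithinAt
      · intro z hz
        obtain ⟨d, h1, -⟩ := hd z (interior_subset hz)
        exact h1.differentiableAt.differentiableWithinAt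
      · intro z hz
        obtain ⟨d, h1, h2⟩ := hd z (interior_subset hz)
        rw [h1.deriv]; exact h2
    have := hanti (Set.left_mem_Icc.2 hst) (Set.right_mem_Icc.2 hst) hst
    simp only at this
    have a1 := Real.arctan_lt_pi_div_two (w s / (SS c χ s * ψ s) - gam c χ s)
    have a2 := Real.neg_pi_div_two_lt_arctan (w t / (SS c χ t * ψ t) - gam c χ t)
    linarith
  have hm : x < (x + y) / 2 ∧ (x + y) / 2 < y := ⟨by linarith, by linarith⟩
  have step1 : ∀ s ∈ Set.Ioo x ((x + y) / 2), TT c χ y - TT c χ s ≤ π := by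
    intro s hs
    have : Tendsto (fun t => TT c χ t - TT c χ s) (𝓝[<] y) (𝓝 (TT c χ y - TT c χ s)) :=
      (((continuous_T c χ).sub continuous_const).tendsto y).mono_left nhdsWithin_le_nhds
    refine le_of_tendsto this ?_
    filter_upwards [Ioo_mem_nhdsLT hm.2] with t ht
    exact inner s ⟨hs.1, by linarith [hs.2]⟩ t ⟨by linarith [ht.1], ht.2⟩ (by linarith [ht.1, hs.2])
  have : Tendsto (fun s => TT c χ y - TT c χ s) (𝓝[>] x) (𝓝 (TT c χ y - TT c χ x)) :=
    ((continuous_const.sub (continuous_T c χ)).tendsto x).mono_left nhdsWithin_le_nhds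
  refine le_of_tendsto this ?_
  filter_upwards [Ioo_mem_nhdsGT hm.1] with s hs
  exact step1 s hs

lemma upper_aux {T : ℝ → ℝ} {a : ℝ} (Z : Finset ℝ) :
    ∀ b, a < b → (∀ z ∈ Z, a < z ∧ z < b) →
    (∀ x y, a ≤ x → x < y → y ≤ b → (∀ t ∈ Set.Ioo x y, t ∉ Z) → T y - T x ≤ π) →
    T b - T a ≤ (Z.card + 1) * π := by
  induction Z using Finset.induction_on_max with
  | empty =>
    intro b hab _ hg
    have := hg a b le_rfl hab le_rfl (by simp)
    simpa using this
  | insert m Z hm ih =>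
    intro b hab hZ hg
    have hmb := hZ m (Finset.mem_insert_self _ _)
    have h1 := ih m hmb.1
      (fun z hz => ⟨(hZ z (Finset.mem_insert_of_mem hz)).1, hm z hz⟩) (by
        intro x y hx hxy hy hno
        refine hg x y hx hxy (by linarith) ?_
        intro t ht hmem
        rcases Finset.mem_insert.1 hmem with rfl | hmem
        · linarith [ht.2]
        · exact hno t ht hmem)
    have h2 := hg m b hmb.1.le hmb.2 le_rfl (by
      intro t ht hmem
      rcases Finset.mem_insert.1 hmem with rfl | hmem
      · exact lt_irrefl _ ht.1
      · exact lt_irrefl _ (ht.1.trans (hm t hmem)))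
    rw [Finset.card_insert_of_notMem (fun hh => lt_irrefl _ (hm m hh))]
    push_cast
    linarith

/-- Uniqueness: a solution with `ψ m = w m = 0` vanishes right of `m`. -/
lemma no_double {c χ : ℝ} {ψ w : ℝ → ℝ} (h : Sol c χ ψ w)
    (hfin : {x | x ∈ Set.Ioo (-1 : ℝ) 1 ∧ ψ x = 0}.Finite) {m : ℝ}
    (hm : m ∈ Set.Ioo (-1 : ℝ) 1) (h0 : ψ m = 0) : w m ≠ 0 := by
  intro hw
  obtain ⟨r, hr1, hr2⟩ := exists_between hm.2
  have hsub : ∀ z ∈ Set.Icc m r, z ∈ Set.Ioo (-1 : ℝ) 1 := fun z hz =>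
    ⟨by linarith [hm.1, hz.1], by linarith [hz.2]⟩
  have hcont : ContinuousOn (fun x => |1 / (1 - x ^ 2) - qq c χ x|) (Set.Icc m r) := by
    apply ContinuousOn.abs
    apply ContinuousOn.sub
    · apply ContinuousOn.div continuousOn_const (by fun_prop)
      intro z hz
      exact (p_pos (hsub z hz)).ne'
    · unfold qq; fun_prop
  obtain ⟨K, hK⟩ := (isCompact_Icc.image_of_continuousOn hcont).bddAbove
  have hK' : ∀ z ∈ Set.Icc m r, |1 / (1 - z ^ 2) - qq c χ z| ≤ K := fun z hz =>
    hK (Set.mem_image_of_mem _ hz)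
  have hd : ∀ z ∈ Set.Icc m r, HasDerivAt (fun x => (ψ x ^ 2 + w x ^ 2) * Real.exp (-K * x))
      ((2 * ψ z * (w z / (1 - z ^ 2)) + 2 * w z * (-(qq c χ z * ψ z))) * Real.exp (-K * z)
        + (ψ z ^ 2 + w z ^ 2) * (Real.exp (-K * z) * (-K))) z := by
    intro z hz
    have e1 := (h.dψ z (hsub z hz)).pow 2
    have e2 := (h.dw z (hsub z hz)).pow 2
    have e3 : HasDerivAt (fun x => Real.exp (-K * x)) (Real.exp (-K * z) * (-K)) z := by
      have := ((hasDerivAt_id z).const_mul (-K)).exp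
      simpa using this
    have := (e1.add e2).mul e3
    refine this.congr_deriv ?_
    simp
  have hanti : AntitoneOn (fun x => (ψ x ^ 2 + w x ^ 2) * Real.exp (-K * x)) (Set.Icc m r) := by
    apply antitoneOn_of_deriv_nonpos (convex_Icc m r)
    · exact fun z hz => (hd z hz).continuousAt.continuousWithinAt
    · exact fun z hz => (hd z (interior_subset hz)).differentiableAt.differentiableWithinAt
    · intro z hz
      have hz' := interior_subset hz
      rw [(hd z hz').deriv]
      have hk := hK' z hz'
      have e : (2 * ψ z * (w z / (1 - z ^ 2)) + 2 * w z * (-(qq c χ z * ψ z))) * Real.exp (-K * z)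
        + (ψ z ^ 2 + w z ^ 2) * (Real.exp (-K * z) * (-K)) =
        Real.exp (-K * z) * ((2 * ψ z * w z) * (1 / (1 - z ^ 2) - qq c χ z)
          - K * (ψ z ^ 2 + w z ^ 2)) := by ring
      rw [e]
      apply mul_nonpos_of_nonneg_of_nonpos (Real.exp_pos _).le
      have b1 : (2 * ψ z * w z) * (1 / (1 - z ^ 2) - qq c χ z) ≤
          |2 * ψ z * w z| * |1 / (1 - z ^ 2) - qq c χ z| := by
        rw [← abs_mul]; exact le_abs_self _
      have b2 : |2 * ψ z * w z| ≤ ψ z ^ 2 + w z ^ 2 :=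
        abs_le.2 ⟨by nlinarith [sq_nonneg (ψ z + w z)], by nlinarith [sq_nonneg (ψ z - w z)]⟩
      have b3 : |2 * ψ z * w z| * |1 / (1 - z ^ 2) - qq c χ z| ≤ (ψ z ^ 2 + w z ^ 2) * K :=
        mul_le_mul b2 hk (abs_nonneg _) (by positivity)
      linarith
  have hz0 : ∀ z ∈ Set.Icc m r, ψ z = 0 := by
    intro z hz
    have := hanti (Set.left_mem_Icc.2 hr1.le) hz hz.1
    simp only [h0, hw] at this
    have hE := Real.exp_pos (-K * z)
    have : (ψ z ^ 2 + w z ^ 2) ≤ 0 := by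
      by_contra hcon
      push Not at hcon
      nlinarith [mul_pos hcon hE]
    have : ψ z ^ 2 = 0 := by nlinarith [sq_nonneg (ψ z), sq_nonneg (w z)]
    exact pow_eq_zero_iff (two_ne_zero) |>.1 this
  exact (Set.Icc_infinite hr1) (hfin.subset fun z hz => ⟨hsub z hz, hz0 z hz⟩)

/-- Behaviour at the right end. -/
lemma w_le {c χ X : ℝ} {ψ w : ℝ → ℝ} (h : Sol c χ ψ w) (hχ : χ ≤ X) (hX : c ^ 2 < X)
    {z : ℝ} (hz : z ∈ Set.Ioo (-1 : ℝ) 1)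
    (hψ : ∀ x ∈ Set.Ico z 1, 0 ≤ ψ x ∧ ψ x ≤ ψ 1)
    {x : ℝ} (hx0 : 0 ≤ x) (hzx : z ≤ x) (hx1 : x < 1) :
    w x ≤ (1 - x) * (qq c X x * ψ 1) := by
  by_contra hcon
  push Not at hcon
  set K := qq c X x * ψ 1 with hK
  set δ := w x - (1 - x) * K with hδ
  have hδ0 : 0 < δ := by linarith
  have hmem : ∀ y ∈ Set.Ico x 1, y ∈ Set.Ioo (-1 : ℝ) 1 := fun y hy =>
    ⟨by linarith [hy.1], hy.2⟩
  have hqx : 0 < qq c X x := q_pos hX ⟨by linarith, hx1.le⟩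
  have hψ1 : 0 ≤ ψ 1 := (hψ z ⟨le_rfl, hz.2⟩).1.trans (hψ z ⟨le_rfl, hz.2⟩).2
  have hK0 : 0 ≤ K := by positivity
  have hmono : MonotoneOn (fun y => w y + K * y) (Set.Ico x 1) := by
    have hd : ∀ y ∈ Set.Ico x 1, HasDerivAt (fun y => w y + K * y) (-(qq c χ y * ψ y) + K) y := by
      intro y hy
      have := (h.dw y (hmem y hy)).add ((hasDerivAt_id y).const_mul K)
      exact this.congr_deriv (by simp)
    apply monotoneOn_of_deriv_nonneg (convex_Ico x 1)
    · exact fun y hy => (hd y hy).continuousAt.continuousWithinAt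
    · exact fun y hy => (hd y (interior_subset hy)).differentiableAt.differentiableWithinAt
    · intro y hy
      have hy' := interior_subset hy
      rw [(hd y hy').deriv]
      have b := hψ y ⟨hzx.trans hy'.1, hy'.2⟩
      have c1 : qq c χ y ≤ qq c X x := by
        unfold qq
        have : x ^ 2 ≤ y ^ 2 := by nlinarith [hy'.1]
        nlinarith [sq_nonneg c]
      have c2 : qq c χ y * ψ y ≤ qq c X x * ψ y := mul_le_mul_of_nonneg_right c1 b.1
      have c3 : qq c X x * ψ y ≤ K := mul_le_mul_of_nonneg_left b.2 hqx.le
      linarith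
  have hwlow : ∀ y ∈ Set.Ico x 1, δ ≤ w y := by
    intro y hy
    have := hmono (Set.left_mem_Ico.2 hx1) hy hy.1
    simp only at this
    nlinarith [hy.2]
  have hmono2 : MonotoneOn (fun y => ψ y + δ / 2 * Real.log (1 - y)) (Set.Ico x 1) := by
    have hd : ∀ y ∈ Set.Ico x 1, HasDerivAt (fun y => ψ y + δ / 2 * Real.log (1 - y))
        (w y / (1 - y ^ 2) + δ / 2 * (-1 / (1 - y))) y := by
      intro y hy
      have e := ((hasDerivAt_id y).const_sub 1).log (by simp only [id]; linarith [hy.2])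
      exact (h.dψ y (hmem y hy)).add (e.const_mul (δ / 2))
    apply monotoneOn_of_deriv_nonneg (convex_Ico x 1)
    · exact fun y hy => (hd y hy).continuousAt.continuousWithinAt
    · exact fun y hy => (hd y (interior_subset hy)).differentiableAt.differentiableWithinAt
    · intro y hy
      have hy' := interior_subset hy
      rw [(hd y hy').deriv]
      have hp := p_pos (hmem y hy')
      have h1y : 0 < 1 - y := by linarith [hy'.2]
      have e1 : δ / (1 - y ^ 2) ≤ w y / (1 - y ^ 2) :=
        div_le_div_of_nonneg_right (hwlow y hy') hp.le
      have e2 : δ / 2 * (1 / (1 - y)) ≤ δ / (1 - y ^ 2) := by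
        have : δ / 2 * (1 / (1 - y)) = δ / (2 * (1 - y)) := by field_simp
        rw [this]
        apply div_le_div_of_nonneg_left hδ0.le hp
        nlinarith [hy'.2, hy'.1]
      have e3 : δ / 2 * (-1 / (1 - y)) = - (δ / 2 * (1 / (1 - y))) := by ring
      linarith
  have htend : Tendsto (fun y : ℝ => ψ 1 + δ / 2 * Real.log (1 - y)) (𝓝[<] 1) atBot := by
    apply tendsto_atBot_add_const_left
    apply Tendsto.const_mul_atBot (by positivity)
    apply Real.tendsto_log_nhdsGT_zero.comp
    apply tendsto_nhdsWithin_of_tendsto_nhds_of_eventually_within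
    · have : Tendsto (fun y : ℝ => 1 - y) (𝓝 1) (𝓝 (1 - 1)) :=
        (continuous_const.sub continuous_id).tendsto 1
      rw [sub_self] at this
      exact this.mono_left nhdsWithin_le_nhds
    · filter_upwards [self_mem_nhdsWithin] with y hy
      simp only [Set.mem_Iio] at hy
      simp only [Set.mem_Ioi]; linarith
  have hev := htend.eventually (eventually_lt_atBot (ψ x + δ / 2 * Real.log (1 - x)))
  obtain ⟨y, hy1, hy2⟩ := (hev.and (Ioo_mem_nhdsLT hx1)).exists
  have := hmono2 (Set.left_mem_Ico.2 hx1) ⟨hy2.1.le, hy2.2⟩ hy2.1.le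
  simp only at this
  have := (hψ y ⟨by linarith [hy2.1], hy2.2⟩).2
  linarith

lemma R1_tendsto_one {c χ X : ℝ} {ψ w : ℝ → ℝ} (h : Sol c χ ψ w) (hχ : χ ≤ X) (hX : c ^ 2 < X)
    {z : ℝ} (hz : z ∈ Set.Ioo (-1 : ℝ) 1)
    (hw : ∀ x ∈ Set.Ico z 1, 0 < w x) (hψ : ∀ x ∈ Set.Ico z 1, 0 ≤ ψ x ∧ ψ x ≤ ψ 1)
    (hψ1 : 0 < ψ 1) :
    Tendsto (fun x => gam c X x - SS c X x * ψ x / w x) (𝓝[<] 1) atBot := by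
  have hq1 : 0 < qq c X 1 := q_pos hX ⟨by norm_num, le_rfl⟩
  have hqc : Continuous (qq c X) := by unfold qq; fun_prop
  have hSc : Continuous (SS c X) := by unfold SS qq; fun_prop
  have hψt : Tendsto ψ (𝓝[<] 1) (𝓝 (ψ 1)) := by
    have := h.cont 1 ⟨by norm_num, le_rfl⟩
    refine this.mono_left ?_
    rw [nhdsWithin_le_iff]
    filter_upwards [Ioo_mem_nhdsLT (show (-1 : ℝ) < 1 by norm_num)] with y hy
    exact ⟨hy.1.le, hy.2.le⟩
  -- numerator
  have hnum : Tendsto (fun x => x * (1 + c ^ 2 * (1 - x ^ 2) / qq c X x) / 2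
      - (1 + x) * ψ x / ψ 1) (𝓝[<] 1) (𝓝 (-(3 / 2))) := by
    have t1 : Tendsto (fun x : ℝ => x) (𝓝[<] 1) (𝓝 1) := tendsto_id.mono_left nhdsWithin_le_nhds
    have t2 : Tendsto (qq c X) (𝓝[<] 1) (𝓝 (qq c X 1)) :=
      (hqc.tendsto 1).mono_left nhdsWithin_le_nhds
    have t3 : Tendsto (fun x : ℝ => c ^ 2 * (1 - x ^ 2)) (𝓝[<] 1) (𝓝 (c ^ 2 * (1 - 1 ^ 2))) :=
      ((by fun_prop : Continuous (fun x : ℝ => c ^ 2 * (1 - x ^ 2))).tendsto 1).mono_left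
        nhdsWithin_le_nhds
    have t4 := ((t1.mul ((t3.div t2 hq1.ne').const_add 1)).div_const 2).sub
      ((((t1.const_add 1).mul hψt)).div_const (ψ 1))
    have e : 1 * (1 + c ^ 2 * (1 - 1 ^ 2) / qq c X 1) / 2 - (1 + 1) * ψ 1 / ψ 1 = -(3 / 2) := by
      have e1 : (1 + 1) * ψ 1 / ψ 1 = 2 := by field_simp; norm_num
      rw [e1]; norm_num
    rw [e] at t4
    exact t4
  have hinv : Tendsto (fun x => (SS c X x)⁻¹) (𝓝[<] 1) atTop := by
    apply Tendsto.inv_tendsto_nhdsGT_zero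
    apply tendsto_nhdsWithin_of_tendsto_nhds_of_eventually_within
    · have := (hSc.tendsto 1).mono_left (nhdsWithin_le_nhds (s := Set.Iio 1))
      simpa [SS] using this
    · filter_upwards [Ioo_mem_nhdsLT (show (-1 : ℝ) < 1 by norm_num)] with y hy
      exact S_pos hX hy
  have hprod := hinv.atTop_mul_neg (by norm_num : -(3 / 2 : ℝ) < 0) hnum
  refine tendsto_atBot_mono' _ ?_ hprod
  filter_upwards [Ioo_mem_nhdsLT (show max z 0 < 1 from max_lt hz.2 one_pos)] with x hx
  have hzx : z < x := lt_of_le_of_lt (le_max_left _ _) hx.1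
  have h0x : 0 < x := lt_of_le_of_lt (le_max_right _ _) hx.1
  have hxm : x ∈ Set.Ioo (-1 : ℝ) 1 := ⟨by linarith, hx.2⟩
  have hle := w_le h hχ hX hz hψ h0x.le hzx.le hx.2
  have hwx := hw x ⟨hzx.le, hx.2⟩
  have hψx := hψ x ⟨hzx.le, hx.2⟩
  have hS := S_pos hX hxm
  have hq := q_pos' hX hxm
  have h2 := S_sq hX hxm
  have h1x : 0 < 1 - x := by linarith [hx.2]
  have key : (SS c X x)⁻¹ * ((1 + x) * ψ x / ψ 1) ≤ SS c X x * ψ x / w x := by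
    have e1 : SS c X x * ψ x / ((1 - x) * (qq c X x * ψ 1)) ≤ SS c X x * ψ x / w x :=
      div_le_div_of_nonneg_left (mul_nonneg hS.le hψx.1) hwx hle
    have e2 : SS c X x * ψ x / ((1 - x) * (qq c X x * ψ 1)) =
        (SS c X x)⁻¹ * ((1 + x) * ψ x / ψ 1) := by
      field_simp
      rw [h2]; ring
    linarith
  have hg : gam c X x = (SS c X x)⁻¹ * (x * (1 + c ^ 2 * (1 - x ^ 2) / qq c X x) / 2) := by
    unfold gam NN
    field_simp
  rw [hg, mul_sub]
  linarith

lemma quarter_pos {c χ X : ℝ} {ψ w : ℝ → ℝ} (h : Sol c χ ψ w) (hχ : χ ≤ X) (hX : c ^ 2 < X)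
    {z b : ℝ} (hz : z ∈ Set.Ioo (-1 : ℝ) 1) (h0 : ψ z = 0) (hzb : z < b) (hb1 : b ≤ 1)
    (hw : ∀ x ∈ Set.Ico z b, 0 < w x) (hb : b = 1 ∨ (b < 1 ∧ w b = 0)) :
    π / 2 + arctan (gam c X z) < TT c X b - TT c X z := by
  have hmem : ∀ x ∈ Set.Ico z b, x ∈ Set.Ioo (-1 : ℝ) 1 := fun x hx =>
    ⟨by linarith [hz.1, hx.1], by linarith [hx.2]⟩
  have hψm : StrictMonoOn ψ (Set.Icc z b) := by
    apply strictMonoOn_of_deriv_pos (convex_Icc z b)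
    · exact h.cont.mono (Set.Icc_subset_Icc hz.1.le hb1)
    · intro x hx
      rw [interior_Icc] at hx
      have hx' : x ∈ Set.Ico z b := ⟨hx.1.le, hx.2⟩
      rw [(h.dψ x (hmem x hx')).deriv]
      exact div_pos (hw x hx') (p_pos (hmem x hx'))
  have hψb : 0 < ψ b := by
    rw [← h0]; exact hψm (Set.left_mem_Icc.2 hzb.le) (Set.right_mem_Icc.2 hzb.le) hzb
  have hψx : ∀ x ∈ Set.Ico z b, 0 ≤ ψ x ∧ ψ x ≤ ψ b := by
    intro x hx
    constructor
    · rw [← h0]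
      exact hψm.monotoneOn (Set.left_mem_Icc.2 hzb.le) ⟨hx.1, hx.2.le⟩ hx.1
    · exact hψm.monotoneOn ⟨hx.1, hx.2.le⟩ (Set.right_mem_Icc.2 hzb.le) hx.2.le
  have hlim : Tendsto (fun x => gam c X x - SS c X x * ψ x / w x) (𝓝[<] b) atBot := by
    rcases hb with rfl | ⟨hb1, hwb⟩
    · exact R1_tendsto_one h hχ hX hz hw hψx hψb
    · have hbm : b ∈ Set.Ioo (-1 : ℝ) 1 := ⟨by linarith [hz.1], hb1⟩
      have t1 : Tendsto (gam c X) (𝓝[<] b) (𝓝 (gam c X b)) :=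
        (hasDerivAt_gam hX hbm).continuousAt.tendsto.mono_left nhdsWithin_le_nhds
      have t2 : Tendsto (fun x => SS c X x * ψ x) (𝓝[<] b) (𝓝 (SS c X b * ψ b)) :=
        ((hasDerivAt_S hX hbm).continuousAt.tendsto.mul
          (h.dψ b hbm).continuousAt.tendsto).mono_left nhdsWithin_le_nhds
      have t3 : Tendsto (fun x => (w x)⁻¹) (𝓝[<] b) atTop := by
        apply Tendsto.inv_tendsto_nhdsGT_zero
        apply tendsto_nhdsWithin_of_tendsto_nhds_of_eventually_within
        · have := (h.dw b hbm).continuousAt.tendsto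
          rw [hwb] at this
          exact this.mono_left nhdsWithin_le_nhds
        · filter_upwards [Ioo_mem_nhdsLT hzb] with y hy
          exact hw y ⟨hy.1.le, hy.2⟩
      have t4 := t2.pos_mul_atTop (mul_pos (S_pos hX hbm) hψb) t3
      have t5 := t1.add_atBot (tendsto_neg_atTop_atBot.comp t4)
      refine t5.congr (fun x => ?_)
      simp only [Function.comp]
      ring
  have hΦlim : Tendsto (fun x => arctan (gam c X x - SS c X x * ψ x / w x) + TT c X x) (𝓝[<] b)
      (𝓝 (-(π / 2) + TT c X b)) :=
    ((Real.tendsto_arctan_atBot.mono_right nhdsWithin_le_nhds).comp hlim).add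
      (((continuous_T c X).tendsto b).mono_left nhdsWithin_le_nhds)
  have hΦ : StrictMonoOn (fun x => arctan (gam c X x - SS c X x * ψ x / w x) + TT c X x)
      (Set.Ico z b) := by
    have hd : ∀ x ∈ Set.Ico z b, ∃ d, HasDerivAt
        (fun x => arctan (gam c X x - SS c X x * ψ x / w x) + TT c X x) d x ∧ 0 < d :=
      fun x hx => R1_deriv h hX hχ (hmem x hx) (hw x hx).ne'
    apply strictMonoOn_of_deriv_pos (convex_Ico z b)
    · intro x hx
      obtain ⟨d, h1, -⟩ := hd x hx
      exact h1.continuousAt.continuousWithinAt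
    · intro x hx
      obtain ⟨d, h1, h2⟩ := hd x (interior_subset hx)
      rw [h1.deriv]; exact h2
  have hm : z < (z + b) / 2 ∧ (z + b) / 2 < b := ⟨by linarith, by linarith⟩
  have s1 := hΦ (Set.left_mem_Ico.2 hzb) ⟨hm.1.le, hm.2⟩ hm.1
  have s2 := ge_of_tendsto hΦlim (by
    filter_upwards [Ioo_mem_nhdsLT hm.2] with x hx
    exact hΦ.monotoneOn ⟨hm.1.le, hm.2⟩ ⟨by linarith [hm.1, hx.1], hx.2⟩ hx.1.le)
  simp only [h0, mul_zero, zero_div, sub_zero] at s1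
  linarith

lemma quarter {c χ X : ℝ} {ψ w : ℝ → ℝ} (h : Sol c χ ψ w) (hχ : χ ≤ X) (hX : c ^ 2 < X)
    {z b : ℝ} (hz : z ∈ Set.Ioo (-1 : ℝ) 1) (h0 : ψ z = 0) (hzb : z < b) (hb1 : b ≤ 1)
    (hw : ∀ x ∈ Set.Ico z b, w x ≠ 0) (hb : b = 1 ∨ (b < 1 ∧ w b = 0)) :
    π / 2 + arctan (gam c X z) < TT c X b - TT c X z := by
  have hcw : ContinuousOn w (Set.Ico z b) := fun x hx =>
    (h.dw x ⟨by linarith [hz.1, hx.1], by linarith [hx.2]⟩).continuousAt.continuousWithinAt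
  have hpre : IsPreconnected (Set.Ico z b) := isPreconnected_Ico
  have hzm : z ∈ Set.Ico z b := Set.left_mem_Ico.2 hzb
  rcases lt_or_gt_of_ne (hw z hzm) with hneg | hpos
  · have hneg' : ∀ x ∈ Set.Ico z b, w x < 0 := by
      intro x hx
      by_contra hcon
      push Not at hcon
      obtain ⟨y, hy, hy0⟩ := hpre.intermediate_value hzm hx hcw ⟨hneg.le, hcon⟩
      exact hw y hy hy0
    refine quarter_pos h.neg hχ hX hz (by simp [h0]) hzb hb1
      (fun x hx => neg_pos.2 (hneg' x hx)) ?_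
    simpa using hb
  · have hpos' : ∀ x ∈ Set.Ico z b, 0 < w x := by
      intro x hx
      by_contra hcon
      push Not at hcon
      obtain ⟨y, hy, hy0⟩ := hpre.intermediate_value hx hzm hcw ⟨hcon, hpos.le⟩
      exact hw y hy hy0
    exact quarter_pos h hχ hX hz h0 hzb hb1 hpos' hb

/-- Next critical point to the right. -/
lemma right_crit {c χ X : ℝ} {ψ w : ℝ → ℝ} (h : Sol c χ ψ w) (hχ : χ ≤ X) (hX : c ^ 2 < X)
    {z : ℝ} (hz : z ∈ Set.Ioo (-1 : ℝ) 1) (h0 : ψ z = 0) (hwz : w z ≠ 0) :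
    ∃ b, z < b ∧ b ≤ 1 ∧ (b = 1 ∨ (b < 1 ∧ w b = 0)) ∧ (∀ x ∈ Set.Ico z b, w x ≠ 0) ∧
      π / 2 + arctan (gam c X z) < TT c X b - TT c X z := by
  suffices hs : ∃ b, z < b ∧ b ≤ 1 ∧ (b = 1 ∨ (b < 1 ∧ w b = 0)) ∧ (∀ x ∈ Set.Ico z b, w x ≠ 0) by
    obtain ⟨b, h1, h2, h3, h4⟩ := hs
    exact ⟨b, h1, h2, h3, h4, quarter h hχ hX hz h0 h1 h2 h4 h3⟩
  by_cases hex : ∃ e ∈ Set.Ioo z 1, w e = 0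
  · obtain ⟨e, he, hwe⟩ := hex
    have hcw : ContinuousOn w (Set.Icc z e) := fun x hx =>
      (h.dw x ⟨by linarith [hz.1, hx.1], by linarith [hx.2, he.2]⟩).continuousAt.continuousWithinAt
    have hcl : IsClosed (Set.Icc z e ∩ w ⁻¹' {0}) :=
      hcw.preimage_isClosed_of_isClosed isClosed_Icc isClosed_singleton
    have hcomp : IsCompact (Set.Icc z e ∩ w ⁻¹' {0}) :=
      isCompact_Icc.of_isClosed_subset hcl Set.inter_subset_left
    obtain ⟨b, hb, hmin⟩ := hcomp.exists_isLeast ⟨e, ⟨he.1.le, le_rfl⟩, hwe⟩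
    have hwb : w b = 0 := hb.2
    have hb1 : b < 1 := by linarith [hb.1.2, he.2]
    have hzb : z < b := lt_of_le_of_ne hb.1.1 (by rintro rfl; exact hwz hwb)
    refine ⟨b, hzb, hb1.le, Or.inr ⟨hb1, hwb⟩, ?_⟩
    intro x hx hwx
    have := hmin (a := x) ⟨⟨hx.1, by linarith [hx.2, hb.1.2]⟩, hwx⟩
    linarith [hx.2]
  · push Not at hex
    refine ⟨1, hz.2, le_rfl, Or.inl rfl, ?_⟩
    intro x hx
    rcases eq_or_lt_of_le hx.1 with rfl | hlt
    · exact hwz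
    · exact hex x ⟨hlt, hx.2⟩

lemma left_crit {c χ X : ℝ} {ψ w : ℝ → ℝ} (h : Sol c χ ψ w) (hχ : χ ≤ X) (hX : c ^ 2 < X)
    {z : ℝ} (hz : z ∈ Set.Ioo (-1 : ℝ) 1) (h0 : ψ z = 0) (hwz : w z ≠ 0) :
    ∃ a, a < z ∧ -1 ≤ a ∧ (a = -1 ∨ (-1 < a ∧ w a = 0)) ∧ (∀ x ∈ Set.Ioc a z, w x ≠ 0) ∧
      π / 2 - arctan (gam c X z) < TT c X z - TT c X a := by
  obtain ⟨b, h1, h2, h3, h4, h5⟩ := right_crit h.refl hχ hX (z := -z)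
    ⟨by linarith [hz.2], by linarith [hz.1]⟩ (by simpa using h0) (by simpa using hwz)
  refine ⟨-b, by linarith, by linarith, ?_, ?_, ?_⟩
  · rcases h3 with rfl | ⟨h3, h3'⟩
    · exact Or.inl rfl
    · exact Or.inr ⟨by linarith, by simpa using h3'⟩
  · intro x hx
    have := h4 (-x) ⟨by linarith [hx.2], by linarith [hx.1]⟩
    simpa using this
  · rw [gam_odd, T_odd, Real.arctan_neg] at h5
    rw [T_odd]
    linarith

lemma lower_aux {c χ X : ℝ} {ψ w : ℝ → ℝ} (h : Sol c χ ψ w) (hχ : χ ≤ X) (hX : c ^ 2 < X)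
    (hfin : {x | x ∈ Set.Ioo (-1 : ℝ) 1 ∧ ψ x = 0}.Finite) (Z : Finset ℝ) :
    ∀ β, -1 ≤ β → (β = -1 ∨ β = 1 ∨ w β = 0) → (∀ z ∈ Z, z ∈ Set.Ioo (-1 : ℝ) 1 ∧ ψ z = 0) →
      (∀ z ∈ Z, z < β) →
      Z.card * π ≤ TT c X β - TT c X (-1) ∧ (Z.Nonempty → Z.card * π < TT c X β - TT c X (-1)) := by
  induction Z using Finset.induction_on_max with
  | empty =>
    intro β hβ _ _ _
    have := T_mono c X hβ
    simp only [Finset.card_empty, Nat.cast_zero, zero_mul, Finset.not_nonempty_empty,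
      false_imp_iff, and_true]
    linarith
  | insert m Z hm ih =>
    intro β hβ hβc hZ hlt
    have hmm := hZ m (Finset.mem_insert_self _ _)
    have hmβ := hlt m (Finset.mem_insert_self _ _)
    have hwm := no_double h hfin hmm.1 hmm.2
    obtain ⟨b, b1, b2, b3, b4, b5⟩ := right_crit h hχ hX hmm.1 hmm.2 hwm
    obtain ⟨a, a1, a2, a3, a4, a5⟩ := left_crit h hχ hX hmm.1 hmm.2 hwm
    have hbβ : b ≤ β := by
      by_contra hcon
      push Not at hcon
      rcases hβc with rfl | rfl | hw0
      · linarith [hmm.1.1]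
      · linarith
      · exact b4 β ⟨hmβ.le, hcon⟩ hw0
    have hIH := ih a a2 (by
        rcases a3 with a3 | a3
        · exact Or.inl a3
        · exact Or.inr (Or.inr a3.2))
      (fun z hz => hZ z (Finset.mem_insert_of_mem hz)) (by
        intro z hz
        have hzm := hm z hz
        have hz1 := hZ z (Finset.mem_insert_of_mem hz)
        by_contra hcon
        push Not at hcon
        obtain ⟨e, he, hde⟩ := exists_hasDerivAt_eq_zero (f := ψ)
          (f' := fun x => w x / (1 - x ^ 2)) hzm
          (h.cont.mono (Set.Icc_subset_Icc hz1.1.1.le hmm.1.2.le)) (by rw [hz1.2, hmm.2])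
          (fun x hx => h.dψ x ⟨by linarith [hx.1, hz1.1.1], by linarith [hx.2, hmm.1.2]⟩)
        have hp : 0 < 1 - e ^ 2 :=
          p_pos ⟨by linarith [he.1, hz1.1.1], by linarith [he.2, hmm.1.2]⟩
        rcases div_eq_zero_iff.1 hde with h1 | h1
        · exact a4 e ⟨by linarith [he.1], he.2.le⟩ h1
        · exact hp.ne' h1)
    have hT := T_mono c X hbβ
    have : ((insert m Z).card : ℝ) * π < TT c X β - TT c X (-1) := by
      rw [Finset.card_insert_of_notMem (fun hh => lt_irrefl _ (hm m hh))]
      push_cast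
      linarith [hIH.1]
    exact ⟨this.le, fun _ => this⟩


lemma f_cont (x : ℝ) : Continuous (fun θ : ℝ => Real.sqrt (x + Real.cos θ ^ 2)) := by fun_prop

lemma f_mono : Monotone fFun := by
  intro x y hxy
  unfold fFun
  have := intervalIntegral.integral_mono_on (a := 0) (b := π / 2) (by positivity)
    ((f_cont x).intervalIntegrable (μ := MeasureTheory.volume) _ _)
    ((f_cont y).intervalIntegrable _ _)
    (fun θ _ => Real.sqrt_le_sqrt (by linarith : x + Real.cos θ ^ 2 ≤ y + Real.cos θ ^ 2))
  linarith

lemma T_one {c X : ℝ} (hc : 0 < c) : TT c X 1 = c * (fFun ((X - c ^ 2) / c ^ 2) + 1) := by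
  unfold TT fFun
  rw [Real.arcsin_one]
  have : ∀ I : ℝ, -1 + I + 1 = I := fun I => by ring
  rw [this, ← intervalIntegral.integral_const_mul]
  congr 1
  funext θ
  have e : X - c ^ 2 * Real.sin θ ^ 2 = c ^ 2 * ((X - c ^ 2) / c ^ 2 + Real.cos θ ^ 2) := by
    rw [Real.sin_sq]; field_simp; ring
  rw [e, Real.sqrt_mul (sq_nonneg c), Real.sqrt_sq hc.le]

lemma T_one_le {c δ : ℝ} (hc : 0 < c) (hδ : 0 < δ) :
    TT c (c ^ 2 + δ ^ 2) 1 ≤ c + π / 2 * δ := by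
  unfold TT
  rw [Real.arcsin_one]
  have h1 : Continuous (fun θ : ℝ => Real.sqrt (c ^ 2 + δ ^ 2 - c ^ 2 * Real.sin θ ^ 2)) := by
    fun_prop
  have h2 : Continuous (fun θ : ℝ => c * Real.cos θ + δ) := by fun_prop
  have := intervalIntegral.integral_mono_on (a := 0) (b := π / 2) (by positivity)
    (h1.intervalIntegrable (μ := MeasureTheory.volume) _ _) (h2.intervalIntegrable _ _)
    (fun θ hθ => by
      have hcos : 0 ≤ Real.cos θ := Real.cos_nonneg_of_mem_Icc ⟨by linarith [hθ.1, Real.pi_pos], hθ.2⟩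
      apply Real.sqrt_le_iff.2
      have : 0 ≤ c * Real.cos θ := by positivity
      refine ⟨by positivity, ?_⟩
      rw [Real.sin_sq]
      nlinarith [mul_nonneg this hδ.le])
  refine this.trans (le_of_eq ?_)
  rw [intervalIntegral.integral_add
    ((by fun_prop : Continuous (fun θ : ℝ => c * Real.cos θ)).intervalIntegrable _ _)
    (continuous_const.intervalIntegrable _ _)]
  simp

lemma sol_of {c χ : ℝ} {n : ℕ} {ψ : ℝ → ℝ} {lam : ℂ} (h : IsPSWF c n ψ χ lam) :
    Sol c χ ψ (fun x => (1 - x ^ 2) * deriv ψ x) where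
  cont := h.1
  dψ x hx := by
    have hp := p_pos hx
    exact (h.2.1 x hx).1.hasDerivAt.congr_deriv (by field_simp)
  dw x hx := by
    have := (hasDerivAt_p x).mul (h.2.1 x hx).2.hasDerivAt
    refine this.congr_deriv ?_
    have e := h.2.2.1 x hx
    unfold qq
    linarith

lemma G_integrable {x : ℝ} (hx : 0 ≤ x) :
    Continuous (fun θ : ℝ => Real.sin θ ^ 2 / Real.sqrt (1 + x * Real.cos θ ^ 2)) := by
  apply Continuous.div (by fun_prop) (by fun_prop)
  intro θ
  have : 0 < 1 + x * Real.cos θ ^ 2 := by positivity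
  exact (Real.sqrt_pos.2 this).ne'

lemma xG_aux {x y u : ℝ} (hx : 0 ≤ x) (hxy : x < y) (hu : 0 ≤ u) :
    x / Real.sqrt (1 + x * u) < y / Real.sqrt (1 + y * u) := by
  have hy : 0 < y := by linarith
  have p1 : 0 < 1 + x * u := by positivity
  have p2 : 0 < 1 + y * u := by positivity
  rw [div_lt_div_iff₀ (Real.sqrt_pos.2 p1) (Real.sqrt_pos.2 p2)]
  apply lt_of_pow_lt_pow_left₀ 2 (by positivity)
  rw [mul_pow, mul_pow, Real.sq_sqrt p1.le, Real.sq_sqrt p2.le]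
  have h1 : 0 ≤ x * y * u * (y - x) := by
    have : 0 ≤ y - x := by linarith
    positivity
  nlinarith

lemma xG_strict {x y : ℝ} (hx : 0 ≤ x) (hxy : x < y) : x * GFun x < y * GFun y := by
  have hy : 0 ≤ y := by linarith
  unfold GFun
  rw [← intervalIntegral.integral_const_mul, ← intervalIntegral.integral_const_mul]
  have e : ∀ (x θ : ℝ), x * (Real.sin θ ^ 2 / Real.sqrt (1 + x * Real.cos θ ^ 2)) =
      Real.sin θ ^ 2 * (x / Real.sqrt (1 + x * Real.cos θ ^ 2)) := fun x θ => by ring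
  apply intervalIntegral.integral_lt_integral_of_continuousOn_of_le_of_exists_lt
    (by positivity)
    ((G_integrable hx).const_mul x).continuousOn ((G_integrable hy).const_mul y).continuousOn
  · intro θ _
    rw [e, e]
    exact mul_le_mul_of_nonneg_left (xG_aux hx hxy (sq_nonneg _)).le (sq_nonneg _)
  · refine ⟨π / 2, ⟨by positivity, le_rfl⟩, ?_⟩
    rw [e, e]
    exact mul_lt_mul_of_pos_left (xG_aux hx hxy (sq_nonneg _)) (by simp)

lemma rhs_eq {c χ : ℝ} (hc : 0 < c) (hχ : c ^ 2 < χ) :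
    Real.sqrt χ * (EllipticF (Real.sqrt ((χ - c ^ 2) / χ)) -
      EllipticE (Real.sqrt ((χ - c ^ 2) / χ))) =
    c * ((χ - c ^ 2) / c ^ 2) * GFun ((χ - c ^ 2) / c ^ 2) := by
  have hχ0 : 0 < χ := by nlinarith [sq_nonneg c]
  have hk : Real.sqrt ((χ - c ^ 2) / χ) ^ 2 = (χ - c ^ 2) / χ :=
    Real.sq_sqrt (div_nonneg (by linarith) hχ0.le)
  have hpos : ∀ θ : ℝ, 0 < c ^ 2 + (χ - c ^ 2) * Real.cos θ ^ 2 := fun θ => by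
    have : 0 ≤ χ - c ^ 2 := by linarith
    positivity
  have hin : ∀ θ : ℝ, 1 - (χ - c ^ 2) / χ * Real.sin θ ^ 2 =
      (c ^ 2 + (χ - c ^ 2) * Real.cos θ ^ 2) / χ := fun θ => by
    rw [Real.sin_sq]; field_simp; ring
  have hne : ∀ θ : ℝ, Real.sqrt (1 - (χ - c ^ 2) / χ * Real.sin θ ^ 2) ≠ 0 := fun θ => by
    rw [hin]
    exact (Real.sqrt_pos.2 (div_pos (hpos θ) hχ0)).ne'
  unfold EllipticF EllipticE GFun
  simp only [hk]
  have c1 : Continuous (fun θ : ℝ => Real.sqrt (1 - (χ - c ^ 2) / χ * Real.sin θ ^ 2)) := by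
    fun_prop
  have c2 : Continuous (fun θ : ℝ => 1 / Real.sqrt (1 - (χ - c ^ 2) / χ * Real.sin θ ^ 2)) :=
    continuous_const.div c1 hne
  rw [← intervalIntegral.integral_sub (c2.intervalIntegrable _ _) (c1.intervalIntegrable _ _),
    ← intervalIntegral.integral_const_mul, ← intervalIntegral.integral_const_mul]
  congr 1
  funext θ
  have e1 : Real.sqrt (1 - (χ - c ^ 2) / χ * Real.sin θ ^ 2) =
      Real.sqrt (c ^ 2 + (χ - c ^ 2) * Real.cos θ ^ 2) / Real.sqrt χ := by
    rw [hin, Real.sqrt_div (hpos θ).le]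
  have e2 : Real.sqrt (1 + (χ - c ^ 2) / c ^ 2 * Real.cos θ ^ 2) =
      Real.sqrt (c ^ 2 + (χ - c ^ 2) * Real.cos θ ^ 2) / c := by
    have : 1 + (χ - c ^ 2) / c ^ 2 * Real.cos θ ^ 2 =
      (c ^ 2 + (χ - c ^ 2) * Real.cos θ ^ 2) / c ^ 2 := by field_simp
    rw [this, Real.sqrt_div (hpos θ).le, Real.sqrt_sq hc.le]
  rw [e1, e2]
  have hs := Real.sqrt_pos.2 (hpos θ)
  have hs2 := Real.sq_sqrt (hpos θ).le
  have hx := Real.sqrt_pos.2 hχ0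
  have hx2 := Real.sq_sqrt hχ0.le
  field_simp
  rw [hs2, hx2, Real.sin_sq]
  ring

end PSWFaux

theorem stmt9 (c : ℝ) (hc : 0 < c) (n : ℕ) (hn : 0 < n)
    (hnlow : (n : ℝ) > 2 * c / π)
    (ψ : ℝ → ℝ) (χ : ℝ) (lam : ℂ)
    (hpswf : IsPSWF c n ψ χ lam) :
    (∀ h₁ : ℝ, 0 ≤ h₁ → fFun h₁ = (n : ℝ) * π / (2 * c) - 1 →
        h₁ < (χ - c ^ 2) / c ^ 2) ∧
    (∀ h₂ : ℝ, 0 ≤ h₂ → fFun h₂ = (n : ℝ) * π / (2 * c) - 1 + 3 * π / (2 * c) →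
        (χ - c ^ 2) / c ^ 2 < h₂) ∧
    (∀ h₁ : ℝ, 0 ≤ h₁ → fFun h₁ = (n : ℝ) * π / (2 * c) - 1 →
        c * h₁ * GFun h₁ <
          Real.sqrt χ *
            (EllipticF (Real.sqrt ((χ - c ^ 2) / χ)) -
              EllipticE (Real.sqrt ((χ - c ^ 2) / χ)))) := by
  have hS := PSWFaux.sol_of hpswf
  obtain ⟨-, -, -, hfin, hcard, -, -⟩ := hpswf
  have hcard' : hfin.toFinset.card = n := by
    rw [← hcard, Set.ncard_eq_toFinset_card _ hfin]
  have hπ := Real.pi_pos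
  have hlow : ∀ X, c ^ 2 < X → χ ≤ X → (n : ℝ) * π < 2 * PSWFaux.TT c X 1 := by
    intro X hX hχX
    have := (PSWFaux.lower_aux hS hχX hX hfin hfin.toFinset 1 (by norm_num) (Or.inr (Or.inl rfl))
      (fun z hz => by simpa using hz)
      (fun z hz => by
        have : z ∈ Set.Ioo (-1 : ℝ) 1 ∧ ψ z = 0 := by simpa using hz
        exact this.1.2)).2 (Finset.card_pos.1 (by omega))
    rw [hcard', PSWFaux.T_odd] at this
    linarith
  have hnc : 2 * c < n * π := by
    rw [gt_iff_lt, div_lt_iff₀ hπ] at hnlow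
    exact hnlow
  have hχ : c ^ 2 < χ := by
    by_contra hcon
    push Not at hcon
    have hδ : 0 < (n * π - 2 * c) / (2 * π) := div_pos (by linarith) (by positivity)
    have h1 := hlow (c ^ 2 + ((n * π - 2 * c) / (2 * π)) ^ 2)
      (by have := pow_pos hδ 2; linarith) (by have := pow_pos hδ 2; linarith)
    have h2 := PSWFaux.T_one_le hc hδ
    have h3 : π / 2 * ((n * π - 2 * c) / (2 * π)) = (n * π - 2 * c) / 4 := by field_simp; ring
    linarith
  have hi : ∀ h₁ : ℝ, 0 ≤ h₁ → fFun h₁ = (n : ℝ) * π / (2 * c) - 1 →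
      h₁ < (χ - c ^ 2) / c ^ 2 := by
    intro h₁ _ hf
    by_contra hcon
    push Not at hcon
    have h1 := PSWFaux.f_mono hcon
    have h2 := hlow χ hχ le_rfl
    rw [PSWFaux.T_one hc] at h2
    rw [hf] at h1
    have h3 : c * (fFun ((χ - c ^ 2) / c ^ 2) + 1) ≤ c * ((n : ℝ) * π / (2 * c)) :=
      mul_le_mul_of_nonneg_left (by linarith) hc.le
    have h4 : c * ((n : ℝ) * π / (2 * c)) = n * π / 2 := by field_simp
    linarith
  refine ⟨hi, ?_, ?_⟩
  · intro h₂ _ hf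
    by_contra hcon
    push Not at hcon
    have h1 := PSWFaux.f_mono hcon
    have h2 := PSWFaux.upper_aux (T := PSWFaux.TT c χ) (a := -1) hfin.toFinset 1 (by norm_num)
      (fun z hz => by
        have : z ∈ Set.Ioo (-1 : ℝ) 1 ∧ ψ z = 0 := by simpa using hz
        exact this.1)
      (fun x y hx hxy hy hno => PSWFaux.gap_le hS hχ hx hxy hy (fun t ht h0 => hno t ht (by
        have : t ∈ Set.Ioo (-1 : ℝ) 1 := ⟨by linarith [ht.1], by linarith [ht.2]⟩
        simpa [h0] using this)))
    rw [hcard', PSWFaux.T_odd, PSWFaux.T_one hc] at h2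
    rw [hf] at h1
    have h3 : c * ((n : ℝ) * π / (2 * c) + 3 * π / (2 * c)) ≤
        c * (fFun ((χ - c ^ 2) / c ^ 2) + 1) :=
      mul_le_mul_of_nonneg_left (by linarith) hc.le
    have h4 : c * ((n : ℝ) * π / (2 * c) + 3 * π / (2 * c)) = (n * π + 3 * π) / 2 := by field_simp
    linarith
  · intro h₁ hh hf
    rw [PSWFaux.rhs_eq hc hχ, mul_assoc, mul_assoc]
    exact mul_lt_mul_of_pos_left (PSWFaux.xG_strict hh (hi h₁ hh hf)) hc
end
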